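/- Let n and r be coprime positive integers with n > r, n ≥ 10 and n even, and let ε > 0. Then there exists a constant C, depending only on n and ε, such that for every real H ≥ 1 the number of pairs (a_r, a_n) ∈ ℤ² with |a_r| ≤ H, |a_n| ≤ H and such that the Galois group of the splitting field of X^n + a_rX^{n-r} + a_n over ℚ is not isomorphic to S_n is at most C·H^{1+1/n+ε}. -/

import Mathlib

/-!
Write `k = n - r`, so that the trinomial is `X ^ (k + r) + a X ^ k + b` with `k` and `r` odd. If its
Galois group is not the full symmetric group, then, `a b = 0` aside, one of three things happens.

* The group is intransitive. Then a proper subproduct of the roots is an integer dividing `b`. For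
  fixed `b` there are `O(H ^ ε)` divisors, and for each of them `a` is a zero of a nonzero
  polynomial of bounded degree.
* The group is transitive but not doubly transitive. For an invariant relation `O` on the roots,
  `∏ (xᵢ + xⱼ) ^ (n - 1)` and `∏ (xᵢ ^ k - xⱼ ^ k) / (xᵢ - xⱼ)`, over the pairs in `O`, are integers
  with the same valuations away from `2 k r a`. So for fixed `a` their quotient takes `O(H ^ ε)`
  values, and each of them makes `b` a zero of a nonzero polynomial of bounded degree.
* The group contains no transposition. Then no inertia group is generated by a transposition, so the
  discriminant factor `n ^ n b ^ r - r ^ r k ^ k a ^ n` has even valuation away from `n k r b`, and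
  hence equals `u y ^ 2` with `u ∣ n k r b`. As `n` is even, for fixed `b` and `u` the pair
  `(u y, a ^ (n / 2))` lies on the conic `X ^ 2 + u r ^ r k ^ k Y ^ 2 = u n ^ n b ^ r`, which has
  `O(H ^ ε)` integral points in the relevant range.

Each case therefore contains `O(H ^ (1 + ε))` pairs.
-/

open Polynomial

namespace TrinomialGalois

/-! ### Integers with prescribed prime factors -/

/-- The `s`-factored numbers (in the sense of `Nat.factoredNumbers`) up to `Z`, as a finset. -/
def factoredNumbersUpTo (s : Finset ℕ) (Z : ℕ) : Finset ℕ :=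
  {m ∈ Finset.Icc 1 Z | m.primeFactors ⊆ s}

lemma mem_factoredNumbersUpTo {s : Finset ℕ} {Z m : ℕ} :
    m ∈ factoredNumbersUpTo s Z ↔ (1 ≤ m ∧ m ≤ Z) ∧ m.primeFactors ⊆ s := by
  simp [factoredNumbersUpTo]

lemma hasSum_factoredNumbers_rpow_neg {ε : ℝ} (hε : 0 < ε) (s : Finset ℕ) :
    HasSum (fun m : Nat.factoredNumbers s ↦ ((m : ℕ) : ℝ) ^ (-ε))
      (∏ p ∈ s with p.Prime, (1 - (p : ℝ) ^ (-ε))⁻¹) := by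
  let f : ℕ →* ℝ :=
    { toFun m := (m : ℝ) ^ (-ε)
      map_one' := by simp
      map_mul' m m' := by push_cast; exact Real.mul_rpow m.cast_nonneg m'.cast_nonneg }
  refine (EulerProduct.summable_and_hasSum_factoredNumbers_prod_filter_prime_geometric (f := f)
    (fun {p} hp ↦ ?_) s).2
  refine (Real.norm_of_nonneg (Real.rpow_nonneg p.cast_nonneg _)).trans_lt ?_
  exact Real.rpow_lt_one_of_one_lt_of_neg (mod_cast hp.one_lt) (neg_lt_zero.2 hε)

-- Rankin's trick: each `m ≤ Z` is counted with weight `(Z / m) ^ ε ≥ 1`.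
lemma card_factoredNumbersUpTo_le {ε : ℝ} (hε : 0 < ε) (s : Finset ℕ) (Z : ℕ) :
    ((factoredNumbersUpTo s Z).card : ℝ) ≤
      (∏ p ∈ s with p.Prime, (1 - (p : ℝ) ^ (-ε))⁻¹) * (Z : ℝ) ^ ε := by
  have hsum := hasSum_factoredNumbers_rpow_neg hε s
  rcases Nat.eq_zero_or_pos Z with rfl | hZ
  · simp [factoredNumbersUpTo, Real.zero_rpow hε.ne']
  have hmem (m : ℕ) (hm : m ∈ factoredNumbersUpTo s Z) : m ∈ Nat.factoredNumbers s := by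
    rw [mem_factoredNumbersUpTo] at hm
    exact Nat.mem_factoredNumbers_of_primeFactors_subset (Nat.one_le_iff_ne_zero.1 hm.1.1) hm.2
  have hle : ∑ m ∈ factoredNumbersUpTo s Z, (m : ℝ) ^ (-ε) ≤
      ∏ p ∈ s with p.Prime, (1 - (p : ℝ) ^ (-ε))⁻¹ := by
    rw [← Finset.sum_subtype_of_mem (p := (· ∈ Nat.factoredNumbers s))
      (fun m : ℕ ↦ (m : ℝ) ^ (-ε)) hmem]
    exact sum_le_hasSum _ (fun m _ ↦ Real.rpow_nonneg (Nat.cast_nonneg _) _) hsum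
  have hge : ((factoredNumbersUpTo s Z).card : ℝ) * (Z : ℝ) ^ (-ε) ≤
      ∑ m ∈ factoredNumbersUpTo s Z, (m : ℝ) ^ (-ε) := by
    rw [← nsmul_eq_mul]
    refine Finset.card_nsmul_le_sum _ _ _ fun m hm ↦ ?_
    rw [mem_factoredNumbersUpTo] at hm
    exact Real.rpow_le_rpow_of_nonpos (mod_cast hm.1.1) (mod_cast hm.1.2) (neg_nonpos.2 hε.le)
  have hZ' : (0 : ℝ) < Z := mod_cast hZ
  have := hge.trans hle
  rwa [Real.rpow_neg hZ'.le, ← div_eq_mul_inv, div_le_iff₀ (by positivity)] at this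

lemma inv_one_sub_rpow_neg_le_rpow {ε x : ℝ} (hx : 0 < x) (h : 2 ≤ x ^ ε) :
    (1 - x ^ (-ε))⁻¹ ≤ x ^ ε := by
  have hne : x ^ ε - 1 ≠ 0 := by linarith
  calc (1 - x ^ (-ε))⁻¹ = x ^ ε / (x ^ ε - 1) := by rw [Real.rpow_neg hx.le]; field_simp
    _ ≤ x ^ ε := div_le_self (by linarith) (by linarith)

lemma exists_prod_primeFactors_inv_one_sub_rpow_neg_le {ε : ℝ} (hε : 0 < ε) :
    ∃ C : ℝ, 0 < C ∧ ∀ N : ℕ, N ≠ 0 →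
      ∏ p ∈ N.primeFactors, (1 - (p : ℝ) ^ (-ε))⁻¹ ≤ C * (N : ℝ) ^ ε := by
  set K : ℝ := (1 - (2 : ℝ) ^ (-ε))⁻¹
  have h2 : (2 : ℝ) ^ (-ε) < 1 := Real.rpow_lt_one_of_one_lt_of_neg one_lt_two (by linarith)
  have hK : 1 ≤ K :=
    (one_le_inv₀ (by linarith)).2 (by linarith [Real.rpow_pos_of_pos two_pos (-ε)])
  set B : ℕ := ⌈(2 : ℝ) ^ (1 / ε)⌉₊
  have hfactor (p : ℕ) (hp : p.Prime) : 0 ≤ (1 - (p : ℝ) ^ (-ε))⁻¹ ∧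
      (1 - (p : ℝ) ^ (-ε))⁻¹ ≤ (if p < B then K else 1) * (p : ℝ) ^ ε := by
    have hp2 : (2 : ℝ) ≤ p := mod_cast hp.two_le
    have hple : (p : ℝ) ^ (-ε) ≤ (2 : ℝ) ^ (-ε) :=
      Real.rpow_le_rpow_of_nonpos two_pos hp2 (by linarith)
    refine ⟨inv_nonneg.2 (by linarith), ?_⟩
    split_ifs with h
    · calc (1 - (p : ℝ) ^ (-ε))⁻¹ ≤ K := inv_anti₀ (by linarith) (by linarith)
        _ ≤ K * (p : ℝ) ^ ε :=
          le_mul_of_one_le_right (by linarith) (Real.one_le_rpow (by linarith) hε.le)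
    · have hpB : (2 : ℝ) ^ (1 / ε) ≤ p := (Nat.le_ceil _).trans (mod_cast not_lt.1 h)
      rw [one_mul]
      refine inv_one_sub_rpow_neg_le_rpow (by linarith) ?_
      simpa [← Real.rpow_mul, hε.ne'] using Real.rpow_le_rpow (by positivity) hpB hε.le
  refine ⟨K ^ B, by positivity, fun N hN ↦ ?_⟩
  have hpf {p : ℕ} (hp : p ∈ N.primeFactors) : p.Prime := Nat.prime_of_mem_primeFactors hp
  calc ∏ p ∈ N.primeFactors, (1 - (p : ℝ) ^ (-ε))⁻¹
      ≤ ∏ p ∈ N.primeFactors, (if p < B then K else 1) * (p : ℝ) ^ ε :=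
        Finset.prod_le_prod (fun p hp ↦ (hfactor p (hpf hp)).1) fun p hp ↦ (hfactor p (hpf hp)).2
    _ = K ^ (N.primeFactors.filter (· < B)).card * (∏ p ∈ N.primeFactors, (p : ℝ)) ^ ε := by
        rw [Finset.prod_mul_distrib, Finset.prod_ite, Finset.prod_const_one, mul_one,
          Finset.prod_const, Real.finsetProd_rpow _ _ (fun _ _ ↦ Nat.cast_nonneg _)]
    _ ≤ K ^ B * (N : ℝ) ^ ε := by
        gcongr
        · calc (N.primeFactors.filter (· < B)).card ≤ (Finset.range B).card :=
                Finset.card_le_card fun p hp ↦ Finset.mem_range.2 (Finset.mem_filter.1 hp).2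
            _ = B := Finset.card_range B
        · rw [← Nat.cast_prod, Nat.cast_le]
          exact Nat.le_of_dvd (Nat.pos_of_ne_zero hN) (Nat.prod_primeFactors_dvd N)

lemma exists_card_factoredNumbersUpTo_primeFactors_le {ε : ℝ} (hε : 0 < ε) :
    ∃ C : ℝ, 0 < C ∧ ∀ N Z : ℕ, N ≠ 0 →
      ((factoredNumbersUpTo N.primeFactors Z).card : ℝ) ≤ C * (N : ℝ) ^ ε * (Z : ℝ) ^ ε := by
  obtain ⟨C, hC, h⟩ := exists_prod_primeFactors_inv_one_sub_rpow_neg_le hε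
  refine ⟨C, hC, fun N Z hN ↦ (card_factoredNumbersUpTo_le hε _ Z).trans ?_⟩
  rw [Finset.filter_true_of_mem fun p ↦ Nat.prime_of_mem_primeFactors]
  gcongr
  exact h N hN

lemma exists_card_divisors_le {ε : ℝ} (hε : 0 < ε) :
    ∃ C : ℝ, 0 < C ∧ ∀ N : ℕ, N ≠ 0 → (N.divisors.card : ℝ) ≤ C * (N : ℝ) ^ ε := by
  obtain ⟨C, hC, h⟩ := exists_card_factoredNumbersUpTo_primeFactors_le (half_pos hε)
  refine ⟨C, hC, fun N hN ↦ ?_⟩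
  have hsub : N.divisors ⊆ factoredNumbersUpTo N.primeFactors N := fun d hd ↦ by
    have hdN := Nat.dvd_of_mem_divisors hd
    exact mem_factoredNumbersUpTo.2 ⟨⟨Nat.pos_of_mem_divisors hd,
      Nat.le_of_dvd (Nat.pos_of_ne_zero hN) hdN⟩, Nat.primeFactors_mono hdN hN⟩
  calc (N.divisors.card : ℝ) ≤ (factoredNumbersUpTo N.primeFactors N).card :=
        mod_cast Finset.card_le_card hsub
    _ ≤ C * (N : ℝ) ^ (ε / 2) * (N : ℝ) ^ (ε / 2) := h N N hN
    _ = C * (N : ℝ) ^ ε := by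
      rw [mul_assoc, ← Real.rpow_add (mod_cast Nat.pos_of_ne_zero hN), add_halves]

/-! ### Integers under valuations -/

section Valuation

variable {K Γ₀ : Type*} [LinearOrderedCommGroupWithZero Γ₀]

lemma valuation_intCast_le_one [Ring K] (v : Valuation K Γ₀) (z : ℤ) : v (z : K) ≤ 1 :=
  (v.mem_integer_iff _).1 (intCast_mem v.integer z)

variable [Field K]

lemma valuation_intCast_eq_one_of_not_dvd {v : Valuation K Γ₀} {p : ℕ} (hp : p.Prime)
    (hv : v (p : K) < 1) {z : ℤ} (hz : ¬ (p : ℤ) ∣ z) : v (z : K) = 1 := by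
  refine (valuation_intCast_le_one v z).antisymm (not_lt.1 fun hlt ↦ ?_)
  obtain ⟨u, w, huw⟩ := (Nat.prime_iff_prime_int.1 hp).coprime_iff_not_dvd.2 hz
  have huw : ((u : K) * p + w * z) = 1 := mod_cast congrArg (Int.cast : ℤ → K) huw
  have mul_lt (t : ℤ) {y : K} (hy : v y < 1) : v (t * y) < 1 := by
    rw [map_mul]
    exact mul_lt_one_of_nonneg_of_lt_one_right (valuation_intCast_le_one v t) zero_le hy
  simpa [huw] using v.map_add_lt (mul_lt u hv) (mul_lt w hlt)

lemma valuation_natCast_eq_one_of_not_dvd {v : Valuation K Γ₀} {p : ℕ} (hp : p.Prime)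
    (hv : v (p : K) < 1) {m : ℕ} (hm : ¬ p ∣ m) : v (m : K) = 1 := by
  simpa using valuation_intCast_eq_one_of_not_dvd hp hv (z := m) (by rwa [Int.natCast_dvd_natCast])

lemma valuation_intCast_eq_pow_factorization {v : Valuation K Γ₀} {p : ℕ} (hp : p.Prime)
    (hv : v (p : K) < 1) {z : ℤ} (hz : z ≠ 0) :
    v (z : K) = v (p : K) ^ z.natAbs.factorization p := by
  obtain ⟨w, hw⟩ : ((p ^ z.natAbs.factorization p : ℕ) : ℤ) ∣ z :=
    Int.natCast_dvd.2 (Nat.ordProj_dvd _ _)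
  have hpw : ¬ (p : ℤ) ∣ w := by
    rintro ⟨t, rfl⟩
    refine Nat.pow_succ_factorization_not_dvd (Int.natAbs_ne_zero.2 hz) hp
      (Int.natCast_dvd.1 ⟨t, ?_⟩)
    rw [pow_succ, Nat.cast_mul, mul_assoc, ← hw]
  conv_lhs => rw [hw]
  push_cast
  rw [map_mul, map_pow, valuation_intCast_eq_one_of_not_dvd hp hv hpw, mul_one]

variable [CharZero K]

lemma exists_valuationSubring_natCast_lt_one (K : Type*) [Field K] [CharZero K] {p : ℕ}
    (hp : p.Prime) : ∃ A : ValuationSubring K, A.valuation (p : K) < 1 := by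
  let q : (Int.castRingHom K).range := ⟨p, p, by simp⟩
  have hq : Ideal.span {q} ≠ ⊤ := by
    rw [Ne, Ideal.span_singleton_eq_top, isUnit_iff_exists_inv]
    rintro ⟨⟨_, z, rfl⟩, hz⟩
    have hz : (p : ℤ) * z = 1 := by
      have : ((p * z : ℤ) : K) = (1 : ℤ) := by simpa [q] using congrArg Subtype.val hz
      exact mod_cast this
    exact (Nat.prime_iff_prime_int.1 hp).not_isUnit (.of_mul_eq_one _ hz)
  obtain ⟨A, -, hA⟩ := Ideal.image_subset_nonunits_valuationSubring _ hq
  exact ⟨A, A.mem_nonunits_iff.1 (hA ⟨q, Ideal.mem_span_singleton_self q, rfl⟩)⟩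

lemma valuation_natCast_pos (v : Valuation K Γ₀) {m : ℕ} (hm : m ≠ 0) : 0 < v (m : K) :=
  zero_lt_iff.2 (v.ne_zero_iff.2 (mod_cast hm))

lemma factorization_le_of_valuation_le {v : Valuation K Γ₀} {p : ℕ} (hp : p.Prime)
    (hv : v (p : K) < 1) {z w : ℤ} (hz : z ≠ 0) (hw : w ≠ 0) (h : v (z : K) ≤ v (w : K)) :
    w.natAbs.factorization p ≤ z.natAbs.factorization p := by
  rwa [valuation_intCast_eq_pow_factorization hp hv hz,
    valuation_intCast_eq_pow_factorization hp hv hw,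
    pow_le_pow_iff_right_of_lt_one₀ (valuation_natCast_pos v hp.ne_zero) hv] at h

lemma dvd_of_forall_valuationSubring_le {M z : ℤ} (hM : M ≠ 0)
    (h : ∀ p ∈ M.natAbs.primeFactors,
      ∃ A : ValuationSubring K, A.valuation (p : K) < 1 ∧
        A.valuation (z : K) ≤ A.valuation (M : K)) :
    M ∣ z := by
  rcases eq_or_ne z 0 with rfl | hz
  · exact dvd_zero _
  rw [← Int.natAbs_dvd_natAbs,
    ← Nat.factorization_le_iff_dvd (Int.natAbs_ne_zero.2 hM) (Int.natAbs_ne_zero.2 hz)]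
  intro p
  by_cases hp : p ∈ M.natAbs.primeFactors
  · obtain ⟨A, hA, hle⟩ := h p hp
    exact factorization_le_of_valuation_le (Nat.prime_of_mem_primeFactors hp) hA hz hM hle
  · rw [← Nat.support_factorization, Finsupp.notMem_support_iff] at hp
    exact hp.trans_le (Nat.zero_le _)

end Valuation

/-! ### Elements of given norm in `ℤ√N` -/

section Zsqrtd

open Zsqrtd

variable {N M : ℤ}

lemma map_sqrtd_sq {R : Type*} [CommRing R] (φ : ℤ√N →+* R) :
    φ sqrtd ^ 2 = N := by
  rw [sq, ← map_mul, dmuld, map_intCast]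

lemma map_mul_map_star {R : Type*} [CommRing R] (φ : ℤ√N →+* R) (α : ℤ√N) :
    φ α * φ (star α) = α.norm := by
  rw [← map_mul, ← norm_eq_mul_conj, map_intCast]

lemma map_mul_map_star_add {R : Type*} [CommRing R] (φ : ℤ√N →+* R) (α β : ℤ√N) :
    φ α * φ (star β) + φ (star α) * φ β = (2 * (α * star β).re : ℤ) := by
  rw [← map_mul, ← map_mul, ← map_add, ← map_intCast φ]
  congr 1
  ext <;> simp <;> ring

section Valuation

variable {K Γ₀ : Type*} [Field K] [LinearOrderedCommGroupWithZero Γ₀]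

lemma valuation_map_le_one (v : Valuation K Γ₀) (φ : ℤ√N →+* K) (α : ℤ√N) : v (φ α) ≤ 1 := by
  have hs : v (φ sqrtd) ≤ 1 := by
    rw [← pow_le_one_iff_of_nonneg zero_le two_ne_zero, ← map_pow, map_sqrtd_sq]
    exact valuation_intCast_le_one v N
  rw [show α = (α.re : ℤ√N) + sqrtd * (α.im : ℤ√N) from decompose, map_add, map_mul, map_intCast,
    map_intCast]
  refine v.map_add_le (valuation_intCast_le_one v _) ?_
  rw [map_mul]
  exact mul_le_one₀ hs zero_le (valuation_intCast_le_one v _)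

variable [CharZero K] {v : Valuation K Γ₀} {p : ℕ}

-- If `φ α` and its conjugate have different valuations, then the larger one is that of the integer
-- `α + star α`, hence a power of `v p`.
lemma valuation_map_sq_eq_or_exists_eq_pow (hp : p.Prime) (hv : v (p : K) < 1) (hM : M ≠ 0)
    (φ : ℤ√N →+* K) {α : ℤ√N} (hα : α.norm = M) :
    v (φ α) ^ 2 = v (M : K) ∨
      ∃ i < M.natAbs.factorization p + 1, v (φ α) = v (p : K) ^ i := by
  have hprod : v (φ α) * v (φ (star α)) = v (M : K) := by
    rw [← map_mul, map_mul_map_star, hα]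
  rcases eq_or_ne (v (φ α)) (v (φ (star α))) with heq | hne
  · exact .inl (by rw [sq, ← hprod, ← heq])
  right
  have hp0 : 0 < v (p : K) := valuation_natCast_pos v hp.ne_zero
  have hMpow := valuation_intCast_eq_pow_factorization hp hv hM
  have hle : v (M : K) ≤ v (φ α) := hprod ▸ mul_le_of_le_one_right' (valuation_map_le_one v φ _)
  have htrace : v ((2 * α.re : ℤ) : K) = max (v (φ α)) (v (φ (star α))) := by
    rw [← v.map_add_of_distinct_val hne]
    simpa using congrArg v (map_mul_map_star_add φ α 1).symm
  obtain ⟨j, hj, hmax⟩ : ∃ j < M.natAbs.factorization p + 1,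
      max (v (φ α)) (v (φ (star α))) = v (p : K) ^ j := by
    have h0 : (2 * α.re : ℤ) ≠ 0 := fun h0 ↦ by
      rw [h0, Int.cast_zero, map_zero] at htrace
      exact absurd (htrace ▸ hle.trans (le_max_left _ _))
        (not_le.2 (hMpow ▸ pow_pos hp0 _))
    refine ⟨_, Nat.lt_succ_of_le ?_, htrace.symm.trans
      (valuation_intCast_eq_pow_factorization hp hv h0)⟩
    exact factorization_le_of_valuation_le hp hv hM h0 (htrace ▸ hle.trans (le_max_left _ _))
  rcases le_total (v (φ α)) (v (φ (star α))) with h | h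
  · rw [max_eq_right h] at hmax
    refine ⟨M.natAbs.factorization p - j, by omega, mul_right_cancel₀ (pow_pos hp0 j).ne' ?_⟩
    rw [← pow_add, Nat.sub_add_cancel (by omega), ← hmax, hprod, hMpow]
  · exact ⟨j, hj, by rwa [max_eq_left h] at hmax⟩

lemma exists_finset_valuation_map_mem (hp : p.Prime) (hv : v (p : K) < 1) (hM : M ≠ 0)
    (φ : ℤ√N →+* K) : ∃ T : Finset Γ₀, T.card ≤ M.natAbs.factorization p + 2 ∧
      ∀ α : ℤ√N, α.norm = M → v (φ α) ∈ T := by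
  classical
  obtain ⟨g, hg⟩ : ∃ g : Γ₀, ∀ g', g' ^ 2 = v (M : K) → g' = g := by
    by_cases h : ∃ g, g ^ 2 = v (M : K)
    · obtain ⟨g, hg⟩ := h
      exact ⟨g, fun g' hg' ↦ (pow_left_inj₀ zero_le zero_le two_ne_zero).1 (hg'.trans hg.symm)⟩
    · exact ⟨0, fun g' hg' ↦ absurd ⟨g', hg'⟩ h⟩
  refine ⟨insert g ((Finset.range (M.natAbs.factorization p + 1)).image (v (p : K) ^ ·)), ?_, ?_⟩
  · refine (Finset.card_insert_le _ _).trans (Nat.succ_le_succ ?_)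
    exact Finset.card_image_le.trans_eq (Finset.card_range _)
  · intro α hα
    rw [Finset.mem_insert, Finset.mem_image]
    refine (valuation_map_sq_eq_or_exists_eq_pow hp hv hM φ hα).imp (hg _) ?_
    rintro ⟨i, hi, h⟩
    exact ⟨i, Finset.mem_range.2 hi, h.symm⟩

lemma dvd_two_mul_re_mul_star (hM : M ≠ 0) (φ : ℤ√N →+* K) {α β : ℤ√N} (hα : α.norm = M)
    (hβ : β.norm = M)
    (h : ∀ p ∈ M.natAbs.primeFactors, ∃ A : ValuationSubring K, A.valuation (p : K) < 1 ∧
      A.valuation (φ α) = A.valuation (φ β)) :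
    M ∣ 2 * (α * star β).re := by
  refine dvd_of_forall_valuationSubring_le (K := K) hM fun p hp ↦ ?_
  obtain ⟨A, hA, hαβ⟩ := h p hp
  refine ⟨A, hA, ?_⟩
  have hprod {γ : ℤ√N} (hγ : γ.norm = M) :
      A.valuation (φ γ) * A.valuation (φ (star γ)) = A.valuation (M : K) := by
    rw [← map_mul, map_mul_map_star, hγ]
  rw [← map_mul_map_star_add φ]
  refine Valuation.map_add_le _ ?_ ?_
  · rw [map_mul, hαβ, hprod hβ]
  · rw [map_mul, ← hαβ, mul_comm, hprod hα]

end Valuation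

lemma card_pi_le_card_divisors_sq {m : ℕ} (hm : m ≠ 0) {ι : ℕ → Type*} (T : ∀ p, Finset (ι p))
    (hT : ∀ p ∈ m.primeFactors, (T p).card ≤ m.factorization p + 2) :
    (m.primeFactors.pi T).card ≤ m.divisors.card ^ 2 := by
  rw [Finset.card_pi, Nat.card_divisors hm, ← Finset.prod_pow]
  refine Finset.prod_le_prod' fun p hp ↦ (hT p hp).trans ?_
  have := (Nat.prime_of_mem_primeFactors hp).factorization_pos_of_dvd hm
    (Nat.dvd_of_mem_primeFactors hp)
  nlinarith

-- Elements of norm `M` with the same valuation above each prime factor of `M` have a quotient of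
-- integral trace.
lemma card_le_of_forall_subset_dvd (hM : M ≠ 0) {S : Finset (ℤ√N)} (hS : ∀ α ∈ S, α.norm = M)
    {B : ℕ} (hB : ∀ T ⊆ S, (∀ α ∈ T, ∀ β ∈ T, M ∣ 2 * (α * star β).re) → T.card ≤ B) :
    S.card ≤ B * M.natAbs.divisors.card ^ 2 := by
  classical
  obtain ⟨s, hs⟩ : ∃ s : ℂ, s * s = (N : ℂ) := by
    simpa [sq] using IsAlgClosed.exists_pow_nat_eq (N : ℂ) two_pos
  let φ : ℤ√N →+* ℂ := lift ⟨s, hs⟩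
  have hex (p : ℕ) : ∃ A : ValuationSubring ℂ, p.Prime → A.valuation (p : ℂ) < 1 := by
    by_cases hp : p.Prime
    · exact (exists_valuationSubring_natCast_lt_one ℂ hp).imp fun _ h _ ↦ h
    · exact ⟨⊤, (absurd · hp)⟩
  choose A hA using hex
  have hfin (p : ℕ) : ∃ T : Finset (A p).ValueGroup, p.Prime →
      T.card ≤ M.natAbs.factorization p + 2 ∧
        ∀ α : ℤ√N, α.norm = M → (A p).valuation (φ α) ∈ T := by
    by_cases hp : p.Prime
    · exact (exists_finset_valuation_map_mem hp (hA p hp) hM φ).imp fun _ h _ ↦ h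
    · exact ⟨∅, (absurd · hp)⟩
  choose T hT using hfin
  let c (α : ℤ√N) (p : ℕ) (_ : p ∈ M.natAbs.primeFactors) : (A p).ValueGroup :=
    (A p).valuation (φ α)
  have hc : ∀ α ∈ S, c α ∈ M.natAbs.primeFactors.pi T := fun α hα ↦ Finset.mem_pi.2 fun p hp ↦
    (hT p (Nat.prime_of_mem_primeFactors hp)).2 α (hS α hα)
  calc S.card ≤ B * (M.natAbs.primeFactors.pi T).card := by
        refine Finset.card_le_mul_card_image_of_maps_to hc B fun γ _ ↦
          hB _ (Finset.filter_subset _ _) fun α hα β hβ ↦ ?_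
        rw [Finset.mem_filter] at hα hβ
        refine dvd_two_mul_re_mul_star hM φ (hS α hα.1) (hS β hβ.1) fun p hp ↦
          ⟨A p, hA p (Nat.prime_of_mem_primeFactors hp), ?_⟩
        exact congrFun₂ (hα.2.trans hβ.2.symm) p hp
    _ ≤ B * M.natAbs.divisors.card ^ 2 := by
        gcongr
        exact card_pi_le_card_divisors_sq (Int.natAbs_ne_zero.2 hM) T fun p hp ↦
          (hT p (Nat.prime_of_mem_primeFactors hp)).1

lemma mul_star_right_injective_of_norm_ne_zero {β : ℤ√N} (hβ : β.norm ≠ 0) :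
    Function.Injective (· * star β) := by
  intro α α' h
  have h : α * (β.norm : ℤ√N) = α' * (β.norm : ℤ√N) := by
    rw [norm_eq_mul_conj, mul_comm β, ← mul_assoc, ← mul_assoc]
    exact congrArg (· * β) h
  ext
  · simpa [hβ] using congrArg Zsqrtd.re h
  · simpa [hβ] using congrArg Zsqrtd.im h

lemma card_le_of_norm_eq_of_neg (hN : N < 0) (hM : M ≠ 0) {T : Finset (ℤ√N)}
    (hT : ∀ α ∈ T, α.norm = M) (hdvd : ∀ α ∈ T, ∀ β ∈ T, M ∣ 2 * (α * star β).re) :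
    T.card ≤ 10 := by
  classical
  rcases T.eq_empty_or_nonempty with rfl | ⟨β, hβ⟩
  · simp
  have hnorm : ∀ α ∈ T, (α * star β).re ^ 2 - N * (α * star β).im ^ 2 = M ^ 2 := fun α hα ↦ by
    rw [sq, sq, ← mul_assoc, ← norm_def, norm_mul, norm_conj, hT α hα, hT β hβ, sq]
  let c (α : ℤ√N) : ℤ × Bool := (2 * (α * star β).re / M, 0 ≤ (α * star β).im)
  have hmaps : ∀ α ∈ T, c α ∈ Finset.Icc (-2 : ℤ) 2 ×ˢ (Finset.univ : Finset Bool) := by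
    intro α hα
    obtain ⟨t, ht⟩ := hdvd α hα β hβ
    have ht2 : t ^ 2 ≤ 2 ^ 2 := by
      have : M ^ 2 * t ^ 2 ≤ M ^ 2 * 2 ^ 2 := by
        rw [← mul_pow, ← ht, ← hnorm α hα]
        nlinarith [mul_nonneg (neg_nonneg.2 hN.le) (sq_nonneg (α * star β).im)]
      exact le_of_mul_le_mul_left this (by positivity)
    simp only [c, ht, Int.mul_ediv_cancel_left _ hM, Finset.mem_product, Finset.mem_Icc,
      Finset.mem_univ, and_true]
    exact abs_le.1 (abs_le_of_sq_le_sq ht2 zero_le_two)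
  refine (Finset.card_le_card_of_injOn c hmaps fun α hα α' hα' h ↦ ?_).trans (by simp)
  obtain ⟨hre, him⟩ := Prod.mk.inj h
  have hre : (α * star β).re = (α' * star β).re := by
    obtain ⟨t, ht⟩ := hdvd α hα β hβ
    obtain ⟨t', ht'⟩ := hdvd α' hα' β hβ
    rw [ht, ht', Int.mul_ediv_cancel_left _ hM, Int.mul_ediv_cancel_left _ hM] at hre
    rw [hre, ← ht'] at ht
    linarith
  refine mul_star_right_injective_of_norm_ne_zero (hT β hβ ▸ hM) (Zsqrtd.ext hre ?_)
  have hsq : (α * star β).im ^ 2 = (α' * star β).im ^ 2 := by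
    have := (hnorm α hα).trans (hnorm α' hα').symm
    rw [hre] at this
    exact mul_left_cancel₀ hN.ne (by linarith)
  rcases sq_eq_sq_iff_eq_or_eq_neg.1 hsq with h | h
  · exact h
  · rw [decide_eq_decide] at him
    dsimp only
    omega

lemma eq_one_of_add_inv_eq_intCast {η : ℝ} (h1 : 1 / 2 < η) (h2 : η < 2) {t : ℤ}
    (ht : η + η⁻¹ = t) : η = 1 := by
  have hsq : (η - 1) ^ 2 = η * (t - 2) := by
    rw [← ht]
    field_simp [(by linarith : η ≠ 0)]
    ring
  have ht2 : t = 2 := by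
    have hge : (2 : ℝ) ≤ t := by nlinarith [sq_nonneg (η - 1)]
    have hlt : (t : ℝ) < 3 := by nlinarith
    norm_cast at hge hlt
    omega
  rw [ht2, Int.cast_ofNat, sub_self, mul_zero, sq_eq_zero_iff] at hsq
  linarith

lemma card_le_of_forall_div_add_div_eq_intCast {T : Finset ℝ} {L : ℕ}
    (hT : ∀ x ∈ T, x ≠ 0 ∧ |x| ≤ 2 ^ L ∧ 1 ≤ |x| * 2 ^ L)
    (h : ∀ x ∈ T, ∀ y ∈ T, ∃ t : ℤ, x / y + y / x = t) : T.card ≤ 4 * L + 2 := by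
  let c (x : ℝ) : Bool × ℤ := (0 ≤ x, Int.log 2 |x|)
  have hmaps : ∀ x ∈ T, c x ∈ (Finset.univ : Finset Bool) ×ˢ Finset.Icc (-L : ℤ) L := by
    intro x hx
    obtain ⟨h0, hle, hge⟩ := hT x hx
    have h0 := abs_pos.2 h0
    simp only [c, Finset.mem_product, Finset.mem_univ, true_and, Finset.mem_Icc]
    constructor
    · rw [← Int.zpow_le_iff_le_log one_lt_two h0, zpow_neg, zpow_natCast,
        inv_le_iff_one_le_mul₀ (by positivity)]
      exact mod_cast hge
    · rw [← Int.lt_add_one_iff, ← Int.lt_zpow_iff_log_lt one_lt_two h0, Nat.cast_ofNat,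
        zpow_add_one₀ two_ne_zero, zpow_natCast]
      linarith [pow_pos (two_pos (α := ℝ)) L]
  refine (Finset.card_le_card_of_injOn c hmaps fun x hx y hy hxy ↦ ?_).trans_eq ?_
  · obtain ⟨hsign, hlog⟩ := Prod.mk.inj hxy
    rw [decide_eq_decide] at hsign
    have hx0 := (hT x hx).1
    have hy0 := (hT y hy).1
    have hpos : 0 < x / y := by
      rcases hx0.lt_or_gt with h | h
      · exact div_pos_of_neg_of_neg h (not_le.1 (mt hsign.2 h.not_ge))
      · exact div_pos h ((hsign.1 h.le).lt_of_ne' hy0)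
    have hbounds (z : ℝ) (hz : z ≠ 0) :
        (2 : ℝ) ^ Int.log 2 |z| ≤ |z| ∧ |z| < (2 : ℝ) ^ Int.log 2 |z| * 2 := by
      rw [← zpow_add_one₀ two_ne_zero]
      exact ⟨mod_cast Int.zpow_log_le_self (b := 2) one_lt_two (abs_pos.2 hz),
        mod_cast Int.lt_zpow_succ_log_self (b := 2) one_lt_two |z|⟩
    obtain ⟨lx, ux⟩ := hbounds x hx0
    obtain ⟨ly, uy⟩ := hbounds y hy0
    rw [hlog] at lx ux
    have habs : x / y = |x| / |y| := by rw [← abs_div, abs_of_pos hpos]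
    obtain ⟨t, ht⟩ := h x hx y hy
    rw [← inv_div x y] at ht
    refine (div_eq_one_iff_eq hy0).1 (eq_one_of_add_inv_eq_intCast ?_ ?_ ht)
    · rw [habs, lt_div_iff₀ (abs_pos.2 hy0)]
      linarith
    · rw [habs, div_lt_iff₀ (abs_pos.2 hy0)]
      linarith
  · simp only [Finset.card_product, Finset.card_univ, Fintype.card_bool, Int.card_Icc]
    omega

lemma card_le_of_norm_eq_of_pos (hN : 0 < N) (hM : M ≠ 0) {L : ℕ} {T : Finset (ℤ√N)}
    (hT : ∀ α ∈ T, α.norm = M ∧ |α.re| + |N| * |α.im| ≤ 2 ^ L)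
    (hdvd : ∀ α ∈ T, ∀ β ∈ T, M ∣ 2 * (α * star β).re) : T.card ≤ 4 * L + 2 := by
  classical
  let φ : ℤ√N →+* ℝ := toReal hN.le
  have hM' : (M : ℝ) ≠ 0 := mod_cast hM
  have hprod : ∀ α ∈ T, φ α * φ (star α) = M := fun α hα ↦ by
    rw [map_mul_map_star, (hT α hα).1]
  have h0 : ∀ α ∈ T, φ α ≠ 0 := fun α hα h ↦ hM' (by rw [← hprod α hα, h, zero_mul])
  have hle (α : ℤ√N) (h : |α.re| + |N| * |α.im| ≤ 2 ^ L) : |φ α| ≤ 2 ^ L := by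
    have hsqrt : √(N : ℝ) ≤ N := Real.sqrt_le_self_iff.2 (.inr (mod_cast hN))
    have h : |(α.re : ℝ)| + N * |(α.im : ℝ)| ≤ 2 ^ L := by
      rw [abs_of_pos hN] at h
      exact mod_cast h
    calc |φ α| ≤ |(α.re : ℝ)| + |(α.im : ℝ) * √(N : ℝ)| := abs_add_le _ _
      _ = |(α.re : ℝ)| + √(N : ℝ) * |(α.im : ℝ)| := by
        rw [abs_mul, abs_of_nonneg (Real.sqrt_nonneg _), mul_comm]
      _ ≤ 2 ^ L := le_trans (by gcongr) h
  have hinj : Set.InjOn φ T := fun α hα β hβ h ↦ by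
    have hstar : φ (star α) = φ (star β) :=
      mul_left_cancel₀ (h0 α hα) (by rw [hprod α hα, h, hprod β hβ])
    have hs : 0 < √(N : ℝ) := Real.sqrt_pos.2 (mod_cast hN)
    simp only [φ, toReal, lift_apply_apply, re_star, im_star, Int.cast_neg, neg_mul] at h hstar
    ext
    · exact_mod_cast (by linarith : (α.re : ℝ) = β.re)
    · exact_mod_cast mul_right_cancel₀ hs.ne' (by linarith : (α.im : ℝ) * √(N : ℝ) = β.im * _)
  rw [← Finset.card_image_of_injOn hinj]
  refine card_le_of_forall_div_add_div_eq_intCast ?_ ?_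
  · simp only [Finset.forall_mem_image]
    refine fun α hα ↦ ⟨h0 α hα, hle α (hT α hα).2, ?_⟩
    have h1 : (1 : ℝ) ≤ |φ α| * |φ (star α)| := by
      rw [← abs_mul, hprod α hα]
      exact mod_cast Int.one_le_abs hM
    exact h1.trans (by gcongr; exact hle _ (by simpa using (hT α hα).2))
  · simp only [Finset.forall_mem_image]
    intro α hα β hβ
    obtain ⟨t, ht⟩ := hdvd α hα β hβ
    have htrace := map_mul_map_star_add φ α β
    rw [ht, Int.cast_mul, eq_div_of_mul_eq (h0 α hα) ((mul_comm _ _).trans (hprod α hα)),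
      eq_div_of_mul_eq (h0 β hβ) ((mul_comm _ _).trans (hprod β hβ))] at htrace
    exact ⟨t, mul_left_cancel₀ hM' (by rw [← htrace]; ring)⟩

lemma card_le_of_norm_eq (hN : N ≠ 0) (hM : M ≠ 0) {L : ℕ} {S : Finset (ℤ√N)}
    (hS : ∀ α ∈ S, α.norm = M ∧ |α.re| + |N| * |α.im| ≤ 2 ^ L) :
    S.card ≤ (4 * L + 10) * M.natAbs.divisors.card ^ 2 := by
  refine card_le_of_forall_subset_dvd hM (fun α hα ↦ (hS α hα).1) fun T hTS hdvd ↦ ?_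
  rcases hN.lt_or_gt with h | h
  · have := card_le_of_norm_eq_of_neg h hM (fun α hα ↦ (hS α (hTS hα)).1) hdvd
    omega
  · have := card_le_of_norm_eq_of_pos h hM (fun α hα ↦ hS α (hTS hα)) hdvd
    omega

end Zsqrtd

/-! ### Trinomials and their roots -/

section Trinomial

variable {R : Type*} [CommRing R]

/-- The trinomial `X ^ (k + r) + A * X ^ k + B`. Writing the degree as `k + r` avoids subtraction
on exponents. -/
noncomputable def tri (k r : ℕ) (A B : R) : R[X] := X ^ (k + r) + C A * X ^ k + C B

lemma map_tri {S : Type*} [CommRing S] (φ : R →+* S) (k r : ℕ) (A B : R) :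
    (tri k r A B).map φ = tri k r (φ A) (φ B) := by
  simp [tri]

lemma natDegree_coeff_tri_le {k r : ℕ} {A B : R[X]} (hA : A.natDegree ≤ 1) (hB : B.natDegree ≤ 1)
    (j : ℕ) : ((tri k r A B).coeff j).natDegree ≤ 1 := by
  simp only [tri, coeff_add, coeff_X_pow, coeff_C_mul, coeff_C]
  refine natDegree_add_le_of_degree_le (natDegree_add_le_of_degree_le ?_ ?_) ?_ <;>
    split_ifs <;> simp [hA, hB]

variable [Nontrivial R] {k r : ℕ}

lemma natDegree_tri (hr : 0 < r) (A B : R) : (tri k r A B).natDegree = k + r := by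
  rw [tri, natDegree_add_C, natDegree_add_eq_left_of_natDegree_lt, natDegree_X_pow]
  rw [natDegree_X_pow]
  exact (natDegree_C_mul_X_pow_le _ _).trans_lt (by omega)

lemma monic_tri (hr : 0 < r) (A B : R) : (tri k r A B).Monic := by
  rw [Monic, leadingCoeff, natDegree_tri hr]
  simp [tri, coeff_X_pow, coeff_C, hr.ne']

end Trinomial

/-- `x` lists the roots of the monic polynomial `f` with multiplicity; in particular `f` splits. -/
def IsRootTuple {K : Type*} [CommRing K] {n : ℕ} (f : K[X]) (x : Fin n → K) : Prop :=
  ∏ i, (X - C (x i)) = f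

namespace IsRootTuple

variable {K : Type*} [CommRing K] {n : ℕ} {f : K[X]} {x : Fin n → K}

lemma map {L : Type*} [CommRing L] (hx : IsRootTuple f x) (φ : K →+* L) :
    IsRootTuple (f.map φ) (φ ∘ x) := by
  rw [IsRootTuple, ← hx, Polynomial.map_prod]
  simp

lemma esymm_eq (hx : IsRootTuple f x) {j : ℕ} (hj : j ≤ n) :
    (Multiset.map x Finset.univ.val).esymm j = (-1) ^ j * f.coeff (n - j) := by
  have h := Multiset.prod_X_sub_C_coeff (Multiset.map x Finset.univ.val) (k := n - j) (by simp)
  have hprod : (Multiset.map ((fun t ↦ X - C t) ∘ x) Finset.univ.val).prod = f := hx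
  rw [Multiset.map_map, hprod, Multiset.card_map, Finset.card_val, Finset.card_univ,
    Fintype.card_fin, Nat.sub_sub_self hj] at h
  rw [h, ← mul_assoc, ← mul_pow, neg_one_mul, neg_neg, one_pow, one_mul]

end IsRootTuple

lemma exists_isRootTuple {K : Type*} [Field K] {f : K[X]} (hf : f.Monic) (hsplit : f.Splits)
    {n : ℕ} (hn : f.natDegree = n) : ∃ x : Fin n → K, IsRootTuple f x := by
  have hlen : f.roots.toList.length = n := by
    rw [Multiset.length_toList, ← hsplit.natDegree_eq_card_roots, hn]
  subst hlen
  refine ⟨fun i ↦ f.roots.toList.get i, ?_⟩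
  have hroots := hsplit.eq_prod_roots_of_monic hf
  rw [← Multiset.coe_toList f.roots, Multiset.map_coe, Multiset.prod_coe] at hroots
  rw [IsRootTuple, ← List.prod_ofFn]
  refine .trans ?_ hroots.symm
  congr 1
  exact List.ext_get (by simp) (by simp)

/-! ### Symmetric resolvents -/

section Resolvent

variable {n : ℕ} {R K : Type*} [CommRing R] [Field K] [CharZero K]

lemma natDegree_eval₂_le (Q : MvPolynomial (Fin n) R) (φ : R →+* ℚ) {c : Fin n → ℚ[X]}
    (hc : ∀ i, (c i).natDegree ≤ 1) :
    (MvPolynomial.eval₂ (C.comp φ) c Q).natDegree ≤ Q.totalDegree := by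
  rw [MvPolynomial.eval₂_eq']
  refine natDegree_sum_le_of_forall_le _ _ fun d hd ↦ ?_
  calc (C.comp φ (Q.coeff d) * ∏ i, c i ^ d i).natDegree ≤ ∑ i, (c i ^ d i).natDegree :=
        (natDegree_C_mul_le _ _).trans (natDegree_prod_le _ _)
    _ ≤ ∑ i, d i := Finset.sum_le_sum fun i _ ↦
        natDegree_pow_le.trans (mul_le_of_le_one_right' (hc i))
    _ = d.sum fun _ e ↦ e := by rw [Finsupp.sum_fintype]; exact fun _ ↦ rfl
    _ ≤ Q.totalDegree := MvPolynomial.le_totalDegree hd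

lemma exists_eval₂_eq_eval {P : MvPolynomial (Fin n) R} (hP : P.IsSymmetric) :
    ∃ D : ℕ, ∀ (φ : R →+* ℚ) (F : ℚ[X][X]), (∀ j, (F.coeff j).natDegree ≤ 1) →
      ∃ g : ℚ[X], g.natDegree ≤ D ∧ ∀ (y : ℚ) (x : Fin n → K),
        IsRootTuple (F.map ((algebraMap ℚ K).comp (evalRingHom y))) x →
          MvPolynomial.eval₂ ((algebraMap ℚ K).comp φ) x P = (g.eval y : ℚ) := by
  obtain ⟨Q, hQ⟩ := MvPolynomial.esymmAlgHom_fin_surjective R le_rfl ⟨P, hP⟩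
  have hQ : MvPolynomial.aeval (fun i : Fin n ↦ MvPolynomial.esymm (Fin n) R (i + 1)) Q = P := by
    rw [← MvPolynomial.esymmAlgHom_apply, hQ]
  refine ⟨Q.totalDegree, fun φ F hF ↦ ?_⟩
  let c (i : Fin n) : ℚ[X] := C ((-1) ^ ((i : ℕ) + 1)) * F.coeff (n - (i + 1))
  refine ⟨MvPolynomial.eval₂ (C.comp φ) c Q,
    natDegree_eval₂_le Q φ fun i ↦ (natDegree_C_mul_le _ _).trans (hF _), fun y x hx ↦ ?_⟩
  set ψ := (algebraMap ℚ K).comp (evalRingHom y)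
  let _ : Algebra R K := ((algebraMap ℚ K).comp φ).toAlgebra
  have hφ : algebraMap R K = ψ.comp (C.comp φ) := by
    ext
    simp [ψ, RingHom.algebraMap_toAlgebra]
  calc MvPolynomial.eval₂ ((algebraMap ℚ K).comp φ) x P = MvPolynomial.aeval x P := rfl
    _ = MvPolynomial.aeval (fun i : Fin n ↦ ψ (c i)) Q := by
        rw [← hQ, ← AlgHom.comp_apply, MvPolynomial.comp_aeval]
        congr 2
        funext i
        rw [MvPolynomial.aeval_esymm_eq_multiset_esymm, hx.esymm_eq i.isLt, coeff_map]
        simp [c, ψ]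
    _ = ψ (MvPolynomial.eval₂ (C.comp φ) c Q) := by
        rw [MvPolynomial.eval₂_comp_left, ← hφ]
        rfl

lemma exists_card_le_of_eval₂_eq_zero {P : MvPolynomial (Fin n) R} (hP : P.IsSymmetric) :
    ∃ D : ℕ, ∀ (φ : R →+* ℚ) (F : ℚ[X][X]), (∀ j, (F.coeff j).natDegree ≤ 1) →
      (∃ (y : ℚ) (x : Fin n → K), IsRootTuple (F.map ((algebraMap ℚ K).comp (evalRingHom y))) x ∧
        MvPolynomial.eval₂ ((algebraMap ℚ K).comp φ) x P ≠ 0) →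
      ∀ S : Finset ℤ, (∀ y ∈ S, ∃ x : Fin n → K,
        IsRootTuple (F.map ((algebraMap ℚ K).comp (evalRingHom (y : ℚ)))) x ∧
          MvPolynomial.eval₂ ((algebraMap ℚ K).comp φ) x P = 0) → S.card ≤ D := by
  obtain ⟨D, hD⟩ := exists_eval₂_eq_eval (K := K) hP
  refine ⟨D, fun φ F hF ⟨y₀, x₀, hx₀, hne⟩ S hS ↦ ?_⟩
  obtain ⟨g, hgD, hg⟩ := hD φ F hF
  have hg0 : g ≠ 0 := by
    rintro rfl
    exact hne (by simpa using hg y₀ x₀ hx₀)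
  rw [← Finset.card_image_of_injective S (Int.cast_injective (α := ℚ))]
  refine (card_le_degree_of_subset_roots fun q hq ↦ ?_).trans hgD
  obtain ⟨y, hy, rfl⟩ := Finset.mem_image.1 (show q ∈ S.image _ from hq)
  obtain ⟨x, hx, h0⟩ := hS y hy
  rw [mem_roots hg0, IsRoot.def, ← Rat.cast_eq_zero (α := K), ← hg y x hx, h0]

end Resolvent

namespace IsRootTuple

variable {K : Type*} [CommRing K] {n : ℕ} {f : K[X]} {x : Fin n → K}

lemma eval_eq_zero (hx : IsRootTuple f x) (i : Fin n) : f.eval (x i) = 0 := by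
  rw [← hx, eval_prod, Finset.prod_eq_zero (Finset.mem_univ i) (by simp)]

lemma prod_erase_sub (hx : IsRootTuple f x) (i : Fin n) :
    ∏ j ∈ Finset.univ.erase i, (x i - x j) = (derivative f).eval (x i) := by
  rw [← hx, derivative_prod_finset, eval_finsetSum, Finset.sum_eq_single i]
  · simp [eval_prod]
  · intro j _ hj
    rw [eval_mul, eval_prod, Finset.prod_eq_zero (i := i) (by simp [hj.symm]) (by simp), zero_mul]
  · simp

variable {k r : ℕ} {a b : K} {y : Fin (k + r) → K}

lemma pow_add_mul_pow_add (hy : IsRootTuple (tri k r a b) y) (i : Fin (k + r)) :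
    y i ^ (k + r) + a * y i ^ k + b = 0 := by
  simpa [tri] using hy.eval_eq_zero i

lemma prod_eq (hy : IsRootTuple (tri k r a b) y) (hk : Odd k) (hr : Odd r) : ∏ i, y i = b := by
  have h := congrArg (eval 0) hy
  simpa [tri, eval_prod, Finset.prod_neg, (hk.add_odd hr).neg_one_pow, hk.pos.ne'] using h

lemma ne_zero (hy : IsRootTuple (tri k r a b) y) (hk : 0 < k) (hb : b ≠ 0) (i : Fin (k + r)) :
    y i ≠ 0 := by
  intro h
  exact hb (by simpa [h, hk.ne'] using hy.pow_add_mul_pow_add i)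

end IsRootTuple

/-! ### Comparing `(x + y) ^ (k + r - 1)` with a geometric sum at good primes -/

/-- The homogeneous geometric sum `(x ^ k - y ^ k) / (x - y)`, in the form of `geom_sum₂`. -/
def geomSum₂ {R : Type*} [CommRing R] (k : ℕ) (x y : R) : R :=
  ∑ i ∈ Finset.range k, x ^ i * y ^ (k - 1 - i)

section geomSum₂

variable {R : Type*} [CommRing R]

lemma geomSum₂_mul_sub (k : ℕ) (x y : R) : geomSum₂ k x y * (x - y) = x ^ k - y ^ k :=
  (Commute.all x y).geom_sum₂_mul k

lemma geomSum₂_comm (k : ℕ) (x y : R) : geomSum₂ k x y = geomSum₂ k y x :=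
  (Commute.all x y).geom_sum₂_comm k

lemma geomSum₂_self (k : ℕ) (x : R) : geomSum₂ k x x = k * x ^ (k - 1) := geom_sum₂_self x k

lemma geomSum₂_zero_right {k : ℕ} (hk : 0 < k) (x : R) : geomSum₂ k x 0 = x ^ (k - 1) := by
  rw [geomSum₂, Finset.sum_eq_single (k - 1)]
  · simp
  · intro i hi hne
    rw [Finset.mem_range] at hi
    rw [zero_pow (by omega), mul_zero]
  · exact fun h ↦ absurd (Finset.mem_range.2 (by omega)) h

lemma geomSum₂_mul_mul (k : ℕ) (w x y : R) :
    geomSum₂ k (w * x) (w * y) = w ^ (k - 1) * geomSum₂ k x y := by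
  rw [geomSum₂, geomSum₂, Finset.mul_sum]
  refine Finset.sum_congr rfl fun i hi ↦ ?_
  rw [← Nat.add_sub_of_le (Nat.le_sub_one_of_lt (Finset.mem_range.1 hi)), Nat.add_sub_cancel_left]
  ring

lemma map_geomSum₂ {S : Type*} [CommRing S] (φ : R →+* S) (k : ℕ) (x y : R) :
    φ (geomSum₂ k x y) = geomSum₂ k (φ x) (φ y) := by
  simp [geomSum₂]

end geomSum₂

section Field

variable {F : Type*} [Field F]

lemma eq_of_pow_eq_of_coprime {x y : F} (hy : y ≠ 0) {k m : ℕ} (h : k.Coprime m)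
    (hk : x ^ k = y ^ k) (hm : x ^ m = y ^ m) : x = y := by
  have h1 : (x / y) ^ k.gcd m = 1 := by
    rw [pow_gcd_eq_one]
    simp [div_pow, hk, hm, hy]
  rwa [h, pow_one, div_eq_one_iff_eq hy] at h1

lemma geomSum₂_ne_zero {x y : F} (hy : y ≠ 0) {k m : ℕ} (h : k.Coprime m) (hk : (k : F) ≠ 0)
    (hkm : x ^ k = y ^ k → x ^ m = y ^ m) : geomSum₂ k x y ≠ 0 := by
  intro h0
  have hpow : x ^ k = y ^ k := by rw [← sub_eq_zero, ← geomSum₂_mul_sub, h0, zero_mul]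
  obtain rfl := eq_of_pow_eq_of_coprime hy h hpow (hkm hpow)
  exact mul_ne_zero hk (pow_ne_zero _ hy) (geomSum₂_self k x ▸ h0)

variable {k r : ℕ}

lemma add_ne_zero_and_geomSum₂_ne_zero_of_roots (hk : Odd k) (hr : Odd r) (hkr : k.Coprime r)
    (h2 : (2 : F) ≠ 0) (hkF : (k : F) ≠ 0) {a b x y : F} (ha : a ≠ 0)
    (hx : x ^ (k + r) + a * x ^ k + b = 0) (hy : y ^ (k + r) + a * y ^ k + b = 0)
    (hxy : x ≠ 0 ∨ y ≠ 0) : x + y ≠ 0 ∧ geomSum₂ k x y ≠ 0 := by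
  rcases eq_or_ne y 0 with rfl | hy0
  · have hx0 : x ≠ 0 := hxy.resolve_right (not_not.2 rfl)
    rw [add_zero, geomSum₂_zero_right hk.pos]
    exact ⟨hx0, pow_ne_zero _ hx0⟩
  rcases eq_or_ne x 0 with rfl | hx0
  · rw [zero_add, geomSum₂_comm, geomSum₂_zero_right hk.pos]
    exact ⟨hy0, pow_ne_zero _ hy0⟩
  constructor
  · intro h
    rw [eq_neg_of_add_eq_zero_right h, (hk.add_odd hr).neg_pow, hk.neg_pow] at hy
    have : 2 * a * x ^ k = 0 := by linear_combination hx - hy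
    exact mul_ne_zero (mul_ne_zero h2 ha) (pow_ne_zero _ hx0) this
  · refine geomSum₂_ne_zero hy0 (m := k + r) (by simpa using hkr) hkF fun h ↦ ?_
    linear_combination hx - hy - a * h

lemma add_one_ne_zero_and_geomSum₂_one_ne_zero (hk : Odd k) (hkr : k.Coprime r)
    (h2 : (2 : F) ≠ 0) (hrF : (r : F) ≠ 0) {w : F} (hw : w ^ k = 1) :
    w + 1 ≠ 0 ∧ geomSum₂ r w 1 ≠ 0 := by
  constructor
  · intro h
    rw [eq_neg_of_add_eq_zero_left h, hk.neg_one_pow] at hw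
    exact h2 (by linear_combination -hw)
  · exact geomSum₂_ne_zero one_ne_zero hkr.symm hrF fun _ ↦ by rw [hw, one_pow]

end Field

section ValuationSubring

variable {K : Type*} [Field K] {A : ValuationSubring K}

lemma residue_eq_zero_iff_valuation_lt_one (z : A) :
    IsLocalRing.residue A z = 0 ↔ A.valuation (z : K) < 1 := by
  rw [IsLocalRing.residue_eq_zero_iff, ValuationSubring.valuation_lt_one_iff]

lemma residue_ne_zero_iff_valuation_eq_one (z : A) :
    IsLocalRing.residue A z ≠ 0 ↔ A.valuation (z : K) = 1 := by
  rw [Ne, residue_eq_zero_iff_valuation_lt_one, not_lt]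
  exact (A.valuation_le_one z).ge_iff_eq

lemma natCast_residueField_ne_zero {m : ℕ} (hm : A.valuation (m : K) = 1) :
    (m : IsLocalRing.ResidueField A) ≠ 0 := by
  rw [← map_natCast (IsLocalRing.residue A), residue_ne_zero_iff_valuation_eq_one]
  simpa using hm

variable {k r : ℕ} {a b x y : A}

lemma valuation_pow_eq_valuation_of_root (hr : 0 < r) (ha : A.valuation (a : K) = 1)
    (hx : x ^ (k + r) + a * x ^ k + b = 0) (hxlt : A.valuation (x : K) < 1) :
    A.valuation ((x ^ r + a : A) : K) = 1 ∧ A.valuation (x : K) ^ k = A.valuation (b : K) := by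
  have h1 : A.valuation ((x ^ r + a : A) : K) = 1 := by
    rw [← residue_ne_zero_iff_valuation_eq_one] at ha ⊢
    rw [← residue_eq_zero_iff_valuation_lt_one] at hxlt
    simpa [hxlt, hr.ne'] using ha
  refine ⟨h1, ?_⟩
  have hfac : x ^ k * (x ^ r + a) = -b := by rw [pow_add] at hx; linear_combination hx
  have := congrArg (fun z : A ↦ A.valuation (z : K)) hfac
  simpa only [MulMemClass.coe_mul, NegMemClass.coe_neg, Valuation.map_neg, map_mul, h1, mul_one,
    SubmonoidClass.coe_pow, map_pow] using this

lemma geomSum₂_mul_eq_mul_geomSum₂ {R : Type*} [CommRing R] [IsDomain R] {a b x y : R}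
    (hxy : x ≠ y) (hx : x ^ (k + r) + a * x ^ k + b = 0) (hy : y ^ (k + r) + a * y ^ k + b = 0) :
    geomSum₂ k x y * ((x ^ r + a) * (y ^ r + a)) = b * geomSum₂ r x y := by
  refine mul_right_cancel₀ (sub_ne_zero.2 hxy) ?_
  linear_combination (x ^ r + a) * (y ^ r + a) * geomSum₂_mul_sub k x y -
    b * geomSum₂_mul_sub r x y + (y ^ r + a) * hx - (x ^ r + a) * hy

lemma valuation_add_eq_and_valuation_geomSum₂_eq (hk : Odd k) (hr : 0 < r) (hkr : k.Coprime r)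
    (h2 : A.valuation ((2 : ℕ) : K) = 1) (hrA : A.valuation (r : K) = 1)
    (ha : A.valuation (a : K) = 1) (hb : b ≠ 0)
    (hx : x ^ (k + r) + a * x ^ k + b = 0) (hy : y ^ (k + r) + a * y ^ k + b = 0)
    (hxlt : A.valuation (x : K) < 1) (hylt : A.valuation (y : K) < 1) :
    A.valuation ((x + y : A) : K) = A.valuation (y : K) ∧
      A.valuation ((geomSum₂ r x y : A) : K) = A.valuation (y : K) ^ (r - 1) := by
  have hvxy : A.valuation (x : K) = A.valuation (y : K) :=
    (pow_left_inj₀ zero_le zero_le hk.pos.ne').1 <|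
      (valuation_pow_eq_valuation_of_root hr ha hx hxlt).2.trans
        (valuation_pow_eq_valuation_of_root hr ha hy hylt).2.symm
  have hy0 : y ≠ 0 := by
    rintro rfl
    exact hb (by simpa [hk.pos.ne'] using hy)
  obtain ⟨w, rfl⟩ : ∃ w : A, x = y * w := by
    refine ⟨⟨x / y, (A.valuation_le_one_iff _).1 ?_⟩, Subtype.ext ?_⟩
    · rw [map_div₀, hvxy]
      exact div_self_le_one _
    · exact (mul_div_cancel₀ _ (by simpa using hy0)).symm
  have hw : IsLocalRing.residue A w ^ k = 1 := by
    have h : w ^ k * ((y * w) ^ r + a) = y ^ r + a := by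
      refine mul_left_cancel₀ (pow_ne_zero k hy0) ?_
      rw [pow_add] at hx hy
      linear_combination hx - hy
    rw [← residue_eq_zero_iff_valuation_lt_one] at hxlt hylt
    rw [← residue_ne_zero_iff_valuation_eq_one] at ha
    refine mul_right_cancel₀ ha ?_
    simpa [hylt, hr.ne'] using congrArg (IsLocalRing.residue A) h
  obtain ⟨hw1, hw2⟩ := add_one_ne_zero_and_geomSum₂_one_ne_zero hk hkr
    (mod_cast natCast_residueField_ne_zero h2) (natCast_residueField_ne_zero hrA) hw
  rw [← map_one (IsLocalRing.residue A), ← map_add,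
    residue_ne_zero_iff_valuation_eq_one] at hw1
  rw [← map_one (IsLocalRing.residue A), ← map_geomSum₂,
    residue_ne_zero_iff_valuation_eq_one] at hw2
  constructor
  · rw [show y * w + y = y * (w + 1) by ring, MulMemClass.coe_mul, map_mul, hw1, mul_one]
  · rw [show geomSum₂ r (y * w) y = y ^ (r - 1) * geomSum₂ r w 1 by
      rw [← geomSum₂_mul_mul, mul_one], MulMemClass.coe_mul, map_mul, hw2, mul_one]
    simp

lemma valuation_add_pow_eq_valuation_geomSum₂ (hk : Odd k) (hr : Odd r) (hkr : k.Coprime r)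
    (h2 : A.valuation ((2 : ℕ) : K) = 1) (hkA : A.valuation (k : K) = 1)
    (hrA : A.valuation (r : K) = 1) (ha : A.valuation (a : K) = 1) (hb : b ≠ 0) (hxy : x ≠ y)
    (hx : x ^ (k + r) + a * x ^ k + b = 0) (hy : y ^ (k + r) + a * y ^ k + b = 0) :
    A.valuation (((x + y) ^ (k + r - 1) : A) : K) = A.valuation ((geomSum₂ k x y : A) : K) := by
  by_cases h : A.valuation (x : K) < 1 ∧ A.valuation (y : K) < 1
  · obtain ⟨hadd, hgeom⟩ := valuation_add_eq_and_valuation_geomSum₂_eq hk hr.pos hkr h2 hrA ha hb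
      hx hy h.1 h.2
    obtain ⟨hxa, -⟩ := valuation_pow_eq_valuation_of_root hr.pos ha hx h.1
    obtain ⟨hya, hyb⟩ := valuation_pow_eq_valuation_of_root hr.pos ha hy h.2
    have hkey := congrArg (fun z : A ↦ A.valuation (z : K))
      (geomSum₂_mul_eq_mul_geomSum₂ hxy hx hy)
    simp only [MulMemClass.coe_mul, map_mul, hxa, hya, mul_one, hgeom, ← hyb, ← pow_add] at hkey
    rw [hkey, SubmonoidClass.coe_pow, map_pow, hadd, Nat.add_sub_assoc hr.pos]
  · have ha' := (residue_ne_zero_iff_valuation_eq_one a).2 ha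
    rw [← residue_eq_zero_iff_valuation_lt_one, ← residue_eq_zero_iff_valuation_lt_one,
      not_and_or] at h
    obtain ⟨hadd, hgeom⟩ := add_ne_zero_and_geomSum₂_ne_zero_of_roots hk hr hkr
      (mod_cast natCast_residueField_ne_zero h2) (natCast_residueField_ne_zero hkA) ha'
      (by simpa using congrArg (IsLocalRing.residue A) hx)
      (by simpa using congrArg (IsLocalRing.residue A) hy) h
    rw [← map_add, residue_ne_zero_iff_valuation_eq_one] at hadd
    rw [← map_geomSum₂, residue_ne_zero_iff_valuation_eq_one] at hgeom
    rw [SubmonoidClass.coe_pow, map_pow, hadd, one_pow, hgeom]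

end ValuationSubring

/-! ### Trinomials with a coefficient of negative valuation -/

section Valuation

variable {K Γ₀ : Type*} [Field K] [LinearOrderedCommGroupWithZero Γ₀] {v : Valuation K Γ₀}
variable {k r : ℕ} {a b x : K}

lemma valuation_root_of_one_lt_left (hr : 0 < r) (ha : 1 < v a) (hb : v b = 1)
    (hx : x ^ (k + r) + a * x ^ k + b = 0) : v x ^ r = v a ∨ v x ^ k * v a = 1 := by
  have h : v x ^ k * v (x ^ r + a) = 1 := by
    rw [← map_pow, ← map_mul, ← hb, ← v.map_neg b]
    congr 1
    rw [pow_add] at hx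
    linear_combination hx
  rcases lt_trichotomy (v x ^ r) (v a) with hlt | heq | hgt
  · rw [v.map_add_eq_of_lt_right (by rwa [map_pow])] at h
    exact .inr h
  · exact .inl heq
  · rw [v.map_add_eq_of_lt_left (by rwa [map_pow]), map_pow, ← pow_add] at h
    have hx1 : 1 < v x := (one_lt_pow_iff_of_nonneg zero_le hr.ne').1 (ha.trans hgt)
    exact absurd h (one_lt_pow₀ hx1 (by omega)).ne'

lemma add_dvd_card_of_prod_eq_one {ι : Type*} {T : Finset ι} {f : ι → Γ₀} {α : Γ₀} (hα : 1 < α)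
    (hr : 0 < r) (hkr : k.Coprime r) (hf : ∀ i ∈ T, f i ^ r = α ∨ f i ^ k * α = 1)
    (hT : ∏ i ∈ T, f i = 1) : k + r ∣ T.card := by
  classical
  set l := (T.filter fun i ↦ f i ^ r = α).card with hl
  set s := (T.filter fun i ↦ ¬ f i ^ r = α).card with hs
  have hsum : l + s = T.card := Finset.card_filter_add_card_filter_not _
  have hfactor : ∀ i ∈ T, f i ^ (k * r) * (if f i ^ r = α then 1 else α ^ r) =
      if f i ^ r = α then α ^ k else 1 := by
    intro i hi
    split_ifs with h
    · rw [mul_one, mul_comm, pow_mul, h]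
    · rw [pow_mul, ← mul_pow, (hf i hi).resolve_left h, one_pow]
  have hprod := Finset.prod_congr (rfl : T = T) hfactor
  rw [Finset.prod_mul_distrib, Finset.prod_pow, hT, Finset.prod_ite, Finset.prod_ite] at hprod
  simp only [Finset.prod_const, one_pow, one_mul, mul_one, ← pow_mul, ← hl, ← hs] at hprod
  have hls : r * s = k * l := pow_right_injective₀ (zero_lt_one.trans hα) hα.ne' hprod
  obtain ⟨t, ht⟩ : r ∣ l := hkr.symm.dvd_of_dvd_mul_left ⟨s, hls.symm⟩
  have hst : s = k * t := Nat.eq_of_mul_eq_mul_left hr (by rw [hls, ht]; ring)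
  exact ⟨t, by rw [← hsum, ht, hst]; ring⟩

lemma valuation_prod_roots_ne_one {x : Fin (k + r) → K} (hr : 0 < r) (hkr : k.Coprime r)
    (ha : 1 < v a) (hb : v b = 1) (hx : IsRootTuple (tri k r a b) x) {S : Finset (Fin (k + r))}
    (hS : S.Nonempty) (hSu : S ≠ Finset.univ) : v (∏ i ∈ S, x i) ≠ 1 := by
  intro h
  rw [map_prod] at h
  have hdvd := add_dvd_card_of_prod_eq_one ha hr hkr (fun i _ ↦
    valuation_root_of_one_lt_left hr ha hb (hx.pow_add_mul_pow_add i)) h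
  have hlt := Finset.card_lt_card (Finset.ssubset_univ_iff.2 hSu)
  rw [Finset.card_univ, Fintype.card_fin] at hlt
  exact hlt.not_ge (Nat.le_of_dvd hS.card_pos hdvd)

lemma valuation_root_pow_of_one_lt_right (hr : 0 < r) (ha : v a ≤ 1) (hb : 1 < v b)
    (hx : x ^ (k + r) + a * x ^ k + b = 0) : v x ^ (k + r) = v b := by
  have h : v (x ^ (k + r) + a * x ^ k) = v b := by
    rw [eq_neg_of_add_eq_zero_left hx, v.map_neg]
  have hle : v (a * x ^ k) ≤ v x ^ k := by
    rw [map_mul, map_pow]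
    exact mul_le_of_le_one_left zero_le ha
  have hx1 : 1 < v x := by
    by_contra! hle1
    refine hb.not_ge (h ▸ v.map_add_le ?_ (hle.trans (pow_le_one₀ zero_le hle1)))
    rw [map_pow]
    exact pow_le_one₀ zero_le hle1
  rwa [v.map_add_eq_of_lt_left, map_pow] at h
  rw [map_pow]
  exact hle.trans_lt (pow_lt_pow_right₀ hx1 (by omega))

lemma one_lt_valuation_root (hr : 0 < r) (ha : v a ≤ 1) (hb : 1 < v b)
    (hx : x ^ (k + r) + a * x ^ k + b = 0) : 1 < v x :=
  (one_lt_pow_iff_of_nonneg zero_le (by omega)).1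
    (hb.trans_eq (valuation_root_pow_of_one_lt_right hr ha hb hx).symm)

lemma valuation_root_eq_valuation_root {y : K} (hr : 0 < r) (ha : v a ≤ 1) (hb : 1 < v b)
    (hx : x ^ (k + r) + a * x ^ k + b = 0) (hy : y ^ (k + r) + a * y ^ k + b = 0) : v x = v y :=
  (pow_left_inj₀ zero_le zero_le (by omega)).1 <|
    (valuation_root_pow_of_one_lt_right hr ha hb hx).trans
      (valuation_root_pow_of_one_lt_right hr ha hb hy).symm

lemma valuation_derivative_tri_eval (hk : 0 < k) (hr : 0 < r)
    (hn : v ((k + r : ℕ) : K) = 1) (ha : v a ≤ 1) (hx : 1 < v x) :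
    v ((derivative (tri k r a b)).eval x) = v x ^ (k + r - 1) := by
  have hderiv : (derivative (tri k r a b)).eval x =
      ((k + r : ℕ) : K) * x ^ (k + r - 1) + a * (k * x ^ (k - 1)) := by
    simp [tri, derivative_X_pow]
  have hk1 : v (k : K) ≤ 1 := mod_cast valuation_intCast_le_one v k
  rw [hderiv, v.map_add_eq_of_lt_left, map_mul, hn, one_mul, map_pow]
  rw [map_mul, map_mul, map_mul, map_pow, map_pow, hn, one_mul]
  exact (mul_le_of_le_one_left zero_le ha).trans_lt <|
    (mul_le_of_le_one_left zero_le hk1).trans_lt <| pow_lt_pow_right₀ hx (by omega)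

lemma valuation_sub_eq_of_ne {x : Fin (k + r) → K} (hk : 0 < k) (hr : 0 < r)
    (hn : v ((k + r : ℕ) : K) = 1) (ha : v a ≤ 1) (hb : 1 < v b)
    (hx : IsRootTuple (tri k r a b) x) {i j : Fin (k + r)} (hij : i ≠ j) :
    v (x i - x j) = v (x i) := by
  have hroot := fun l ↦ hx.pow_add_mul_pow_add l
  have hle : ∀ l, v (x i - x l) ≤ v (x i) := fun l ↦
    v.map_sub_le le_rfl (valuation_root_eq_valuation_root hr ha hb (hroot l) (hroot i)).le
  have hx1 := one_lt_valuation_root hr ha hb (hroot i)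
  refine (hle j).antisymm (not_lt.1 fun hlt ↦ ?_)
  have hprod := congrArg v (hx.prod_erase_sub i)
  rw [valuation_derivative_tri_eval hk hr hn ha hx1, map_prod] at hprod
  refine hprod.not_lt ?_
  have hj : j ∈ Finset.univ.erase i := Finset.mem_erase.2 ⟨hij.symm, Finset.mem_univ j⟩
  rw [← Finset.mul_prod_erase _ _ hj]
  calc v (x i - x j) * ∏ l ∈ (Finset.univ.erase i).erase j, v (x i - x l)
      ≤ v (x i - x j) * ∏ _l ∈ (Finset.univ.erase i).erase j, v (x i) := by
        gcongr with l
        exacts [fun _ _ ↦ zero_le, hle l]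
    _ = v (x i - x j) * v (x i) ^ (k + r - 2) := by
        rw [Finset.prod_const, Finset.card_erase_of_mem hj, Finset.card_erase_of_mem
          (Finset.mem_univ i), Finset.card_univ, Fintype.card_fin, Nat.sub_sub]
    _ < v (x i) * v (x i) ^ (k + r - 2) :=
        mul_lt_mul_of_pos_right hlt (pow_pos (zero_lt_one.trans hx1) _)
    _ = v (x i) ^ (k + r - 1) := by rw [← pow_succ']; congr 1; omega

lemma add_sub_one_dvd_card_of_prod_eq {ι : Type*} {O : Finset ι} {u : ι → Γ₀} {ρ : Γ₀}
    (hρ : 1 < ρ) (hk : 0 < k) (hr : 0 < r) (hu : ∀ q ∈ O, u q = ρ ∨ u q * ρ ^ r = ρ)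
    (h : ∏ q ∈ O, u q ^ (k + r - 1) = (ρ ^ (k - 1)) ^ O.card) : k + r - 1 ∣ O.card := by
  classical
  set t := (O.filter fun q ↦ ¬ u q = ρ).card with ht
  have hfactor : ∀ q ∈ O, u q ^ (k + r - 1) * (if u q = ρ then 1 else ρ ^ (r * (k + r - 1))) =
      ρ ^ (k + r - 1) := by
    intro q hq
    split_ifs with hqρ
    · rw [mul_one, hqρ]
    · rw [pow_mul, ← mul_pow, (hu q hq).resolve_left hqρ]
  have hprod := Finset.prod_congr (rfl : O = O) hfactor
  rw [Finset.prod_mul_distrib, h, Finset.prod_ite] at hprod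
  simp only [Finset.prod_const, one_pow, one_mul, ← pow_mul, ← pow_add, ← ht] at hprod
  have hexp := pow_right_injective₀ (zero_lt_one.trans hρ) hρ.ne' hprod
  obtain ⟨m, rfl⟩ := Nat.exists_eq_add_of_le' hk
  simp only [Nat.add_sub_cancel, show m + 1 + r - 1 = m + r by omega] at hexp ⊢
  exact ⟨t, Nat.eq_of_mul_eq_mul_left hr (by linarith)⟩

end Valuation

section ValuationSubring

variable {K : Type*} [Field K] {A : ValuationSubring K} {k r : ℕ} {a b y : K} {w : A}

lemma valuation_mul_eq_of_residue_ne_zero (hw : IsLocalRing.residue A w ≠ 0) (y : K) :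
    A.valuation (w * y) = A.valuation y := by
  rw [map_mul, (residue_ne_zero_iff_valuation_eq_one w).1 hw, one_mul]

lemma residue_eq_zero_of_valuation_mul_lt (h : A.valuation (w * y) < A.valuation y) :
    IsLocalRing.residue A w = 0 := by
  by_contra hw
  exact h.ne (valuation_mul_eq_of_residue_ne_zero hw y)

lemma residue_pow_eq_one_of_roots (hr : 0 < r) (ha : A.valuation a ≤ 1) (hy1 : 1 < A.valuation y)
    (hx : (w * y) ^ (k + r) + a * (w * y) ^ k + b = 0) (hy : y ^ (k + r) + a * y ^ k + b = 0) :
    IsLocalRing.residue A w ^ (k + r) = 1 := by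
  rw [← sub_eq_zero, ← map_pow, ← map_one (IsLocalRing.residue A), ← map_sub]
  refine residue_eq_zero_of_valuation_mul_lt (y := y ^ (k + r)) ?_
  have heq : ((w ^ (k + r) - 1 : A) : K) * y ^ (k + r) = a * (((1 - w ^ k : A) : K) * y ^ k) := by
    push_cast
    linear_combination hx - hy
  rw [heq, map_mul, map_mul, map_pow, map_pow]
  calc A.valuation a * (A.valuation ((1 - w ^ k : A) : K) * A.valuation y ^ k)
      ≤ 1 * (1 * A.valuation y ^ k) := by gcongr; exact A.valuation_le_one _
    _ < A.valuation y ^ (k + r) := by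
        rw [one_mul, one_mul]
        exact pow_lt_pow_right₀ hy1 (by omega)

lemma valuation_geomSum₂_mul_eq_pow (hkr : k.Coprime r)
    (hw : IsLocalRing.residue A w ^ (k + r) = 1) (hw1 : IsLocalRing.residue A w ≠ 1) (y : K) :
    A.valuation (geomSum₂ k (w * y) y) = A.valuation y ^ (k - 1) := by
  have hgeom : geomSum₂ k (w * y) y = (geomSum₂ k w 1 : A) * y ^ (k - 1) := by
    rw [← A.subtype_apply (geomSum₂ k w 1), map_geomSum₂, map_one, mul_comm (w : K) y,
      mul_comm _ (y ^ _), ← geomSum₂_mul_mul, mul_one, A.subtype_apply]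
  rw [hgeom, valuation_mul_eq_of_residue_ne_zero, map_pow]
  intro h0
  refine hw1 (eq_of_pow_eq_of_coprime one_ne_zero (Nat.coprime_self_add_right.2 hkr) ?_
    (hw.trans (one_pow _).symm))
  rw [map_geomSum₂, map_one] at h0
  rw [← sub_eq_zero, ← geomSum₂_mul_sub, h0, zero_mul]

lemma valuation_mul_add_eq_or (hk : 0 < k) (hr : 0 < r) (heven : Even (k + r)) (hkr : k.Coprime r)
    (hn : A.valuation ((k + r : ℕ) : K) = 1) (ha : A.valuation a = 1) (hy1 : 1 < A.valuation y)
    (hw : IsLocalRing.residue A w ^ (k + r) = 1) (hw1 : IsLocalRing.residue A w ≠ 1)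
    (hx : (w * y) ^ (k + r) + a * (w * y) ^ k + b = 0) (hy : y ^ (k + r) + a * y ^ k + b = 0) :
    A.valuation (w * y + y) = A.valuation y ∨
      A.valuation (w * y + y) * A.valuation y ^ r = A.valuation y := by
  have hadd : w * y + y = (w + 1 : A) * y := by push_cast; ring
  by_cases hw2 : IsLocalRing.residue A (w + 1) = 0
  swap
  · rw [hadd]
    exact .inl (valuation_mul_eq_of_residue_ne_zero hw2 y)
  right
  have hgeom : geomSum₂ (k + r) (w * y) (-y) =
      (geomSum₂ (k + r) (-w) 1 : A) * (-y) ^ (k + r - 1) := by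
    rw [← A.subtype_apply (geomSum₂ (k + r) (-w) 1), map_geomSum₂, map_one, map_neg,
      mul_comm _ ((-y) ^ _), ← geomSum₂_mul_mul, mul_one, A.subtype_apply]
    congr 1
    ring
  have hres : IsLocalRing.residue A (geomSum₂ (k + r) (-w) 1) ≠ 0 := by
    rw [map_add, map_one] at hw2
    rw [map_geomSum₂, map_one, map_neg, neg_eq_of_add_eq_zero_right hw2, geomSum₂_self, one_pow,
      mul_one]
    exact natCast_residueField_ne_zero hn
  have hsub : A.valuation (w * y - y) = A.valuation y := by
    rw [show w * y - y = (w - 1 : A) * y by push_cast; ring]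
    refine valuation_mul_eq_of_residue_ne_zero ?_ y
    rwa [map_sub, map_one, sub_ne_zero]
  have hkey : geomSum₂ (k + r) (w * y) (-y) * (w * y + y) =
      -(a * (geomSum₂ k (w * y) y * (w * y - y))) := by
    rw [geomSum₂_mul_sub, ← sub_neg_eq_add, geomSum₂_mul_sub, heven.neg_pow]
    linear_combination hx - hy
  have hval := congrArg A.valuation hkey
  rw [Valuation.map_neg, map_mul, map_mul, map_mul, hgeom,
    valuation_mul_eq_of_residue_ne_zero hres, valuation_geomSum₂_mul_eq_pow hkr hw hw1, ha,
    one_mul, hsub, map_pow, Valuation.map_neg, ← pow_succ, Nat.sub_add_cancel hk] at hval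
  have hy0 : A.valuation y ≠ 0 := (zero_lt_one.trans hy1).ne'
  refine mul_left_cancel₀ (pow_ne_zero (k - 1) hy0) ?_
  rw [← pow_succ, Nat.sub_add_cancel hk, ← hval, mul_left_comm, ← pow_add, mul_comm]
  congr 2
  omega

variable {x : Fin (k + r) → K}

lemma exists_mul_eq_and_residue_ne_one (hk : 0 < k) (hr : 0 < r)
    (hn : A.valuation ((k + r : ℕ) : K) = 1) (ha : A.valuation a ≤ 1) (hb : 1 < A.valuation b)
    (hx : IsRootTuple (tri k r a b) x) {i j : Fin (k + r)} (hij : i ≠ j) :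
    ∃ w : A, w * x j = x i ∧ IsLocalRing.residue A w ≠ 1 := by
  have hroot := fun l ↦ hx.pow_add_mul_pow_add l
  have hvij := valuation_root_eq_valuation_root hr ha hb (hroot i) (hroot j)
  have hj : A.valuation (x j) ≠ 0 :=
    (zero_lt_one.trans (one_lt_valuation_root hr ha hb (hroot j))).ne'
  have hj0 : x j ≠ 0 := A.valuation.ne_zero_iff.1 hj
  obtain ⟨w, hw⟩ : ∃ w : A, w * x j = x i := by
    refine ⟨⟨x i / x j, (A.valuation_le_one_iff _).1 ?_⟩, div_mul_cancel₀ _ hj0⟩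
    rw [map_div₀, hvij]
    exact div_self_le_one _
  refine ⟨w, hw, ?_⟩
  rw [← sub_ne_zero, ← map_one (IsLocalRing.residue A), ← map_sub,
    residue_ne_zero_iff_valuation_eq_one]
  refine mul_right_cancel₀ hj ?_
  rw [one_mul, ← map_mul, ← hvij, ← valuation_sub_eq_of_ne hk hr hn ha hb hx hij, ← hw]
  congr 1
  push_cast
  ring

lemma valuation_prod_add_pow_ne_valuation_prod_geomSum₂ (hk : 0 < k) (hr : 0 < r)
    (heven : Even (k + r)) (hkr : k.Coprime r) (hn : A.valuation ((k + r : ℕ) : K) = 1)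
    (ha : A.valuation a = 1) (hb : 1 < A.valuation b) (hx : IsRootTuple (tri k r a b) x)
    {O : Finset (Fin (k + r) × Fin (k + r))} (hO : ∀ q ∈ O, q.1 ≠ q.2)
    (hcard : ¬ k + r - 1 ∣ O.card) :
    A.valuation (∏ q ∈ O, (x q.1 + x q.2) ^ (k + r - 1)) ≠
      A.valuation (∏ q ∈ O, geomSum₂ k (x q.1) (x q.2)) := by
  obtain ⟨i₀⟩ : Nonempty (Fin (k + r)) := ⟨⟨0, by omega⟩⟩
  have hroot := fun i ↦ hx.pow_add_mul_pow_add i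
  have hone := fun i ↦ one_lt_valuation_root hr ha.le hb (hroot i)
  have hpair : ∀ q ∈ O,
      A.valuation (geomSum₂ k (x q.1) (x q.2)) = A.valuation (x i₀) ^ (k - 1) ∧
      (A.valuation (x q.1 + x q.2) = A.valuation (x i₀) ∨
        A.valuation (x q.1 + x q.2) * A.valuation (x i₀) ^ r = A.valuation (x i₀)) := by
    intro q hq
    obtain ⟨w, hw, hw1⟩ := exists_mul_eq_and_residue_ne_one hk hr hn ha.le hb hx (hO q hq)
    have hq1 := hroot q.1
    rw [← hw] at hq1 ⊢
    have hpow := residue_pow_eq_one_of_roots hr ha.le (hone q.2) hq1 (hroot q.2)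
    rw [valuation_geomSum₂_mul_eq_pow hkr hpow hw1,
      ← valuation_root_eq_valuation_root hr ha.le hb (hroot q.2) (hroot i₀)]
    exact ⟨rfl, valuation_mul_add_eq_or hk hr heven hkr hn ha (hone q.2) hpow hw1 hq1 (hroot q.2)⟩
  intro h
  refine hcard (add_sub_one_dvd_card_of_prod_eq (u := fun q ↦ A.valuation (x q.1 + x q.2))
    (hone i₀) hk hr (fun q hq ↦ (hpair q hq).2) ?_)
  rw [map_prod, map_prod, Finset.prod_congr rfl fun q hq ↦ (hpair q hq).1,
    Finset.prod_const] at h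
  simpa only [map_pow] using h

end ValuationSubring

section CharZero

variable (K : Type*) [Field K] [CharZero K] {k r : ℕ}

lemma exists_one_lt_valuation_and_forall_dvd {N : ℤ} (hN : N ≠ 0) :
    ∃ (q : ℚ) (A : ValuationSubring K), 1 < A.valuation (q : K) ∧
      ∀ z : ℤ, z ∣ N → A.valuation (z : K) = 1 := by
  obtain ⟨p, hpN, hp⟩ := Nat.exists_infinite_primes (N.natAbs + 1)
  obtain ⟨A, hA⟩ := exists_valuationSubring_natCast_lt_one K hp
  refine ⟨(p : ℚ)⁻¹, A, ?_, fun z hz ↦ valuation_intCast_eq_one_of_not_dvd hp hA fun h ↦ ?_⟩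
  · rw [Rat.cast_inv, Rat.cast_natCast, map_inv₀]
    exact (one_lt_inv₀ (valuation_natCast_pos A.valuation hp.ne_zero)).2 hA
  · have := Nat.le_of_dvd (Int.natAbs_pos.2 hN) (Int.natCast_dvd.1 (h.trans hz))
    omega

lemma exists_prod_roots_ne (hr : 0 < r) (hkr : k.Coprime r) {b c : ℤ} (hb : b ≠ 0) (hc : c ≠ 0) :
    ∃ a : ℚ, ∀ x : Fin (k + r) → K, IsRootTuple (tri k r (a : K) (b : K)) x →
      ∀ S : Finset (Fin (k + r)), S.Nonempty → S ≠ Finset.univ → ∏ i ∈ S, x i ≠ c := by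
  obtain ⟨a, A, ha, hA⟩ := exists_one_lt_valuation_and_forall_dvd K (mul_ne_zero hb hc)
  refine ⟨a, fun x hx S hS hSu h ↦ ?_⟩
  refine valuation_prod_roots_ne_one hr hkr ha (hA b (dvd_mul_right b c)) hx hS hSu ?_
  rw [h, hA c (dvd_mul_left c b)]

lemma exists_prod_add_pow_ne_mul_prod_geomSum₂ (hk : 0 < k) (hr : 0 < r) (heven : Even (k + r))
    (hkr : k.Coprime r) {a : ℤ} (ha : a ≠ 0) {e : ℚ} (he : e ≠ 0) :
    ∃ b : ℚ, ∀ x : Fin (k + r) → K, IsRootTuple (tri k r (a : K) (b : K)) x →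
      ∀ O : Finset (Fin (k + r) × Fin (k + r)), (∀ q ∈ O, q.1 ≠ q.2) → ¬ k + r - 1 ∣ O.card →
        ∏ q ∈ O, (x q.1 + x q.2) ^ (k + r - 1) ≠ e * ∏ q ∈ O, geomSum₂ k (x q.1) (x q.2) := by
  obtain ⟨b, A, hb, hA⟩ := exists_one_lt_valuation_and_forall_dvd K
    (N := (k + r : ℕ) * a * (e.num * e.den)) (mul_ne_zero (mul_ne_zero (by omega) ha)
      (mul_ne_zero (Rat.num_ne_zero.2 he) (mod_cast e.den_ne_zero)))
  have hn := hA (k + r : ℕ) ((dvd_mul_right _ _).mul_right _)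
  have hden := hA e.den ((dvd_mul_left _ _).mul_left _)
  refine ⟨b, fun x hx O hO hcard h ↦ valuation_prod_add_pow_ne_valuation_prod_geomSum₂ hk hr heven
    hkr (mod_cast hn) (hA a ((dvd_mul_left _ _).mul_right _)) hb hx hO hcard ?_⟩
  rw [Int.cast_natCast] at hden
  rw [h, map_mul, Rat.cast_def, map_div₀, hA e.num ((dvd_mul_right _ _).mul_left _), hden,
    div_one, one_mul]

end CharZero

/-! ### Resolvents for the two kinds of relations -/

section Resolvents

open Classical in
/-- The resolvent with parameter `X` that vanishes when a nonempty proper subset of the variables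
has product `X`. -/
noncomputable def subproductResolvent (n : ℕ) : MvPolynomial (Fin n) ℚ[X] :=
  ∏ S with S.Nonempty ∧ S ≠ Finset.univ, (∏ i ∈ S, MvPolynomial.X i - MvPolynomial.C X)

lemma isSymmetric_subproductResolvent (n : ℕ) : (subproductResolvent n).IsSymmetric := by
  classical
  intro σ
  rw [subproductResolvent, map_prod]
  refine Finset.prod_equiv (Equiv.finsetCongr σ) (fun S ↦ ?_) fun S _ ↦ ?_
  · simp [← Finset.card_eq_iff_eq_univ]
  · simp [Finset.prod_map]

open Classical in
/-- The resolvent with parameter `X` that vanishes when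
`∏ (xᵢ + xⱼ) ^ (n - 1) = X * ∏ geomSum₂ k xᵢ xⱼ`, the products being over an off-diagonal set of
pairs `(i, j)` whose cardinality is not a multiple of `n - 1`. -/
noncomputable def pairResolvent (k n : ℕ) : MvPolynomial (Fin n) ℚ[X] :=
  ∏ O : Finset (Fin n × Fin n) with (∀ q ∈ O, q.1 ≠ q.2) ∧ ¬ n - 1 ∣ O.card,
    (∏ q ∈ O, (MvPolynomial.X q.1 + MvPolynomial.X q.2) ^ (n - 1) -
      MvPolynomial.C X * ∏ q ∈ O, geomSum₂ k (MvPolynomial.X q.1) (MvPolynomial.X q.2))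

lemma isSymmetric_pairResolvent (k n : ℕ) : (pairResolvent k n).IsSymmetric := by
  classical
  intro σ
  rw [pairResolvent, map_prod]
  refine Finset.prod_equiv (Equiv.finsetCongr (Equiv.prodCongr σ σ)) (fun O ↦ ?_) fun O _ ↦ ?_
  · have hoff : (∀ q ∈ O.map (σ.prodCongr σ).toEmbedding, q.1 ≠ q.2) ↔ ∀ q ∈ O, q.1 ≠ q.2 := by
      simp only [Finset.forall_mem_map]
      simp
    simp only [Finset.mem_filter_univ, Equiv.finsetCongr_apply, hoff, Finset.card_map]
  · have hmap (x y : MvPolynomial (Fin n) ℚ[X]) :=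
      map_geomSum₂ (MvPolynomial.rename σ).toRingHom k x y
    simp only [AlgHom.toRingHom_eq_coe, RingHom.coe_coe] at hmap
    simp [Finset.prod_map, hmap]

variable {K : Type*} [Field K] [CharZero K] {k n : ℕ} {e : ℚ} {x : Fin n → K}

lemma eval₂_subproductResolvent_eq_zero_iff :
    MvPolynomial.eval₂ ((algebraMap ℚ K).comp (evalRingHom e)) x (subproductResolvent n) = 0 ↔
      ∃ S : Finset (Fin n), S.Nonempty ∧ S ≠ Finset.univ ∧ ∏ i ∈ S, x i = e := by
  rw [subproductResolvent, MvPolynomial.eval₂_prod, Finset.prod_eq_zero_iff]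
  simp [MvPolynomial.eval₂_prod, sub_eq_zero, and_assoc]

lemma eval₂_pairResolvent_eq_zero_iff :
    MvPolynomial.eval₂ ((algebraMap ℚ K).comp (evalRingHom e)) x (pairResolvent k n) = 0 ↔
      ∃ O : Finset (Fin n × Fin n), (∀ q ∈ O, q.1 ≠ q.2) ∧ ¬ n - 1 ∣ O.card ∧
        ∏ q ∈ O, (x q.1 + x q.2) ^ (n - 1) = e * ∏ q ∈ O, geomSum₂ k (x q.1) (x q.2) := by
  have hmap := map_geomSum₂ (MvPolynomial.eval₂Hom ((algebraMap ℚ K).comp (evalRingHom e)) x) k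
  simp only [MvPolynomial.coe_eval₂Hom] at hmap
  rw [pairResolvent, MvPolynomial.eval₂_prod, Finset.prod_eq_zero_iff]
  simp [MvPolynomial.eval₂_prod, MvPolynomial.eval₂_pow, MvPolynomial.eval₂_mul, hmap, sub_eq_zero,
    and_assoc]

end Resolvents

section Counting

variable (K : Type*) [Field K] [CharZero K] [IsAlgClosed K] {k r : ℕ}

lemma exists_card_le_of_prod_roots_eq (hr : 0 < r) (hkr : k.Coprime r) :
    ∃ D : ℕ, ∀ b c : ℤ, b ≠ 0 → c ≠ 0 → ∀ T : Finset ℤ,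
      (∀ a ∈ T, ∃ x : Fin (k + r) → K, IsRootTuple (tri k r (a : K) (b : K)) x ∧
        ∃ S : Finset (Fin (k + r)), S.Nonempty ∧ S ≠ Finset.univ ∧ ∏ i ∈ S, x i = c) →
      T.card ≤ D := by
  obtain ⟨D, hD⟩ :=
    exists_card_le_of_eval₂_eq_zero (K := K) (isSymmetric_subproductResolvent (k + r))
  refine ⟨D, fun b c hb hc T hT ↦ hD (evalRingHom c) (tri k r X (C (b : ℚ)))
    (natDegree_coeff_tri_le natDegree_X_le (by simp)) ?_ T fun a ha ↦ ?_⟩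
  · obtain ⟨a, ha⟩ := exists_prod_roots_ne K hr hkr hb hc
    obtain ⟨x, hx⟩ := exists_isRootTuple (monic_tri hr (a : K) (b : K))
      (IsAlgClosed.splits _) (natDegree_tri hr _ _)
    refine ⟨a, x, by simpa [map_tri] using hx, fun h ↦ ?_⟩
    obtain ⟨S, hS, hSu, hprod⟩ := eval₂_subproductResolvent_eq_zero_iff.1 h
    exact ha x hx S hS hSu (by simpa using hprod)
  · obtain ⟨x, hx, S, hS, hSu, hprod⟩ := hT a ha
    exact ⟨x, by simpa [map_tri] using hx,
      eval₂_subproductResolvent_eq_zero_iff.2 ⟨S, hS, hSu, by simpa using hprod⟩⟩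

lemma exists_card_le_of_prod_add_pow_eq (hk : 0 < k) (hr : 0 < r) (heven : Even (k + r))
    (hkr : k.Coprime r) :
    ∃ D : ℕ, ∀ (a : ℤ) (e : ℚ), a ≠ 0 → e ≠ 0 → ∀ T : Finset ℤ,
      (∀ b ∈ T, ∃ x : Fin (k + r) → K, IsRootTuple (tri k r (a : K) (b : K)) x ∧
        ∃ O : Finset (Fin (k + r) × Fin (k + r)), (∀ q ∈ O, q.1 ≠ q.2) ∧ ¬ k + r - 1 ∣ O.card ∧
          ∏ q ∈ O, (x q.1 + x q.2) ^ (k + r - 1) = e * ∏ q ∈ O, geomSum₂ k (x q.1) (x q.2)) →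
      T.card ≤ D := by
  obtain ⟨D, hD⟩ := exists_card_le_of_eval₂_eq_zero (K := K) (isSymmetric_pairResolvent k (k + r))
  refine ⟨D, fun a e ha he T hT ↦ hD (evalRingHom e) (tri k r (C (a : ℚ)) X)
    (natDegree_coeff_tri_le (by simp) natDegree_X_le) ?_ T fun b hb ↦ ?_⟩
  · obtain ⟨b, hb⟩ := exists_prod_add_pow_ne_mul_prod_geomSum₂ K hk hr heven hkr ha he
    obtain ⟨x, hx⟩ := exists_isRootTuple (monic_tri hr (a : K) (b : K))
      (IsAlgClosed.splits _) (natDegree_tri hr _ _)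
    refine ⟨b, x, by simpa [map_tri] using hx, fun h ↦ ?_⟩
    obtain ⟨O, hO, hcard, hprod⟩ := eval₂_pairResolvent_eq_zero_iff.1 h
    exact hb x hx O hO hcard hprod
  · obtain ⟨x, hx, O, hO, hcard, hprod⟩ := hT b hb
    exact ⟨x, by simpa [map_tri] using hx,
      eval₂_pairResolvent_eq_zero_iff.2 ⟨O, hO, hcard, hprod⟩⟩

end Counting

/-! ### Trinomials with an integral subproduct of roots -/

/-- The complex roots of `X ^ (k + r) + a X ^ k + b` have a nonempty proper subproduct that is an
integer divisor of `b`. This holds if `b ≠ 0` and the Galois group is intransitive. -/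
def HasIntSubproduct (k r : ℕ) (a b : ℤ) : Prop :=
  ∃ x : Fin (k + r) → ℂ, IsRootTuple (tri k r (a : ℂ) (b : ℂ)) x ∧
    ∃ S : Finset (Fin (k + r)), S.Nonempty ∧ S ≠ Finset.univ ∧ ∃ c : ℤ, c ∣ b ∧ ∏ i ∈ S, x i = c

lemma card_int_divisors (z : ℤ) : z.divisors.card = 2 * z.natAbs.divisors.card := by
  rw [Int.divisors, Finset.card_disjUnion, Finset.card_map, Finset.card_map, two_mul]

lemma exists_card_le_of_hasIntSubproduct {k r : ℕ} (hr : 0 < r) (hkr : k.Coprime r) {ε : ℝ}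
    (hε : 0 < ε) :
    ∃ C : ℝ, ∀ (b : ℤ) (H : ℝ), b ≠ 0 → |(b : ℝ)| ≤ H → ∀ T : Finset ℤ,
      (∀ a ∈ T, HasIntSubproduct k r a b) → T.card ≤ C * H ^ ε := by
  obtain ⟨D, hD⟩ := exists_card_le_of_prod_roots_eq ℂ hr hkr
  obtain ⟨C, hC, hdiv⟩ := exists_card_divisors_le hε
  refine ⟨D * (2 * C), fun b H hb hbH T hT ↦ ?_⟩
  choose! x hx S hS hSu c hcb hprod using hT
  have hcard : T.card ≤ D * b.divisors.card := by
    refine Finset.card_le_mul_card_image_of_maps_to (f := c)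
      (fun a ha ↦ Int.mem_divisors.2 ⟨hcb a ha, hb⟩) D fun c₀ hc₀ ↦ ?_
    refine hD b c₀ hb (ne_zero_of_dvd_ne_zero hb (Int.dvd_of_mem_divisors hc₀)) _ fun a ha ↦ ?_
    obtain ⟨haT, rfl⟩ := Finset.mem_filter.1 ha
    exact ⟨x a, hx a haT, S a, hS a haT, hSu a haT, hprod a haT⟩
  rw [card_int_divisors] at hcard
  calc (T.card : ℝ) ≤ D * (2 * b.natAbs.divisors.card) := mod_cast hcard
    _ ≤ D * (2 * (C * b.natAbs ^ ε)) := by gcongr; exact hdiv _ (Int.natAbs_ne_zero.2 hb)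
    _ ≤ D * (2 * (C * H ^ ε)) := by
        rw [Nat.cast_natAbs, Int.cast_abs]
        gcongr
    _ = D * (2 * C) * H ^ ε := by ring

/-! ### Trinomials whose pairs of roots have comparable integral products -/

section Bounds

variable {k r : ℕ}

lemma norm_root_le (hr : 0 < r) {a b x : ℂ} {H : ℝ} (hH : 1 ≤ H) (ha : ‖a‖ ≤ H)
    (hb : ‖b‖ ≤ H) (hx : x ^ (k + r) + a * x ^ k + b = 0) : ‖x‖ ≤ 2 * H := by
  by_contra! h
  have h1 : 1 ≤ ‖x‖ := by linarith
  have hlt : ‖x‖ ^ (k + r) < ‖x‖ ^ (k + r) := calc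
    ‖x‖ ^ (k + r) = ‖a * x ^ k + b‖ := by
      rw [← norm_pow, ← norm_neg]
      congr 1
      linear_combination -hx
    _ ≤ ‖a‖ * ‖x‖ ^ k + ‖b‖ := by
      rw [← norm_pow, ← norm_mul]
      exact norm_add_le _ _
    _ ≤ H * ‖x‖ ^ k + H * ‖x‖ ^ k := by
      gcongr
      exact hb.trans (le_mul_of_one_le_right (by linarith) (one_le_pow₀ h1))
    _ = 2 * H * ‖x‖ ^ k := by ring
    _ < ‖x‖ * ‖x‖ ^ k := by gcongr
    _ ≤ ‖x‖ ^ (k + r) := by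
      rw [← pow_succ']
      exact pow_le_pow_right₀ h1 (by omega)
  exact hlt.false

lemma norm_geomSum₂_le {x y : ℂ} {B : ℝ} (hx : ‖x‖ ≤ B) (hy : ‖y‖ ≤ B) :
    ‖geomSum₂ k x y‖ ≤ k * B ^ (k - 1) := by
  have hB : 0 ≤ B := (norm_nonneg x).trans hx
  calc ‖geomSum₂ k x y‖ ≤ ∑ _i ∈ Finset.range k, B ^ (k - 1) := by
        refine norm_sum_le_of_le _ fun i hi ↦ ?_
        rw [← Nat.add_sub_of_le (Nat.le_sub_one_of_lt (Finset.mem_range.1 hi)),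
          Nat.add_sub_cancel_left, norm_mul, norm_pow, norm_pow, pow_add]
        gcongr
    _ = k * B ^ (k - 1) := by simp

lemma norm_geomSum₂_le_two_mul_pow (hr : 0 < r) {x y : ℂ} {B : ℝ} (hB : 1 ≤ B)
    (hx : ‖x‖ ≤ B) (hy : ‖y‖ ≤ B) : ‖geomSum₂ k x y‖ ≤ (2 * B) ^ (k + r - 1) := by
  have hk2 : (k : ℝ) ≤ 2 ^ (k - 1) := by
    have := Nat.lt_two_pow_self (n := k - 1)
    exact_mod_cast show k ≤ 2 ^ (k - 1) by omega
  calc ‖geomSum₂ k x y‖ ≤ k * B ^ (k - 1) := norm_geomSum₂_le hx hy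
    _ ≤ 2 ^ (k - 1) * B ^ (k - 1) := by gcongr
    _ = (2 * B) ^ (k - 1) := (mul_pow _ _ _).symm
    _ ≤ (2 * B) ^ (k + r - 1) := pow_le_pow_right₀ (by linarith) (by omega)

lemma norm_prod_le_pow_mul_card {ι : Type*} [Fintype ι] (s : Finset ι) {f : ι → ℂ} {B : ℝ}
    (hB : 1 ≤ B) {m : ℕ} (hf : ∀ i ∈ s, ‖f i‖ ≤ B ^ m) :
    ‖∏ i ∈ s, f i‖ ≤ B ^ (m * Fintype.card ι) := by
  calc ‖∏ i ∈ s, f i‖ = ∏ i ∈ s, ‖f i‖ := norm_prod _ _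
    _ ≤ ∏ _i ∈ s, B ^ m := Finset.prod_le_prod (fun _ _ ↦ norm_nonneg _) hf
    _ = B ^ (m * s.card) := by rw [Finset.prod_const, pow_mul]
    _ ≤ B ^ (m * Fintype.card ι) := by
        gcongr
        exact Finset.card_le_univ s

end Bounds

section Ratios

lemma mem_factoredNumbersUpTo_of_mul_eq {N Z m d u v : ℕ} (hN : N ≠ 0) (hm : m ≠ 0) (hd : d ≠ 0)
    (hu : u ≠ 0) (hv : v ≠ 0) (hcop : m.Coprime d) (h : m * v = u * d) (huZ : u ≤ Z)
    (huv : ∀ p : ℕ, p.Prime → ¬ p ∣ N → u.factorization p = v.factorization p) :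
    m ∈ factoredNumbersUpTo N.primeFactors Z := by
  have hmu : m ∣ u := hcop.dvd_of_dvd_mul_right ⟨v, h.symm⟩
  rw [mem_factoredNumbersUpTo]
  refine ⟨⟨hm.bot_lt, (Nat.le_of_dvd hu.bot_lt hmu).trans huZ⟩, fun p hp ↦ ?_⟩
  obtain ⟨hpp, hpm, -⟩ := Nat.mem_primeFactors.1 hp
  refine Nat.mem_primeFactors.2 ⟨hpp, ?_, hN⟩
  by_contra hpN
  have hfac := congrArg (fun t ↦ t.factorization p) h
  simp only [Nat.factorization_mul hm hv, Nat.factorization_mul hu hd, Finsupp.add_apply,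
    huv p hpp hpN] at hfac
  have hpos := hpp.factorization_pos_of_dvd hm hpm
  have hpd : p ∣ d := Nat.dvd_of_factorization_pos (by omega : d.factorization p ≠ 0)
  exact hpp.not_dvd_one (hcop ▸ Nat.dvd_gcd hpm hpd)

lemma num_and_den_mem_factoredNumbersUpTo {N Z : ℕ} (hN : N ≠ 0) {U V : ℤ} (hU : U ≠ 0)
    (hV : V ≠ 0) (hUZ : U.natAbs ≤ Z) (hVZ : V.natAbs ≤ Z)
    (hUV : ∀ p : ℕ, p.Prime → ¬ p ∣ N → U.natAbs.factorization p = V.natAbs.factorization p) :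
    (U / V : ℚ).num.natAbs ∈ factoredNumbersUpTo N.primeFactors Z ∧
      (U / V : ℚ).den ∈ factoredNumbersUpTo N.primeFactors Z := by
  set e : ℚ := U / V with he
  have hV' : (V : ℚ) ≠ 0 := mod_cast hV
  have hnum : e.num.natAbs ≠ 0 :=
    Int.natAbs_ne_zero.2 (Rat.num_ne_zero.2 (div_ne_zero (mod_cast hU) hV'))
  have hmul : e.num * V = U * e.den := by
    rw [← Rat.num_div_den e, div_eq_div_iff (mod_cast e.den_ne_zero) hV'] at he
    exact_mod_cast he
  replace hmul : e.num.natAbs * V.natAbs = U.natAbs * e.den := by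
    simpa [Int.natAbs_mul] using congrArg Int.natAbs hmul
  rw [← Int.natAbs_ne_zero] at hU hV
  exact ⟨mem_factoredNumbersUpTo_of_mul_eq hN hnum e.den_ne_zero hU hV e.reduced hmul hUZ hUV,
    mem_factoredNumbersUpTo_of_mul_eq hN e.den_ne_zero hnum hV hU e.reduced.symm
      (by rw [mul_comm, ← hmul, mul_comm]) hVZ fun p hp hpN ↦ (hUV p hp hpN).symm⟩

lemma card_le_of_num_mem_of_den_mem {s : Finset ℕ} {T : Finset ℚ}
    (hT : ∀ e ∈ T, e.num.natAbs ∈ s ∧ e.den ∈ s) : T.card ≤ 2 * s.card ^ 2 := by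
  have hsub : T ⊆ ((({1, -1} : Finset ℤ) ×ˢ s ×ˢ s).image fun m ↦ (m.1 * m.2.1 / m.2.2 : ℚ)) := by
    intro e he
    obtain ⟨hnum, hden⟩ := hT e he
    rw [Finset.mem_image]
    rcases Int.natAbs_eq e.num with h | h
    · refine ⟨(1, e.num.natAbs, e.den), by simp [hnum, hden], ?_⟩
      conv_rhs => rw [← Rat.num_div_den e, h]
      simp
    · refine ⟨(-1, e.num.natAbs, e.den), by simp [hnum, hden], ?_⟩
      conv_rhs => rw [← Rat.num_div_den e, h]
      simp
  refine (Finset.card_le_card hsub).trans (Finset.card_image_le.trans_eq ?_)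
  rw [Finset.card_product, Finset.card_product, sq]
  rfl

lemma exists_card_factoredNumbersUpTo_sq_le {ε : ℝ} (hε : 0 < ε) {A : ℝ} (hA : 0 ≤ A) {m : ℕ}
    (hm : m ≠ 0) :
    ∃ C : ℝ, ∀ (H : ℝ) (N Z : ℕ), 0 ≤ H → N ≠ 0 → (N * Z : ℝ) ≤ A * H ^ m →
      ((factoredNumbersUpTo N.primeFactors Z).card : ℝ) ^ 2 ≤ C * H ^ ε := by
  set δ : ℝ := ε / (2 * m) with hδ
  obtain ⟨C, -, hcard⟩ := exists_card_factoredNumbersUpTo_primeFactors_le (ε := δ) (by positivity)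
  refine ⟨C ^ 2 * A ^ (2 * δ), fun H N Z hH hN hNZ ↦ ?_⟩
  calc ((factoredNumbersUpTo N.primeFactors Z).card : ℝ) ^ 2 ≤ (C * N ^ δ * Z ^ δ) ^ 2 := by
        gcongr
        exact hcard N Z hN
    _ = C ^ 2 * (N * Z : ℝ) ^ (2 * δ) := by
        rw [mul_assoc, mul_pow, ← Real.mul_rpow (by positivity) (by positivity), mul_comm 2 δ,
          Real.rpow_mul (by positivity), Real.rpow_two]
    _ ≤ C ^ 2 * (A * H ^ m) ^ (2 * δ) := by gcongr
    _ = C ^ 2 * A ^ (2 * δ) * H ^ ε := by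
        rw [Real.mul_rpow hA (by positivity), ← Real.rpow_natCast H, ← Real.rpow_mul hH,
          ← mul_assoc]
        congr 2
        rw [hδ]
        field_simp

lemma exists_card_factoredNumbersUpTo_floor_sq_le {k r : ℕ} (hk : 0 < k) (hr : 0 < r) (M : ℕ)
    {ε : ℝ} (hε : 0 < ε) :
    ∃ C : ℝ, ∀ (a : ℤ) (H : ℝ), a ≠ 0 → 0 ≤ H → |(a : ℝ)| ≤ H →
      ((factoredNumbersUpTo (2 * k * r * a.natAbs).primeFactors ⌊(4 * H) ^ M⌋₊).card : ℝ) ^ 2 ≤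
        C * H ^ ε := by
  obtain ⟨C, hC⟩ := exists_card_factoredNumbersUpTo_sq_le hε
    (A := 2 * k * r * 4 ^ M) (by positivity) M.succ_ne_zero
  refine ⟨C, fun a H ha hH haH ↦ hC H _ _ hH (by positivity) ?_⟩
  calc ((2 * k * r * a.natAbs : ℕ) * ⌊(4 * H) ^ M⌋₊ : ℝ) ≤ 2 * k * r * H * (4 * H) ^ M := by
        gcongr
        · simpa using mul_le_mul_of_nonneg_left haH (by positivity : (0 : ℝ) ≤ 2 * k * r)
        · exact Nat.floor_le (by positivity)
    _ = 2 * k * r * 4 ^ M * H ^ (M + 1) := by ring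

end Ratios

/-- For some list `x` of the complex roots of `X ^ (k + r) + a X ^ k + b` and some off-diagonal set
`O` of pairs of indices whose cardinality is not a multiple of `k + r - 1`, the products over `O`
of `(xᵢ + xⱼ) ^ (k + r - 1)` and of `geomSum₂ k xᵢ xⱼ` are nonzero integers that agree up to primes
dividing `2kra`. This holds if `a, b ≠ 0` and the Galois group is transitive but not doubly
transitive. -/
def HasIntPairProducts (k r : ℕ) (a b : ℤ) : Prop :=
  ∃ x : Fin (k + r) → ℂ, IsRootTuple (tri k r (a : ℂ) (b : ℂ)) x ∧
    ∃ O : Finset (Fin (k + r) × Fin (k + r)), (∀ q ∈ O, q.1 ≠ q.2) ∧ ¬ k + r - 1 ∣ O.card ∧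
      ∃ U V : ℤ, U ≠ 0 ∧ V ≠ 0 ∧ ∏ q ∈ O, (x q.1 + x q.2) ^ (k + r - 1) = U ∧
        ∏ q ∈ O, geomSum₂ k (x q.1) (x q.2) = V ∧
        ∀ p : ℕ, p.Prime → ¬ p ∣ 2 * k * r * a.natAbs →
          U.natAbs.factorization p = V.natAbs.factorization p

lemma natAbs_le_floor_of_norm_intCast_le {z : ℤ} {B : ℝ} (h : ‖(z : ℂ)‖ ≤ B) : z.natAbs ≤ ⌊B⌋₊ := by
  refine Nat.le_floor ?_
  rwa [Nat.cast_natAbs, Int.cast_abs, ← Complex.norm_intCast]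

lemma norm_prod_pairs_le {k r : ℕ} (hr : 0 < r) {a b : ℂ} {H : ℝ} (hH : 1 ≤ H) (ha : ‖a‖ ≤ H)
    (hb : ‖b‖ ≤ H) {x : Fin (k + r) → ℂ} (hx : IsRootTuple (tri k r a b) x)
    (O : Finset (Fin (k + r) × Fin (k + r))) :
    ‖∏ q ∈ O, (x q.1 + x q.2) ^ (k + r - 1)‖ ≤ (4 * H) ^ ((k + r - 1) * ((k + r) * (k + r))) ∧
      ‖∏ q ∈ O, geomSum₂ k (x q.1) (x q.2)‖ ≤ (4 * H) ^ ((k + r - 1) * ((k + r) * (k + r))) := by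
  have hroot (i) : ‖x i‖ ≤ 2 * H := norm_root_le hr hH ha hb (hx.pow_add_mul_pow_add i)
  have hcard : Fintype.card (Fin (k + r) × Fin (k + r)) = (k + r) * (k + r) := by simp
  rw [← hcard]
  constructor
  · refine norm_prod_le_pow_mul_card O (by linarith) fun q _ ↦ ?_
    rw [norm_pow]
    gcongr
    linarith [norm_add_le (x q.1) (x q.2), hroot q.1, hroot q.2]
  · refine norm_prod_le_pow_mul_card O (by linarith) fun q _ ↦ ?_
    refine (norm_geomSum₂_le_two_mul_pow hr (by linarith) (hroot q.1) (hroot q.2)).trans_eq ?_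
    ring

lemma exists_card_le_of_hasIntPairProducts {k r : ℕ} (hk : 0 < k) (hr : 0 < r)
    (heven : Even (k + r)) (hkr : k.Coprime r) {ε : ℝ} (hε : 0 < ε) :
    ∃ C : ℝ, ∀ (a : ℤ) (H : ℝ), a ≠ 0 → 1 ≤ H → |(a : ℝ)| ≤ H → ∀ T : Finset ℤ,
      (∀ b ∈ T, |(b : ℝ)| ≤ H ∧ HasIntPairProducts k r a b) → T.card ≤ C * H ^ ε := by
  obtain ⟨D, hD⟩ := exists_card_le_of_prod_add_pow_eq ℂ hk hr heven hkr
  set M := (k + r - 1) * ((k + r) * (k + r))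
  obtain ⟨C, hC⟩ := exists_card_factoredNumbersUpTo_floor_sq_le hk hr M hε
  refine ⟨D * (2 * C), fun a H ha hH haH T hT ↦ ?_⟩
  choose! hbH x hx O hO hcard U V hU hV hUprod hVprod hUV using hT
  set s := factoredNumbersUpTo (2 * k * r * a.natAbs).primeFactors ⌊(4 * H) ^ M⌋₊
  have hmem : ∀ b ∈ T, (U b / V b : ℚ).num.natAbs ∈ s ∧ (U b / V b : ℚ).den ∈ s := by
    intro b hb
    obtain ⟨hUle, hVle⟩ := norm_prod_pairs_le hr hH (by rwa [Complex.norm_intCast])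
      (by simpa only [Complex.norm_intCast] using hbH b hb) (hx b hb) (O b)
    rw [hUprod b hb] at hUle
    rw [hVprod b hb] at hVle
    exact num_and_den_mem_factoredNumbersUpTo (by positivity) (hU b hb) (hV b hb)
      (natAbs_le_floor_of_norm_intCast_le hUle) (natAbs_le_floor_of_norm_intCast_le hVle)
      (hUV b hb)
  have hfib : T.card ≤ D * (T.image fun b ↦ (U b / V b : ℚ)).card := by
    refine Finset.card_le_mul_card_image T D fun e he ↦ ?_
    have he0 : e ≠ 0 := by
      obtain ⟨b, hb, rfl⟩ := Finset.mem_image.1 he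
      exact div_ne_zero (mod_cast hU b hb) (mod_cast hV b hb)
    refine hD a e ha he0 _ fun b hb ↦ ?_
    obtain ⟨hbT, rfl⟩ := Finset.mem_filter.1 hb
    refine ⟨x b, hx b hbT, O b, hO b hbT, hcard b hbT, ?_⟩
    have hV0 : (V b : ℂ) ≠ 0 := mod_cast hV b hbT
    rw [hUprod b hbT, hVprod b hbT, Rat.cast_div, Rat.cast_intCast, Rat.cast_intCast,
      div_mul_cancel₀ _ hV0]
  have himage : (T.image fun b ↦ (U b / V b : ℚ)).card ≤ 2 * s.card ^ 2 :=
    card_le_of_num_mem_of_den_mem (Finset.forall_mem_image.2 hmem)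
  calc (T.card : ℝ) ≤ D * (2 * s.card ^ 2) := mod_cast hfib.trans (by gcongr)
    _ ≤ D * (2 * (C * H ^ ε)) := by
        gcongr
        exact hC a H ha (by linarith) haH
    _ = D * (2 * C) * H ^ ε := by ring

/-! ### Permutation groups other than the symmetric group -/

section PermGroup

variable {α : Type*} {H : Subgroup (Equiv.Perm α)}

lemma eq_top_of_isSwap_mem [Finite α] [DecidableEq α] {s : Equiv.Perm α} (hs : s.IsSwap)
    (hsH : s ∈ H) (h : ∀ i j i' j', i ≠ j → i' ≠ j' → ∃ g ∈ H, g i = i' ∧ g j = j') : H = ⊤ := by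
  obtain ⟨i, j, hij, rfl⟩ := hs
  rw [eq_top_iff, ← Equiv.Perm.closure_isSwap, Subgroup.closure_le]
  rintro _ ⟨i', j', hij', rfl⟩
  obtain ⟨g, hg, rfl, rfl⟩ := h i j i' j' hij hij'
  rw [Equiv.swap_apply_apply]
  exact H.mul_mem (H.mul_mem hg hsH) (H.inv_mem hg)

variable [Fintype α]

lemma exists_invariant_finset {i j : α} (h : ∀ g ∈ H, g i ≠ j) :
    ∃ S : Finset α, S.Nonempty ∧ S ≠ Finset.univ ∧ ∀ g ∈ H, ∀ l ∈ S, g l ∈ S := by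
  classical
  refine ⟨Finset.univ.filter fun l ↦ ∃ g ∈ H, g i = l,
    ⟨i, by simpa using ⟨1, H.one_mem, rfl⟩⟩, ?_, ?_⟩
  · rw [Ne, Finset.eq_univ_iff_forall, not_forall]
    exact ⟨j, by simpa using h⟩
  · simp only [Finset.mem_filter_univ]
    rintro g hg _ ⟨g', hg', rfl⟩
    exact ⟨g * g', H.mul_mem hg hg', rfl⟩

lemma card_eq_card_mul_card_filter_fst [DecidableEq α] (htrans : ∀ i j, ∃ g ∈ H, g i = j)
    {O : Finset (α × α)} (hO : ∀ g ∈ H, ∀ q ∈ O, (g q.1, g q.2) ∈ O) (i : α) :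
    O.card = Fintype.card α * (O.filter fun q ↦ q.1 = i).card := by
  have hle (l l' : α) : (O.filter fun q ↦ q.1 = l).card ≤ (O.filter fun q ↦ q.1 = l').card := by
    obtain ⟨g, hg, rfl⟩ := htrans l l'
    refine Finset.card_le_card_of_injOn (fun q ↦ (g q.1, g q.2)) (fun q hq ↦ ?_) ?_
    · rw [Finset.mem_coe, Finset.mem_filter] at hq
      simpa [hq.2] using hO g hg q hq.1
    · exact (g.injective.prodMap g.injective).injOn
  rw [Finset.card_eq_sum_card_fiberwise (f := Prod.fst) (t := Finset.univ) (by simp),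
    Finset.sum_congr rfl fun l _ ↦ (hle l i).antisymm (hle i l), Finset.sum_const,
    Finset.card_univ, smul_eq_mul]

lemma exists_invariant_offDiag_finset (htrans : ∀ i j, ∃ g ∈ H, g i = j) {i j i' j' : α}
    (hij : i ≠ j) (hij' : i' ≠ j') (h : ∀ g ∈ H, g i = i' → g j ≠ j') :
    ∃ O : Finset (α × α), (∀ q ∈ O, q.1 ≠ q.2) ∧ ¬ Fintype.card α - 1 ∣ O.card ∧
      ∀ g ∈ H, ∀ q ∈ O, (g q.1, g q.2) ∈ O := by
  classical
  set O : Finset (α × α) := {q | ∃ g ∈ H, (g i, g j) = q} with hO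
  have hoff : ∀ q ∈ O, q.1 ≠ q.2 := by
    simp only [hO, Finset.mem_filter_univ]
    rintro _ ⟨g, -, rfl⟩
    exact g.injective.ne hij
  have hinv : ∀ g ∈ H, ∀ q ∈ O, (g q.1, g q.2) ∈ O := by
    simp only [hO, Finset.mem_filter_univ]
    rintro g hg _ ⟨g', hg', rfl⟩
    exact ⟨g * g', H.mul_mem hg hg', rfl⟩
  have hcard := card_eq_card_mul_card_filter_fst htrans hinv i'
  have hpos : 0 < (O.filter fun q ↦ q.1 = i').card := by
    obtain ⟨g, hg, hgi⟩ := htrans i i'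
    exact Finset.card_pos.2 ⟨(g i, g j), by simpa [hO, hgi] using ⟨g, hg, hgi, rfl⟩⟩
  have hlt : (O.filter fun q ↦ q.1 = i').card < Fintype.card α - 1 := by
    rw [← Finset.card_univ, ← Finset.card_erase_of_mem (Finset.mem_univ i')]
    refine (Finset.card_le_card_of_injOn (t := (Finset.univ.erase i').erase j') Prod.snd
      (fun q hqO ↦ ?_) fun q hq q' hq' heq ↦ ?_).trans_lt
      (Finset.card_erase_lt_of_mem (by simpa using hij'.symm))
    · obtain ⟨hq, rfl⟩ := Finset.mem_filter.1 (Finset.mem_coe.1 hqO)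
      refine Finset.mem_erase.2 ⟨fun heq ↦ ?_, by simpa using (hoff q hq).symm⟩
      obtain ⟨g, hg, rfl⟩ := (Finset.mem_filter_univ _).1 hq
      exact h g hg rfl heq
    · exact Prod.ext ((Finset.mem_filter.1 hq).2.trans (Finset.mem_filter.1 hq').2.symm) heq
  refine ⟨O, hoff, fun hdvd ↦ ?_, hinv⟩
  rw [hcard] at hdvd
  have hcop : (Fintype.card α - 1).Coprime (Fintype.card α) :=
    (Nat.coprime_self_sub_left (by omega)).2 (Nat.coprime_one_left _)
  exact Nat.not_dvd_of_pos_of_lt hpos hlt (hcop.dvd_of_dvd_mul_left hdvd)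

lemma exists_invariant_or_forall_not_isSwap [DecidableEq α] (hH : H ≠ ⊤) :
    (∃ S : Finset α, S.Nonempty ∧ S ≠ Finset.univ ∧ ∀ g ∈ H, ∀ l ∈ S, g l ∈ S) ∨
      (∃ O : Finset (α × α), (∀ q ∈ O, q.1 ≠ q.2) ∧ ¬ Fintype.card α - 1 ∣ O.card ∧
        ∀ g ∈ H, ∀ q ∈ O, (g q.1, g q.2) ∈ O) ∨
      ∀ g ∈ H, ¬ g.IsSwap := by
  by_cases htrans : ∀ i j, ∃ g ∈ H, g i = j
  · by_cases h2trans : ∀ i j i' j', i ≠ j → i' ≠ j' → ∃ g ∈ H, g i = i' ∧ g j = j'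
    · exact .inr (.inr fun g hg hswap ↦ hH (eq_top_of_isSwap_mem hswap hg h2trans))
    · push Not at h2trans
      obtain ⟨i, j, i', j', hij, hij', h⟩ := h2trans
      exact .inr (.inl (exists_invariant_offDiag_finset htrans hij hij' h))
  · push Not at htrans
    obtain ⟨i, j, h⟩ := htrans
    exact .inl (exists_invariant_finset h)

end PermGroup

/-! ### The Galois action on the roots -/

namespace IsRootTuple

variable {R K : Type*} [CommRing R] {n : ℕ} {x : Fin n → K}

lemma mem_range [CommRing K] [IsDomain K] {f : K[X]} (hx : IsRootTuple f x) {z : K}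
    (hz : f.eval z = 0) : z ∈ Set.range x := by
  rw [← hx, eval_prod, Finset.prod_eq_zero_iff] at hz
  obtain ⟨i, -, hi⟩ := hz
  exact ⟨i, by simpa [sub_eq_zero, eq_comm] using hi⟩

lemma exists_perm [CommRing K] [IsDomain K] [Algebra R K] {f : R[X]}
    (hx : IsRootTuple (f.map (algebraMap R K)) x) (hinj : Function.Injective x) :
    ∃ φ : (K ≃ₐ[R] K) →* Equiv.Perm (Fin n), ∀ σ i, x (φ σ i) = σ (x i) := by
  have hroot (σ : K ≃ₐ[R] K) (i : Fin n) : ∃ j, x j = σ (x i) := hx.mem_range <| by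
    have h := congrArg σ (hx.eval_eq_zero i)
    rwa [map_zero, eval_map_algebraMap, ← aeval_algHom_apply, ← eval_map_algebraMap] at h
  choose j hj using hroot
  let ψ : (K ≃ₐ[R] K) →* Function.End (Fin n) :=
    { toFun := j
      map_one' := funext fun i ↦ hinj (hj 1 i)
      map_mul' σ τ := funext fun i ↦ hinj <| by
        rw [hj, AlgEquiv.mul_apply, ← hj τ, ← hj σ]
        rfl }
  exact ⟨ψ.toHomPerm, hj⟩

lemma exists_of_map [IsDomain R] [IsIntegrallyClosed R] [Field K] [Algebra R K]
    [IsFractionRing R K] {f : R[X]} (hx : IsRootTuple (f.map (algebraMap R K)) x) (hf : f.Monic) :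
    ∃ y : Fin n → R, IsRootTuple f y ∧ ∀ i, algebraMap R K (y i) = x i := by
  have hint (i : Fin n) : ∃ y, algebraMap R K y = x i :=
    IsIntegrallyClosed.isIntegral_iff.1
      ⟨f, hf, by rw [← eval_map]; exact hx.eval_eq_zero i⟩
  choose y hy using hint
  refine ⟨y, map_injective _ (IsFractionRing.injective R K) ?_, hy⟩
  rw [← hx, Polynomial.map_prod]
  simp [hy]

end IsRootTuple

lemma exists_intCast_eq_of_forall_apply_eq {K : Type*} [Field K] [Algebra ℚ K]
    [FiniteDimensional ℚ K] [IsGalois ℚ K] {z : K} (hz : IsIntegral ℤ z)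
    (h : ∀ σ : K ≃ₐ[ℚ] K, σ z = z) : ∃ m : ℤ, z = m := by
  obtain ⟨q, rfl⟩ := IntermediateField.mem_bot.1 ((IsGalois.mem_bot_iff_fixed z).2 h)
  rw [isIntegral_algebraMap_iff (algebraMap ℚ K).injective] at hz
  obtain ⟨m, rfl⟩ := IsIntegrallyClosed.isIntegral_iff.1 hz
  exact ⟨m, by simp⟩

/-! ### Ramification -/

section Ramification

open IsDedekindDomain NumberField

lemma exists_mem_inertia_or_natCast_notMem_sq (K : Type*) [Field K] [NumberField K] [IsGalois ℚ K]
    {p : ℕ} (hp : p.Prime) :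
    ∃ P : HeightOneSpectrum (𝓞 K), (p : 𝓞 K) ∈ P.asIdeal ∧
      ((∃ σ ∈ P.asIdeal.inertia (K ≃ₐ[ℚ] K), σ ≠ 1) ∨ (p : 𝓞 K) ∉ P.asIdeal ^ 2) := by
  set I : Ideal ℤ := Ideal.span {(p : ℤ)} with hI
  have : I.IsPrime := (Ideal.span_singleton_prime (by simpa using hp.ne_zero)).2
    (Nat.prime_iff_prime_int.1 hp)
  have : I.IsMaximal := Ideal.IsPrime.isMaximal ‹_› (by simpa [hI] using hp.ne_zero)
  obtain ⟨P, hP, hPI⟩ := Ideal.exists_maximal_ideal_liesOver_of_isIntegral (S := 𝓞 K) I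
  have hmap : I.map (algebraMap ℤ (𝓞 K)) = Ideal.span {(p : 𝓞 K)} := by
    simp [hI, Ideal.map_span]
  have hmap0 : I.map (algebraMap ℤ (𝓞 K)) ≠ ⊥ := by
    rw [hmap, Ne, Ideal.span_singleton_eq_bot]
    exact Nat.cast_ne_zero.2 hp.ne_zero
  have hle : I.map (algebraMap ℤ (𝓞 K)) ≤ P := Ideal.map_le_iff_le_comap.2 (P.over_def I).le
  refine ⟨⟨P, inferInstance, ne_bot_of_le_ne_bot hmap0 hle⟩,
    hle (hmap ▸ Ideal.mem_span_singleton_self _), ?_⟩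
  by_contra! h
  obtain ⟨htriv, hsq⟩ := h
  have hbot : P.inertia (K ≃ₐ[ℚ] K) = ⊥ := (Subgroup.eq_bot_iff_forall _).2 htriv
  have hcard := Ideal.card_inertia_eq_ramificationIdxIn (G := K ≃ₐ[ℚ] K) I P
  rw [hbot, Subgroup.card_bot, Ideal.ramificationIdxIn_eq_ramificationIdx I P (K ≃ₐ[ℚ] K),
    ← Ideal.ramificationIdx'_eq_ramificationIdx' I P hmap0] at hcard
  refine (Ideal.ramificationIdx'_ne_one_iff hle).2 ?_ hcard.symm
  rwa [hmap, Ideal.span_singleton_le_iff_mem]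

variable {R : Type*} [CommRing R] [IsDedekindDomain R] {P : HeightOneSpectrum R} {p : ℕ}

lemma valuation_natCast_lt_one (K : Type*) [Field K] [Algebra R K] [IsFractionRing R K]
    (hpP : (p : R) ∈ P.asIdeal) : P.valuation K (p : K) < 1 := by
  rwa [← map_natCast (algebraMap R K), P.valuation_lt_one_iff_mem]

lemma intCast_notMem_of_not_dvd (hp : p.Prime) (hpP : (p : R) ∈ P.asIdeal) {z : ℤ}
    (hz : ¬ (p : ℤ) ∣ z) : (z : R) ∉ P.asIdeal := by
  rw [← P.valuation_eq_one_iff_notMem (K := FractionRing R), map_intCast]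
  exact valuation_intCast_eq_one_of_not_dvd hp (valuation_natCast_lt_one _ hpP) hz

lemma even_factorization_of_sq_eq [CharZero R] (hp : p.Prime) (hpP : (p : R) ∈ P.asIdeal)
    (hp2 : (p : R) ∉ P.asIdeal ^ 2) {z : R} {D : ℤ} (hD : D ≠ 0) (h : z ^ 2 = D ∨ z ^ 2 = -D) :
    Even (D.natAbs.factorization p) := by
  set v := P.valuation (FractionRing R)
  have hvp : v p = WithZero.exp (-1) := by
    have hp0 : (p : R) ≠ 0 := Nat.cast_ne_zero.2 hp.ne_zero
    have hmul : multiplicity P.asIdeal (Ideal.span {(p : R)}) = 1 :=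
      multiplicity_eq_of_dvd_of_not_dvd (by rwa [pow_one, Ideal.dvd_span_singleton])
        (by rwa [Ideal.dvd_span_singleton])
    rw [← map_natCast (algebraMap R _), P.valuation_of_algebraMap,
      P.intValuation_eq_exp_neg_multiplicity hp0, hmul, Nat.cast_one]
  have hz : z ≠ 0 := by
    rintro rfl
    simp [hD, eq_comm] at h
  have hvz := P.intValuation_eq_exp_neg_multiplicity hz
  have hsq : v (algebraMap R _ z) ^ 2 = v D := by
    rw [← map_pow, ← map_pow]
    rcases h with h | h <;> simp [h, Valuation.map_neg]
  rw [valuation_intCast_eq_pow_factorization hp (valuation_natCast_lt_one _ hpP) hD, hvp,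
    P.valuation_of_algebraMap, hvz, ← WithZero.exp_nsmul, ← WithZero.exp_nsmul,
    WithZero.exp_inj] at hsq
  refine ⟨multiplicity P.asIdeal (Ideal.span {z}), ?_⟩
  simp only [nsmul_eq_mul] at hsq
  omega

end Ramification

/-! ### The discriminant of a trinomial -/

/-- The factor of the discriminant of `X ^ (k + r) + a * X ^ k + b` other than the sign and
`b ^ (k - 1)`. -/
def discFactor {R : Type*} [CommRing R] (k r : ℕ) (a b : R) : R :=
  (k + r) ^ (k + r) * b ^ r - r ^ r * k ^ k * a ^ (k + r)

lemma map_discFactor {R S : Type*} [CommRing R] [CommRing S] (φ : R →+* S) (k r : ℕ) (a b : R) :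
    φ (discFactor k r a b) = discFactor k r (φ a) (φ b) := by
  simp [discFactor]

section Derivative

variable {R : Type*} [CommRing R] {k r : ℕ}

lemma derivative_tri (hk : 0 < k) (a b : R) :
    derivative (tri k r a b) = X ^ (k - 1) * (C (k + r : R) * X ^ r + C (k * a)) := by
  obtain ⟨k, rfl⟩ := Nat.exists_eq_succ_of_ne_zero hk.ne'
  simp only [tri, derivative_add, derivative_mul, derivative_C, derivative_X_pow,
    Nat.succ_eq_add_one, Nat.add_sub_cancel, show k + 1 + r - 1 = k + r by omega]
  simp
  ring

lemma mul_tri_sub_X_mul_derivative (hk : 0 < k) (a b : R) :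
    C (k + r : R) * tri k r a b - X * derivative (tri k r a b) =
      C (r * a) * X ^ k + C ((k + r) * b) := by
  obtain ⟨k, rfl⟩ := Nat.exists_eq_succ_of_ne_zero hk.ne'
  rw [derivative_tri hk, tri, Nat.succ_eq_add_one, Nat.add_sub_cancel]
  simp
  ring

lemma pow_dvd_of_pow_succ_dvd_tri (hk : 0 < k) {a b w : R} {m : ℕ}
    (h : (X - C w) ^ (m + 1) ∣ tri k r a b) :
    (X - C w) ^ m ∣ C (r * a) * X ^ k + C ((k + r) * b) := by
  rw [← mul_tri_sub_X_mul_derivative hk]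
  exact (((pow_dvd_pow _ m.le_succ).trans h).mul_left _).sub
    ((pow_sub_one_dvd_derivative_of_pow_dvd h).mul_left _)

end Derivative

section Field

variable {K : Type*} [Field K] {k r : ℕ} {a b w : K}

lemma eq_and_eq_of_sq_dvd_tri (hk : 0 < k) (hw : w ≠ 0) (h : (X - C w) ^ 2 ∣ tri k r a b) :
    (k + r) * w ^ r = -(k * a) ∧ r * a * w ^ k = -((k + r) * b) := by
  have hder : X - C w ∣ derivative (tri k r a b) := by
    simpa using pow_sub_one_dvd_derivative_of_pow_dvd h
  have hlin : X - C w ∣ C (r * a) * X ^ k + C ((k + r) * b) := by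
    simpa using pow_dvd_of_pow_succ_dvd_tri hk h
  rw [dvd_iff_isRoot, IsRoot.def, derivative_tri hk] at hder
  rw [dvd_iff_isRoot, IsRoot.def] at hlin
  simp only [eval_mul, eval_add, eval_pow, eval_X, eval_C] at hder hlin
  refine ⟨?_, eq_neg_of_add_eq_zero_left hlin⟩
  exact eq_neg_of_add_eq_zero_left ((mul_eq_zero.1 hder).resolve_left (pow_ne_zero _ hw))

lemma not_cube_dvd_tri (hk : (k : K) ≠ 0) (hr : (r : K) ≠ 0) (ha : a ≠ 0) (hw : w ≠ 0) :
    ¬ (X - C w) ^ 3 ∣ tri k r a b := by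
  intro h
  have hk0 : 0 < k := Nat.pos_of_ne_zero (by rintro rfl; simp at hk)
  have hder := pow_sub_one_dvd_derivative_of_pow_dvd (pow_dvd_of_pow_succ_dvd_tri hk0 h)
  rw [Nat.add_one_sub_one, pow_one, dvd_iff_isRoot] at hder
  simp only [derivative_add, derivative_C_mul, derivative_X_pow, derivative_C, add_zero,
    IsRoot.def, eval_mul, eval_C, eval_pow, eval_X] at hder
  exact mul_ne_zero (mul_ne_zero hr ha) (mul_ne_zero hk (pow_ne_zero _ hw)) hder

lemma eq_of_sq_dvd_tri {w' : K} (hkr : k.Coprime r) (hk : 0 < k) (hr : (r : K) ≠ 0)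
    (hn : (k + r : K) ≠ 0) (ha : a ≠ 0) (hw : w ≠ 0) (hw' : w' ≠ 0)
    (h : (X - C w) ^ 2 ∣ tri k r a b) (h' : (X - C w') ^ 2 ∣ tri k r a b) : w = w' := by
  obtain ⟨hr₁, hk₁⟩ := eq_and_eq_of_sq_dvd_tri hk hw h
  obtain ⟨hr₂, hk₂⟩ := eq_and_eq_of_sq_dvd_tri hk hw' h'
  exact eq_of_pow_eq_of_coprime hw' hkr
    (mul_left_cancel₀ (mul_ne_zero hr ha) (hk₁.trans hk₂.symm))
    (mul_left_cancel₀ hn (hr₁.trans hr₂.symm))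

lemma discFactor_eq_zero_of_sq_dvd_tri (hk : Odd k) (hr : Odd r) (hw : w ≠ 0)
    (h : (X - C w) ^ 2 ∣ tri k r a b) : discFactor k r a b = 0 := by
  obtain ⟨h₁, h₂⟩ := eq_and_eq_of_sq_dvd_tri hk.pos hw h
  replace h₁ := congrArg (· ^ k) h₁
  replace h₂ := congrArg (· ^ r) h₂
  simp only [mul_pow, hk.neg_pow, hr.neg_pow, ← pow_mul] at h₁ h₂
  rw [discFactor, pow_add, pow_add]
  linear_combination (k + r : K) ^ k * h₂ - (r : K) ^ r * a ^ r * h₁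

end Field

namespace IsRootTuple

variable {K : Type*} {n : ℕ} {x : Fin n → K}

lemma pow_card_dvd [CommRing K] {f : K[X]} (hx : IsRootTuple f x) {s : Finset (Fin n)} {w : K}
    (hs : ∀ i ∈ s, x i = w) : (X - C w) ^ s.card ∣ f := by
  rw [← hx, ← Finset.prod_const, Finset.prod_congr rfl fun i hi ↦ by rw [← hs i hi]]
  exact Finset.prod_dvd_prod_of_subset _ _ _ s.subset_univ

lemma sq_dvd [CommRing K] {f : K[X]} (hx : IsRootTuple f x) {i j : Fin n} (hij : i ≠ j)
    (h : x i = x j) : (X - C (x i)) ^ 2 ∣ f := by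
  rw [← Finset.card_pair hij]
  exact hx.pow_card_dvd (by simp [h])

lemma of_injective [CommRing K] [IsDomain K] {f : K[X]} (hf : f.Monic) (hn : f.natDegree = n)
    (hinj : Function.Injective x) (h : ∀ i, f.eval (x i) = 0) : IsRootTuple f x := by
  have hmonic : (∏ i, (X - C (x i))).Monic := monic_prod_of_monic _ _ fun i _ ↦ monic_X_sub_C _
  have hdeg : (∏ i, (X - C (x i))).degree = (n : WithBot ℕ) := by simp [degree_prod]
  refine eq_of_degree_le_of_eval_index_eq (v := x) Finset.univ hinj.injOn (by simp [hdeg])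
    (by rw [hdeg, degree_eq_natDegree hf.ne_zero, hn])
    (by rw [hmonic.leadingCoeff, hf.leadingCoeff]) fun i _ ↦ ?_
  rw [h i, eval_prod, Finset.prod_eq_zero (Finset.mem_univ i) (by simp)]

variable [Field K] {k r : ℕ} {a b : K} {y : Fin (k + r) → K}

lemma injective_of_discFactor_ne_zero (hy : IsRootTuple (tri k r a b) y) (hk : Odd k) (hr : Odd r)
    (hb : b ≠ 0) (hD : discFactor k r a b ≠ 0) : Function.Injective y := by
  intro i j h
  by_contra hij
  exact hD (discFactor_eq_zero_of_sq_dvd_tri hk hr (hy.ne_zero hk.pos hb i) (hy.sq_dvd hij h))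

lemma sym2_eq_of_eq_of_eq (hy : IsRootTuple (tri k r a b) y) (hkr : k.Coprime r)
    (hk : (k : K) ≠ 0) (hr : (r : K) ≠ 0) (hn : (k + r : K) ≠ 0) (ha : a ≠ 0) (hb : b ≠ 0)
    {i j l m : Fin (k + r)} (hij : i ≠ j) (hlm : l ≠ m) (h : y i = y j) (h' : y l = y m) :
    s(i, j) = s(l, m) := by
  have hk0 : 0 < k := Nat.pos_of_ne_zero (by rintro rfl; simp at hk)
  have heq : y i = y l := eq_of_sq_dvd_tri hkr hk0 hr hn ha (hy.ne_zero hk0 hb i)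
    (hy.ne_zero hk0 hb l) (hy.sq_dvd hij h) (hy.sq_dvd hlm h')
  by_contra hne
  obtain ⟨t, hti, htj, ht⟩ : ∃ t, i ≠ t ∧ j ≠ t ∧ y t = y i := by
    by_cases hl : i ≠ l ∧ j ≠ l
    · exact ⟨l, hl.1, hl.2, heq.symm⟩
    · refine ⟨m, ?_, ?_, (heq.trans h').symm⟩ <;> grind [Sym2.eq_iff]
  refine not_cube_dvd_tri (b := b) hk hr ha (hy.ne_zero hk0 hb i) ?_
  rw [← Finset.card_eq_three.2 ⟨i, j, t, hij, hti, htj, rfl⟩]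
  exact hy.pow_card_dvd (by simp [← h, ht])

lemma pow (hy : IsRootTuple (tri k r a b) y) (hkr : k.Coprime r) (hk : Odd k) (hr : Odd r)
    (hb : b ≠ 0) (hinj : Function.Injective y) :
    IsRootTuple (X ^ k * (X + C a) ^ r + C (b ^ r)) fun i ↦ y i ^ r := by
  have hroot (i) : y i ^ k * (y i ^ r + a) = -b := by
    linear_combination hy.pow_add_mul_pow_add i
  have hmonic : (X ^ k * (X + C a) ^ r).Monic := (monic_X_pow k).mul ((monic_X_add_C a).pow r)
  have hdeg : (X ^ k * (X + C a) ^ r).natDegree = k + r := by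
    rw [(monic_X_pow k).natDegree_mul ((monic_X_add_C a).pow r)]
    simp
  refine of_injective (hmonic.add_of_left ?_) (by rw [natDegree_add_C, hdeg]) ?_ fun i ↦ ?_
  · refine degree_C_le.trans_lt (natDegree_pos_iff_degree_pos.1 ?_)
    rw [hdeg]
    exact Nat.add_pos_left hk.pos r
  · intro i j (hij : y i ^ r = y j ^ r)
    have hne : y j ^ r + a ≠ 0 := right_ne_zero_of_mul (hroot j ▸ neg_ne_zero.2 hb)
    refine hinj (eq_of_pow_eq_of_coprime (hy.ne_zero hk.pos hb j) hkr ?_ hij)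
    exact mul_right_cancel₀ hne (by rw [hroot j, ← hij, hroot i])
  · have h := congrArg (· ^ r) (hroot i)
    simp only [mul_pow, hr.neg_pow] at h
    simp only [eval_add, eval_mul, eval_pow, eval_X, eval_C]
    linear_combination h

lemma prod_mul_pow_add (hy : IsRootTuple (tri k r a b) y) (hkr : k.Coprime r) (hk : Odd k)
    (hr : Odd r) (hn : (k + r : K) ≠ 0) (hb : b ≠ 0) (hinj : Function.Injective y) :
    ∏ i, ((k + r) * y i ^ r + k * a) = discFactor k r a b := by
  have h := congrArg (eval (-(k * a) / (k + r))) (hy.pow hkr hk hr hb hinj)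
  simp only [eval_prod, eval_add, eval_sub, eval_mul, eval_pow, eval_X, eval_C] at h
  calc ∏ i, ((k + r) * y i ^ r + k * a)
      = ∏ i, (-(k + r)) * (-(k * a) / (k + r) - y i ^ r) := by
        refine Finset.prod_congr rfl fun i _ ↦ ?_
        field_simp
        ring
    _ = (k + r) ^ (k + r) * ((-(k * a) / (k + r)) ^ k * (r * a / (k + r)) ^ r + b ^ r) := by
        rw [Finset.prod_mul_distrib, h, Finset.prod_const, Finset.card_univ, Fintype.card_fin,
          (hk.add_odd hr).neg_pow, neg_div, hk.neg_pow]
        congr 4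
        field_simp
        ring
    _ = discFactor k r a b := by
        rw [discFactor, div_pow, div_pow, hk.neg_pow, mul_pow, mul_pow, pow_add, pow_add]
        field_simp
        ring

lemma prod_prod_erase_sub (hy : IsRootTuple (tri k r a b) y) (hkr : k.Coprime r) (hk : Odd k)
    (hr : Odd r) (hn : (k + r : K) ≠ 0) (hb : b ≠ 0) (hinj : Function.Injective y) :
    ∏ i, ∏ j ∈ Finset.univ.erase i, (y i - y j) = b ^ (k - 1) * discFactor k r a b := by
  rw [← hy.prod_mul_pow_add hkr hk hr hn hb hinj, ← hy.prod_eq hk hr, ← Finset.prod_pow,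
    ← Finset.prod_mul_distrib]
  refine Finset.prod_congr rfl fun i _ ↦ ?_
  rw [hy.prod_erase_sub, derivative_tri hk.pos]
  simp

end IsRootTuple

lemma exists_sq_eq_prod_prod_erase_sub {R : Type*} [CommRing R] {n : ℕ} (x : Fin n → R) :
    ∃ z : R, z ^ 2 = ∏ i, ∏ j ∈ Finset.univ.erase i, (x i - x j) ∨
      z ^ 2 = -∏ i, ∏ j ∈ Finset.univ.erase i, (x i - x j) := by
  have h := Finset.prod_prod_Ioi_mul_eq_prod_prod_off_diag fun j i ↦ x i - x j
  simp only [Finset.compl_singleton] at h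
  refine ⟨∏ i, ∏ j ∈ Finset.Ioi i, (x i - x j), ?_⟩
  rw [← h]
  have hneg (i j) : (x i - x j) * (x j - x i) = -1 * (x i - x j) ^ 2 := by ring
  simp only [hneg, Finset.prod_mul_distrib, Finset.prod_pow, Finset.prod_const,
    Finset.prod_pow_eq_pow_sum]
  rcases neg_one_pow_eq_or R (∑ i : Fin n, (Finset.Ioi i).card) with hsign | hsign <;>
    simp only [hsign, one_mul, neg_mul, neg_neg, true_or, or_true]

lemma IsRootTuple.exists_tri_intCast {K : Type*} [Field K] {k r : ℕ} {a b : ℤ}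
    {x : Fin (k + r) → K} (hx : IsRootTuple (tri k r (a : K) (b : K)) x) (R : Type*) [CommRing R]
    [IsDomain R] [IsIntegrallyClosed R] [Algebra R K] [IsFractionRing R K] (hr : 0 < r) :
    ∃ y : Fin (k + r) → R, IsRootTuple (tri k r (a : R) (b : R)) y ∧
      ∀ i, algebraMap R K (y i) = x i := by
  refine IsRootTuple.exists_of_map ?_ (monic_tri hr _ _)
  rwa [map_tri, map_intCast, map_intCast]

lemma not_dvd_of_dvd_discFactor {k r p : ℕ} {a b : ℤ} (hk : 0 < k) (hp : p.Prime)
    (hD : (p : ℤ) ∣ discFactor k r a b) (hn : ¬ (p : ℤ) ∣ k + r) (hb : ¬ (p : ℤ) ∣ b) :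
    ¬ (p : ℤ) ∣ a := by
  intro ha
  have hpI := Nat.prime_iff_prime_int.1 hp
  have hleft : (p : ℤ) ∣ (k + r) ^ (k + r) * b ^ r := by
    rw [discFactor] at hD
    exact (dvd_sub_left ((dvd_pow ha (Nat.add_pos_left hk r).ne').mul_left _)).1 hD
  rcases hpI.dvd_or_dvd hleft with h | h
  · exact hn (hpI.dvd_of_dvd_pow h)
  · exact hb (hpI.dvd_of_dvd_pow h)

lemma isSwap_of_comp_eq {α β : Type*} [DecidableEq α] {y : α → β} {τ : Equiv.Perm α} (hτ : τ ≠ 1)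
    (hy : ∀ i, y (τ i) = y i)
    (h : ∀ ⦃i j l m⦄, i ≠ j → l ≠ m → y i = y j → y l = y m → s(i, j) = s(l, m)) :
    τ.IsSwap := by
  obtain ⟨i, hi⟩ : ∃ i, τ i ≠ i := by
    by_contra! hfix
    exact hτ (Equiv.ext hfix)
  have hmoved (l) (hl : τ l ≠ l) : s(i, τ i) = s(l, τ l) :=
    h hi.symm hl.symm (hy i).symm (hy l).symm
  have hττ : τ (τ i) = i := by
    have := hmoved (τ i) fun h' ↦ hi (τ.injective h')
    rw [Sym2.eq_swap] at this
    exact (Sym2.congr_right.1 this).symm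
  refine ⟨i, τ i, hi.symm, Equiv.ext fun l ↦ ?_⟩
  by_cases hl : τ l = l
  · rw [hl, Equiv.swap_apply_of_ne_of_ne]
    · rintro rfl
      exact hi hl
    · rintro rfl
      exact hi (τ.injective hl)
  · rcases Sym2.mem_iff.1 (hmoved l hl ▸ Sym2.mem_mk_left l (τ l)) with rfl | rfl <;> simp [hττ]

section Ramification

open IsDedekindDomain NumberField

variable {K : Type*} [Field K] [NumberField K] {k r p : ℕ} {a b : ℤ} {x : Fin (k + r) → K}
  {P : HeightOneSpectrum (𝓞 K)}

lemma even_factorization_discFactor_of_natCast_notMem_sq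
    (hx : IsRootTuple (tri k r (a : K) (b : K)) x) (hkr : k.Coprime r) (hk : Odd k) (hr : Odd r)
    (hD : discFactor k r a b ≠ 0) (hp : p.Prime) (hb : ¬ (p : ℤ) ∣ b)
    (hpP : (p : 𝓞 K) ∈ P.asIdeal) (hp2 : (p : 𝓞 K) ∉ P.asIdeal ^ 2) :
    Even ((discFactor k r a b).natAbs.factorization p) := by
  have hb0 : b ≠ 0 := fun h ↦ hb (h ▸ dvd_zero _)
  have hbK : (b : K) ≠ 0 := Int.cast_ne_zero.2 hb0
  have hDK : discFactor k r (a : K) (b : K) = (discFactor k r a b : ℤ) :=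
    (map_discFactor (Int.castRingHom K) k r a b).symm
  have hinj := hx.injective_of_discFactor_ne_zero hk hr hbK (hDK ▸ Int.cast_ne_zero.2 hD)
  obtain ⟨y, -, hyx⟩ := hx.exists_tri_intCast (𝓞 K) hr.pos
  have hdisc : ∏ i, ∏ j ∈ Finset.univ.erase i, (y i - y j) =
      ((b ^ (k - 1) * discFactor k r a b : ℤ) : 𝓞 K) := by
    apply FaithfulSMul.algebraMap_injective (𝓞 K) K
    simp only [map_prod, map_sub, hyx, map_intCast]
    rw [hx.prod_prod_erase_sub hkr hk hr (by exact_mod_cast (Nat.add_pos_left hk.pos r).ne') hbK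
      hinj, hDK]
    push_cast
    rfl
  obtain ⟨z, hz⟩ := exists_sq_eq_prod_prod_erase_sub y
  rw [hdisc] at hz
  have heven := even_factorization_of_sq_eq hp hpP hp2 (mul_ne_zero (pow_ne_zero _ hb0) hD) hz
  rwa [Int.natAbs_mul, Nat.factorization_mul (by simp [hb0]) (by simpa using hD), Finsupp.add_apply,
    Nat.factorization_eq_zero_of_not_dvd (n := (b ^ (k - 1)).natAbs), zero_add] at heven
  exact fun h ↦ hb ((Nat.prime_iff_prime_int.1 hp).dvd_of_dvd_pow (Int.natCast_dvd.2 h))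

lemma isSwap_of_mem_inertia (hx : IsRootTuple (tri k r (a : K) (b : K)) x) (hkr : k.Coprime r)
    (hr : 0 < r) (hp : p.Prime) (hpP : (p : 𝓞 K) ∈ P.asIdeal)
    (hpn : ¬ (p : ℤ) ∣ (k + r) * k * r * b) (ha : ¬ (p : ℤ) ∣ a) {σ : K ≃ₐ[ℚ] K}
    (hσ : σ ∈ P.asIdeal.inertia (K ≃ₐ[ℚ] K)) {τ : Equiv.Perm (Fin (k + r))} (hτ : τ ≠ 1)
    (hστ : ∀ i, x (τ i) = σ (x i)) : τ.IsSwap := by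
  obtain ⟨y, hy, hyx⟩ := hx.exists_tri_intCast (𝓞 K) hr
  have : P.asIdeal.IsMaximal := P.isMaximal
  let _ := Ideal.Quotient.field P.asIdeal
  have hne {z : ℤ} (hz : ¬ (p : ℤ) ∣ z) : (z : 𝓞 K ⧸ P.asIdeal) ≠ 0 := by
    rw [← map_intCast (Ideal.Quotient.mk P.asIdeal), Ne, Ideal.Quotient.eq_zero_iff_mem]
    exact intCast_notMem_of_not_dvd hp hpP hz
  have hn := hne fun h ↦ hpn (((h.mul_right _).mul_right _).mul_right _)
  have hk := hne fun h ↦ hpn (((h.mul_left _).mul_right _).mul_right _)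
  have hr' := hne fun h ↦ hpn ((h.mul_left _).mul_right _)
  have hb := hne fun h ↦ hpn (h.mul_left _)
  push_cast at hn hk hr'
  have hy' : IsRootTuple (tri k r (a : 𝓞 K ⧸ P.asIdeal) b) (Ideal.Quotient.mk P.asIdeal ∘ y) := by
    simpa only [map_tri, map_intCast] using hy.map (Ideal.Quotient.mk P.asIdeal)
  refine isSwap_of_comp_eq hτ (fun i ↦ ?_) fun i j l m ↦ hy'.sym2_eq_of_eq_of_eq hkr hk hr' hn
    (hne ha) hb
  have hyτ : y (τ i) = σ • y i := by
    apply FaithfulSMul.algebraMap_injective (𝓞 K) K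
    rw [hyx, hστ, ← hyx]
    rfl
  rw [Function.comp_apply, Function.comp_apply, Ideal.Quotient.eq, hyτ]
  exact hσ _

lemma even_factorization_discFactor_of_forall_not_isSwap [IsGalois ℚ K]
    (hx : IsRootTuple (tri k r (a : K) (b : K)) x) (hkr : k.Coprime r) (hk : Odd k) (hr : Odd r)
    {φ : (K ≃ₐ[ℚ] K) →* Equiv.Perm (Fin (k + r))} (hφ : Function.Injective φ)
    (hφx : ∀ σ i, x (φ σ i) = σ (x i)) (hswap : ∀ σ, ¬ (φ σ).IsSwap) (hp : p.Prime)
    (hpn : ¬ (p : ℤ) ∣ (k + r) * k * r * b) :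
    Even ((discFactor k r a b).natAbs.factorization p) := by
  by_cases hD : (p : ℤ) ∣ discFactor k r a b
  swap
  · simp [Nat.factorization_eq_zero_of_not_dvd fun h ↦ hD (Int.natCast_dvd.2 h)]
  have hpb : ¬ (p : ℤ) ∣ b := fun h ↦ hpn (h.mul_left _)
  have hpa := not_dvd_of_dvd_discFactor hk.pos hp hD
    (fun h ↦ hpn (((h.mul_right _).mul_right _).mul_right _)) hpb
  by_cases hD0 : discFactor k r a b = 0
  · simp [hD0]
  obtain ⟨P, hpP, ⟨σ, hσ, hσ1⟩ | hp2⟩ := exists_mem_inertia_or_natCast_notMem_sq K hp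
  · exact absurd (isSwap_of_mem_inertia hx hkr hr.pos hp hpP hpn hpa hσ
      ((map_ne_one_iff φ hφ).2 hσ1) (hφx σ)) (hswap σ)
  · exact even_factorization_discFactor_of_natCast_notMem_sq hx hkr hk hr hD0 hp hpb hpP hp2

end Ramification

/-! ### Trinomials whose Galois group is not the full symmetric group -/

lemma exists_intCast_eq_prod_of_equivariant {K α : Type*} [Field K] [Algebra ℚ K]
    [FiniteDimensional ℚ K] [IsGalois ℚ K] {S : Finset α} {f : α → K}
    (hf : ∀ i, IsIntegral ℤ (f i)) {π : (K ≃ₐ[ℚ] K) → α → α} (hπ : ∀ σ, Function.Injective (π σ))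
    (hS : ∀ σ, ∀ i ∈ S, π σ i ∈ S) (hfπ : ∀ σ i, f (π σ i) = σ (f i)) :
    ∃ m : ℤ, ∏ i ∈ S, f i = m := by
  refine exists_intCast_eq_of_forall_apply_eq (IsIntegral.prod _ fun i _ ↦ hf i) fun σ ↦ ?_
  rw [map_prod]
  exact Finset.prod_nbij (π σ) (hS σ) (hπ σ).injOn
    (Finset.surjOn_of_injOn_of_card_le _ (hS σ) (hπ σ).injOn le_rfl) fun i _ ↦ (hfπ σ i).symm

section

variable {K : Type*} [Field K] {k r : ℕ} {a b : ℤ} {x : Fin (k + r) → K}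

lemma IsRootTuple.isIntegral (hx : IsRootTuple (tri k r (a : K) (b : K)) x) (hr : 0 < r)
    (i : Fin (k + r)) : IsIntegral ℤ (x i) := by
  refine ⟨tri k r a b, monic_tri hr a b, ?_⟩
  rw [← eval_map, map_tri]
  simpa using hx.eval_eq_zero i

lemma factorization_eq_of_prod_eq [CharZero K]
    (hx : IsRootTuple (tri k r (a : K) (b : K)) x) (hinj : Function.Injective x)
    (hk : Odd k) (hr : Odd r) (hkr : k.Coprime r) (hb : b ≠ 0)
    {O : Finset (Fin (k + r) × Fin (k + r))} (hO : ∀ q ∈ O, q.1 ≠ q.2) {U V : ℤ} (hU0 : U ≠ 0)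
    (hV0 : V ≠ 0) (hU : ∏ q ∈ O, (x q.1 + x q.2) ^ (k + r - 1) = U)
    (hV : ∏ q ∈ O, geomSum₂ k (x q.1) (x q.2) = V) {p : ℕ} (hp : p.Prime)
    (hpn : ¬ p ∣ 2 * k * r * a.natAbs) :
    U.natAbs.factorization p = V.natAbs.factorization p := by
  obtain ⟨A, hA⟩ := exists_valuationSubring_natCast_lt_one K hp
  have h2 := valuation_natCast_eq_one_of_not_dvd hp hA
    fun h ↦ hpn (((h.mul_right _).mul_right _).mul_right _)
  have hkA := valuation_natCast_eq_one_of_not_dvd hp hA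
    fun h ↦ hpn (((h.mul_left _).mul_right _).mul_right _)
  have hrA := valuation_natCast_eq_one_of_not_dvd hp hA fun h ↦ hpn ((h.mul_left _).mul_right _)
  have haA := valuation_intCast_eq_one_of_not_dvd hp hA
    fun h ↦ hpn ((Int.natCast_dvd.1 h).mul_left _)
  obtain ⟨y, hy, hyx⟩ := hx.exists_tri_intCast A hr.pos
  have hroot (i) : y i ^ (k + r) + (a : A) * y i ^ k + (b : A) = 0 := by
    simpa [tri] using hy.eval_eq_zero i
  have hUV : A.valuation (U : K) = A.valuation (V : K) := by
    rw [← hU, ← hV, map_prod, map_prod]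
    refine Finset.prod_congr rfl fun q hq ↦ ?_
    have hne : y q.1 ≠ y q.2 := fun h ↦ hO q hq (hinj (by rw [← hyx, h, hyx]))
    rw [← hyx, ← hyx, ← map_add, ← map_pow, ← map_geomSum₂]
    exact valuation_add_pow_eq_valuation_geomSum₂ hk hr hkr h2 hkA hrA (by simpa using haA)
      (by simpa using hb) hne (hroot _) (hroot _)
  exact (factorization_le_of_valuation_le hp hA hV0 hU0 hUV.ge).antisymm
    (factorization_le_of_valuation_le hp hA hU0 hV0 hUV.le)

variable [NumberField K] [IsGalois ℚ K] {φ : (K ≃ₐ[ℚ] K) →* Equiv.Perm (Fin (k + r))}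

lemma hasIntSubproduct_of_invariant (hx : IsRootTuple (tri k r (a : K) (b : K)) x) (hk : Odd k)
    (hr : Odd r) (hφx : ∀ σ i, x (φ σ i) = σ (x i)) {S : Finset (Fin (k + r))} (hS : S.Nonempty)
    (hSu : S ≠ Finset.univ) (hinv : ∀ σ, ∀ i ∈ S, φ σ i ∈ S) : HasIntSubproduct k r a b := by
  have hinv' (σ : K ≃ₐ[ℚ] K) (i) (hi : i ∈ Sᶜ) : φ σ i ∈ Sᶜ := by
    rw [Finset.mem_compl] at hi ⊢
    exact fun h ↦ hi (by simpa using hinv σ⁻¹ _ h)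
  obtain ⟨c, hc⟩ := exists_intCast_eq_prod_of_equivariant (hx.isIntegral hr.pos)
    (fun σ ↦ (φ σ).injective) hinv hφx
  obtain ⟨d, hd⟩ := exists_intCast_eq_prod_of_equivariant (hx.isIntegral hr.pos)
    (fun σ ↦ (φ σ).injective) hinv' hφx
  have hcd : (c * d : K) = b := by rw [← hc, ← hd, Finset.prod_mul_prod_compl, hx.prod_eq hk hr]
  obtain ⟨ι⟩ : Nonempty (K →+* ℂ) := inferInstance
  refine ⟨ι ∘ x, by simpa [map_tri] using hx.map ι, S, hS, hSu, c, ⟨d, by exact_mod_cast hcd.symm⟩,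
    ?_⟩
  simp only [Function.comp_apply]
  rw [← map_prod, hc, map_intCast]

lemma hasIntPairProducts_of_invariant (hx : IsRootTuple (tri k r (a : K) (b : K)) x)
    (hinj : Function.Injective x) (hk : Odd k) (hr : Odd r) (hkr : k.Coprime r) (ha : a ≠ 0)
    (hb : b ≠ 0) (hφx : ∀ σ i, x (φ σ i) = σ (x i))
    {O : Finset (Fin (k + r) × Fin (k + r))} (hO : ∀ q ∈ O, q.1 ≠ q.2)
    (hcard : ¬ k + r - 1 ∣ O.card) (hinv : ∀ σ, ∀ q ∈ O, (φ σ q.1, φ σ q.2) ∈ O) :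
    HasIntPairProducts k r a b := by
  have hint := hx.isIntegral hr.pos
  have hφinj (σ : K ≃ₐ[ℚ] K) : Function.Injective (Prod.map (φ σ) (φ σ)) :=
    (φ σ).injective.prodMap (φ σ).injective
  obtain ⟨U, hU⟩ := exists_intCast_eq_prod_of_equivariant (S := O)
    (f := fun q : Fin (k + r) × Fin (k + r) ↦ (x q.1 + x q.2) ^ (k + r - 1))
    (fun q ↦ ((hint q.1).add (hint q.2)).pow _) hφinj hinv (by simp [hφx])
  obtain ⟨V, hV⟩ := exists_intCast_eq_prod_of_equivariant (S := O)
    (f := fun q : Fin (k + r) × Fin (k + r) ↦ geomSum₂ k (x q.1) (x q.2))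
    (fun q ↦ .sum _ fun i _ ↦ ((hint q.1).pow _).mul ((hint q.2).pow _)) hφinj hinv
    fun σ q ↦ by
      simp only [Prod.map_fst, Prod.map_snd, hφx]
      exact (map_geomSum₂ (σ : K →+* K) k _ _).symm
  have hroot (i) : x i ^ (k + r) + (a : K) * x i ^ k + b = 0 := by
    simpa [tri] using hx.eval_eq_zero i
  have hne (i j) : x i + x j ≠ 0 ∧ geomSum₂ k (x i) (x j) ≠ 0 :=
    add_ne_zero_and_geomSum₂_ne_zero_of_roots hk hr hkr two_ne_zero
      (Nat.cast_ne_zero.2 hk.pos.ne') (Int.cast_ne_zero.2 ha) (hroot i) (hroot j)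
      (.inl (hx.ne_zero hk.pos (Int.cast_ne_zero.2 hb) i))
  have hU0 : U ≠ 0 := Int.cast_ne_zero (α := K).1 <| hU ▸
    Finset.prod_ne_zero_iff.2 fun q _ ↦ pow_ne_zero _ (hne q.1 q.2).1
  have hV0 : V ≠ 0 := Int.cast_ne_zero (α := K).1 <| hV ▸
    Finset.prod_ne_zero_iff.2 fun q _ ↦ (hne q.1 q.2).2
  obtain ⟨ι⟩ : Nonempty (K →+* ℂ) := inferInstance
  refine ⟨ι ∘ x, by simpa [map_tri] using hx.map ι, O, hO, hcard, U, V, hU0, hV0, ?_, ?_,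
    fun p hp hpn ↦ factorization_eq_of_prod_eq hx hinj hk hr hkr hb hO hU0 hV0 hU hV hp hpn⟩
  · simp only [← map_intCast ι, ← hU, map_prod, map_pow, map_add, Function.comp_apply]
  · simp only [← map_intCast ι, ← hV, map_prod, map_geomSum₂, Function.comp_apply]

end

lemma IsRootTuple.injective_of_equivariant {F K : Type*} [Field F] [Field K] [Algebra F K]
    {f : F[X]} [IsSplittingField F K f] {n : ℕ} {x : Fin n → K}
    (hx : IsRootTuple (f.map (algebraMap F K)) x) {φ : (K ≃ₐ[F] K) →* Equiv.Perm (Fin n)}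
    (hφx : ∀ σ i, x (φ σ i) = σ (x i)) : Function.Injective φ := by
  refine (injective_iff_map_eq_one φ).2 fun σ hσ ↦ AlgEquiv.coe_toAlgHom_injective ?_
  refine AlgHom.ext_of_adjoin_eq_top (IsSplittingField.adjoin_rootSet K f) fun z hz ↦ ?_
  obtain ⟨i, rfl⟩ := hx.mem_range (z := z) (by simpa using (mem_rootSet.1 hz).2)
  simpa [hσ] using (hφx σ i).symm

lemma hasIntSubproduct_or_hasIntPairProducts_or_even_factorization {K : Type*} [Field K]
    [inst : Algebra ℚ K] {k r : ℕ} {a b : ℤ} [IsSplittingField ℚ K (tri k r (a : ℚ) (b : ℚ))]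
    (hk : Odd k) (hr : Odd r) (hkr : k.Coprime r) (ha : a ≠ 0) (hb : b ≠ 0)
    (hG : ¬ Nonempty ((K ≃ₐ[ℚ] K) ≃* Equiv.Perm (Fin (k + r)))) :
    HasIntSubproduct k r a b ∨ HasIntPairProducts k r a b ∨
      ∀ p : ℕ, p.Prime → ¬ (p : ℤ) ∣ (k + r) * k * r * b →
        Even ((discFactor k r a b).natAbs.factorization p) := by
  by_cases hD : discFactor k r a b = 0
  · simp [hD]
  have : CharZero K := algebraRat.charZero K
  obtain rfl : inst = DivisionRing.toRatAlgebra := Subsingleton.elim _ _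
  have hfin := IsSplittingField.finiteDimensional K (tri k r (a : ℚ) (b : ℚ))
  have : NumberField K := {}
  have : Normal ℚ K := Normal.of_isSplittingField (tri k r (a : ℚ) (b : ℚ))
  have : IsGalois ℚ K := {}
  have hmonic := (monic_tri (k := k) hr.pos (a : ℚ) b).map (algebraMap ℚ K)
  obtain ⟨x, hx⟩ := exists_isRootTuple hmonic (IsSplittingField.splits K _)
    (by rw [natDegree_map, natDegree_tri hr.pos])
  have hxK : IsRootTuple (tri k r (a : K) (b : K)) x := by simpa [map_tri] using hx
  have hDK : discFactor k r (a : K) (b : K) = (discFactor k r a b : ℤ) :=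
    (map_discFactor (Int.castRingHom K) k r a b).symm
  have hinj := hxK.injective_of_discFactor_ne_zero hk hr (Int.cast_ne_zero.2 hb)
    (hDK ▸ Int.cast_ne_zero.2 hD)
  obtain ⟨φ, hφx⟩ := hx.exists_perm hinj
  have hφ := hx.injective_of_equivariant hφx
  have hrange : φ.range ≠ ⊤ := fun h ↦
    hG ⟨.ofBijective φ ⟨hφ, MonoidHom.range_eq_top.1 h⟩⟩
  rcases exists_invariant_or_forall_not_isSwap hrange with
    ⟨S, hS, hSu, hinv⟩ | ⟨O, hO, hcard, hinv⟩ | hswap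
  · exact .inl (hasIntSubproduct_of_invariant hxK hk hr hφx hS hSu fun σ ↦ hinv _ ⟨σ, rfl⟩)
  · exact .inr (.inl (hasIntPairProducts_of_invariant hxK hinj hk hr hkr ha hb hφx hO
      (by simpa using hcard) fun σ ↦ hinv _ ⟨σ, rfl⟩))
  · exact .inr (.inr fun p hp hpn ↦ even_factorization_discFactor_of_forall_not_isSwap hxK hkr hk hr
      hφ hφx (fun σ ↦ hswap _ ⟨σ, rfl⟩) hp hpn)

/-! ### Discriminants that are squares up to a small factor -/

lemma exists_dvd_eq_mul_sq {D M : ℤ}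
    (h : ∀ p : ℕ, p.Prime → ¬ (p : ℤ) ∣ M → Even (D.natAbs.factorization p)) :
    ∃ u y : ℤ, u ∣ M ∧ D = u * y ^ 2 := by
  rcases eq_or_ne D 0 with rfl | hD
  · exact ⟨1, 0, one_dvd _, by simp⟩
  obtain ⟨s, t, hst, hs⟩ := Nat.sq_mul_squarefree D.natAbs
  have ht : t ≠ 0 := by
    rintro rfl
    exact hD (by simpa using hst.symm)
  have hsM : s ∣ M.natAbs := by
    rw [← Nat.prod_primeFactors_of_squarefree hs]
    refine Finset.prod_primes_dvd _ (fun p hp ↦ (Nat.prime_of_mem_primeFactors hp).prime)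
      fun p hp ↦ ?_
    have hpp := Nat.prime_of_mem_primeFactors hp
    by_contra hpM
    have heven := h p hpp (mt Int.natCast_dvd.1 hpM)
    have hone : s.factorization p = 1 := (hs.natFactorization_le_one p).antisymm
      (hpp.factorization_pos_of_dvd hs.ne_zero (Nat.dvd_of_mem_primeFactors hp))
    rw [← hst, Nat.factorization_mul (pow_ne_zero _ ht) hs.ne_zero] at heven
    simp [hone] at heven
  have hst' : (D.natAbs : ℤ) = s * t ^ 2 := by exact_mod_cast hst.symm.trans (mul_comm _ _)
  rcases Int.natAbs_eq D with hD' | hD'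
  · exact ⟨s, t, Int.natCast_dvd.2 hsM, hD'.trans hst'⟩
  · exact ⟨-s, t, neg_dvd.2 (Int.natCast_dvd.2 hsM), by rw [hD', hst', neg_mul]⟩

lemma exists_le_two_pow {δ : ℝ} (hδ : 0 < δ) :
    ∃ C : ℝ, ∀ B : ℝ, 1 ≤ B → ∃ L : ℕ, B ≤ 2 ^ L ∧ L ≤ C * B ^ δ := by
  refine ⟨1 / (δ * Real.log 2) + 1, fun B hB ↦ ⟨⌈Real.logb 2 B⌉₊, ?_, ?_⟩⟩
  · rw [← Real.rpow_natCast, ← Real.logb_le_iff_le_rpow one_lt_two (by linarith)]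
    exact Nat.le_ceil _
  · have hlog : Real.logb 2 B ≤ 1 / (δ * Real.log 2) * B ^ δ := by
      calc Real.logb 2 B ≤ B ^ δ / δ / Real.log 2 := by
            rw [Real.logb]
            gcongr
            exact Real.log_le_rpow_div (by linarith) hδ
        _ = 1 / (δ * Real.log 2) * B ^ δ := by rw [div_div, mul_comm δ, one_div_mul_eq_div]
    linarith [Nat.ceil_lt_add_one (Real.logb_nonneg one_lt_two hB), Real.one_le_rpow hB hδ.le]

lemma abs_re_add_abs_mul_abs_im_le {N : ℤ} {α : ℤ√N} {B : ℝ} (hB : 1 ≤ B) (hN : |(N : ℝ)| ≤ B)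
    (hnorm : |(α.norm : ℝ)| ≤ B) (him : |(α.im : ℝ)| ≤ B) :
    |(α.re : ℝ)| + |(N : ℝ)| * |(α.im : ℝ)| ≤ 4 * B ^ 3 := by
  have hre : |(α.re : ℝ)| ≤ |(α.re : ℝ)| ^ 2 := by
    exact_mod_cast Int.le_self_sq |α.re|
  have hnorm_eq : |(α.re : ℝ)| ^ 2 = α.norm + N * |(α.im : ℝ)| ^ 2 := by
    rw [sq_abs, sq_abs, Zsqrtd.norm_def]
    push_cast
    ring
  have hsq : B ^ 2 ≤ B ^ 3 := pow_le_pow_right₀ hB (by lia)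
  have hlin : B ≤ B ^ 3 := le_self_pow₀ hB (by lia)
  calc |(α.re : ℝ)| + |(N : ℝ)| * |(α.im : ℝ)|
      ≤ (|(α.norm : ℝ)| + |(N : ℝ)| * |(α.im : ℝ)| ^ 2) + |(N : ℝ)| * |(α.im : ℝ)| := by
        rw [hnorm_eq] at hre
        gcongr
        refine hre.trans ?_
        gcongr <;> exact le_abs_self _
    _ ≤ (B + B * B ^ 2) + B * B := by gcongr
    _ ≤ 4 * B ^ 3 := by linarith

lemma exists_card_le_of_norm_eq {ε : ℝ} (hε : 0 < ε) :
    ∃ C : ℝ, ∀ (N M : ℤ) (B : ℝ), N ≠ 0 → M ≠ 0 → 1 ≤ B → |(N : ℝ)| ≤ B → |(M : ℝ)| ≤ B →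
      ∀ S : Finset (ℤ√N), (∀ α ∈ S, α.norm = M ∧ |(α.im : ℝ)| ≤ B) → S.card ≤ C * B ^ ε := by
  obtain ⟨C₁, hlog⟩ := exists_le_two_pow (δ := ε / 3) (by positivity)
  obtain ⟨C₂, hC₂, hdiv⟩ := exists_card_divisors_le (ε := ε / 3) (by positivity)
  refine ⟨(12 * C₁ + 18) * C₂ ^ 2, fun N M B hN hM hB hNB hMB S hS ↦ ?_⟩
  obtain ⟨L, hBL, hL⟩ := hlog B hB
  have hcard : S.card ≤ (4 * (3 * L + 2) + 10) * M.natAbs.divisors.card ^ 2 := by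
    refine card_le_of_norm_eq hN hM fun α hα ↦ ⟨(hS α hα).1, ?_⟩
    suffices |(α.re : ℝ)| + |(N : ℝ)| * |(α.im : ℝ)| ≤ 2 ^ (3 * L + 2) by exact_mod_cast this
    calc |(α.re : ℝ)| + |(N : ℝ)| * |(α.im : ℝ)|
        ≤ 4 * B ^ 3 := abs_re_add_abs_mul_abs_im_le hB hNB ((hS α hα).1 ▸ hMB) (hS α hα).2
      _ ≤ 4 * (2 ^ L) ^ 3 := by gcongr
      _ = 2 ^ (3 * L + 2) := by ring
  have hdivM : (M.natAbs.divisors.card : ℝ) ≤ C₂ * B ^ (ε / 3) := by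
    refine (hdiv _ (Int.natAbs_ne_zero.2 hM)).trans ?_
    rw [Nat.cast_natAbs, Int.cast_abs]
    gcongr
  have hlin : (12 * L + 18 : ℝ) ≤ 12 * (C₁ * B ^ (ε / 3)) + 18 * B ^ (ε / 3) := by
    linarith [Real.one_le_rpow hB (by positivity : 0 ≤ ε / 3)]
  calc (S.card : ℝ) ≤ (12 * L + 18) * M.natAbs.divisors.card ^ 2 := by
        have : 4 * (3 * L + 2) + 10 = 12 * L + 18 := by ring
        exact_mod_cast this ▸ hcard
    _ ≤ (12 * (C₁ * B ^ (ε / 3)) + 18 * B ^ (ε / 3)) * (C₂ * B ^ (ε / 3)) ^ 2 := by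
        gcongr
        exact le_trans (by positivity) hlin
    _ = (12 * C₁ + 18) * C₂ ^ 2 * (B ^ (ε / 3)) ^ 3 := by ring
    _ = (12 * C₁ + 18) * C₂ ^ 2 * B ^ ε := by
        rw [← Real.rpow_mul_natCast (by linarith)]
        norm_num

lemma norm_mk_of_discFactor_eq_mul_sq {k r m : ℕ} (hm : k + r = m + m) {a b u y : ℤ}
    (h : discFactor k r a b = u * y ^ 2) :
    (⟨u * y, a ^ m⟩ : ℤ√(u * -(r ^ r * k ^ k))).norm = u * ((k + r) ^ (k + r) * b ^ r) := by
  rw [discFactor, hm, pow_add a] at h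
  rw [Zsqrtd.norm_def, hm]
  linear_combination (-u) * h

lemma card_le_two_mul_card_image_of_pow_eq {ι : Type*} [DecidableEq ι] {m : ℕ} (hm : m ≠ 0)
    {f : ℤ → ι} (hf : ∀ a a', f a = f a' → a ^ m = a' ^ m) (T : Finset ℤ) :
    T.card ≤ 2 * (T.image f).card := by
  refine Finset.card_le_mul_card_image T 2 fun z hz ↦ ?_
  obtain ⟨a, -, rfl⟩ := Finset.mem_image.1 hz
  refine (Finset.card_le_card (t := {a, -a}) fun a' ha' ↦ ?_).trans Finset.card_le_two
  have hpow := congrArg abs (hf a' a (Finset.mem_filter.1 ha').2)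
  rw [abs_pow, abs_pow, pow_left_inj₀ (abs_nonneg _) (abs_nonneg _) hm, abs_eq_abs] at hpow
  simpa using hpow

lemma abs_mul_le_of_abs_le_pow_mul {k r c : ℕ} (hk : 0 < k) {u z : ℤ} {H : ℝ} (hH : 1 ≤ H)
    (hu : |(u : ℝ)| ≤ c * H) (hz : |(z : ℝ)| ≤ (k + r) ^ (k + r) * H ^ r) :
    |((u * z : ℤ) : ℝ)| ≤ c * (k + r) ^ (k + r) * H ^ (k + r) := by
  calc |((u * z : ℤ) : ℝ)| ≤ c * H * ((k + r) ^ (k + r) * H ^ r) := by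
        rw [Int.cast_mul, abs_mul]
        gcongr
    _ = c * (k + r) ^ (k + r) * H ^ (r + 1) := by ring
    _ ≤ c * (k + r) ^ (k + r) * H ^ (k + r) :=
        mul_le_mul_of_nonneg_left (pow_le_pow_right₀ hH (by lia)) (by positivity)

lemma abs_pow_self_mul_pow_self_le {k r : ℕ} {H : ℝ} (hH : 1 ≤ H) :
    |(r : ℝ) ^ r * k ^ k| ≤ (k + r) ^ (k + r) * H ^ r := by
  calc |(r : ℝ) ^ r * k ^ k| ≤ (k + r) ^ r * (k + r) ^ k := by
        rw [abs_of_nonneg (by positivity)]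
        gcongr <;> linarith
    _ = (k + r) ^ (k + r) := by rw [← pow_add, add_comm r]
    _ ≤ (k + r) ^ (k + r) * H ^ r := le_mul_of_one_le_right (by positivity) (one_le_pow₀ hH)

lemma exists_card_le_of_discFactor_eq_mul_sq {k r : ℕ} (hk : 0 < k) (hr : 0 < r)
    (heven : Even (k + r)) (c : ℕ) {ε : ℝ} (hε : 0 < ε) :
    ∃ C : ℝ, ∀ (b u : ℤ) (H : ℝ), b ≠ 0 → u ≠ 0 → 1 ≤ H → |(b : ℝ)| ≤ H → |(u : ℝ)| ≤ c * H →
      ∀ T : Finset ℤ, (∀ a ∈ T, |(a : ℝ)| ≤ H ∧ ∃ y : ℤ, discFactor k r a b = u * y ^ 2) →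
        T.card ≤ C * H ^ ε := by
  obtain ⟨m, hm⟩ := heven
  obtain ⟨C, hC⟩ := exists_card_le_of_norm_eq (ε := ε / (k + r : ℕ)) (by positivity)
  refine ⟨2 * C * (c * (k + r : ℝ) ^ (k + r)) ^ (ε / (k + r : ℕ)),
    fun b u H hb hu hH hbH huH T hT ↦ ?_⟩
  choose! y hy using fun a ha ↦ (hT a ha).2
  have hc : (1 : ℝ) ≤ c := by
    refine Nat.one_le_cast.2 (Nat.one_le_iff_ne_zero.2 fun h ↦ hu ?_)
    simpa [h] using huH
  have hkr : (1 : ℝ) ≤ (k + r : ℝ) ^ (k + r) := one_le_pow₀ (by norm_cast; lia)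
  set B : ℝ := c * (k + r : ℝ) ^ (k + r) * H ^ (k + r)
  have hHB : H ^ (k + r) ≤ B :=
    le_mul_of_one_le_left (by positivity) (one_le_mul_of_one_le_of_one_le hc hkr)
  have hN : |((u * -(r ^ r * k ^ k) : ℤ) : ℝ)| ≤ B := by
    refine abs_mul_le_of_abs_le_pow_mul hk hH huH ?_
    push_cast
    exact (abs_neg _).trans_le (abs_pow_self_mul_pow_self_le hH)
  have hM : |((u * ((k + r) ^ (k + r) * b ^ r) : ℤ) : ℝ)| ≤ B := by
    refine abs_mul_le_of_abs_le_pow_mul hk hH huH ?_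
    push_cast
    rw [abs_mul, abs_pow (b : ℝ), abs_of_nonneg (by positivity)]
    gcongr
  let f (a : ℤ) : ℤ√(u * -(r ^ r * k ^ k)) := ⟨u * y a, a ^ m⟩
  have hcard : T.card ≤ 2 * (T.image f).card :=
    card_le_two_mul_card_image_of_pow_eq (m := m) (by lia) (fun _ _ h ↦ congrArg Zsqrtd.im h) T
  have himage : ((T.image f).card : ℝ) ≤ C * B ^ (ε / (k + r : ℕ)) := by
    refine hC _ _ B (by simp [hu, hk.ne', hr.ne']) ?_ ((one_le_pow₀ hH).trans hHB) hN hM _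
      (Finset.forall_mem_image.2 fun a ha ↦ ⟨norm_mk_of_discFactor_eq_mul_sq hm (hy a ha), ?_⟩)
    · exact mul_ne_zero hu (mul_ne_zero (pow_ne_zero _ (by lia)) (pow_ne_zero _ hb))
    · calc |((a ^ m : ℤ) : ℝ)| ≤ H ^ m := by
            rw [Int.cast_pow, abs_pow]
            gcongr
            exact (hT a ha).1
        _ ≤ H ^ (k + r) := pow_le_pow_right₀ hH (by lia)
        _ ≤ B := hHB
  calc (T.card : ℝ) ≤ 2 * (T.image f).card := mod_cast hcard
    _ ≤ 2 * (C * B ^ (ε / (k + r : ℕ))) := by gcongr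
    _ = _ := by
        rw [Real.mul_rpow (by positivity) (by positivity), ← Real.rpow_natCast_mul (by linarith),
          mul_div_cancel₀ _ (by positivity)]
        ring

lemma card_le_card_mul_of_card_fiber_le {α β : Type*} [DecidableEq β] {s : Finset α} {t : Finset β}
    {f : α → β} {M : ℝ} (hf : ∀ a ∈ s, f a ∈ t)
    (hM : ∀ b ∈ t, ((s.filter (f · = b)).card : ℝ) ≤ M) : (s.card : ℝ) ≤ t.card * M := by
  rw [Finset.card_eq_sum_card_fiberwise hf, Nat.cast_sum, ← nsmul_eq_mul]
  exact Finset.sum_le_card_nsmul _ _ _ hM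

lemma exists_card_le_of_even_factorization {k r : ℕ} (hk : 0 < k) (hr : 0 < r)
    (heven : Even (k + r)) {ε : ℝ} (hε : 0 < ε) :
    ∃ C : ℝ, ∀ (b : ℤ) (H : ℝ), b ≠ 0 → 1 ≤ H → |(b : ℝ)| ≤ H →
      ∀ T : Finset ℤ, (∀ a ∈ T, |(a : ℝ)| ≤ H ∧ ∀ p : ℕ, p.Prime →
        ¬ (p : ℤ) ∣ (k + r) * k * r * b → Even ((discFactor k r a b).natAbs.factorization p)) →
        T.card ≤ C * H ^ ε := by
  set c := (k + r) * k * r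
  obtain ⟨C₁, hsq⟩ := exists_card_le_of_discFactor_eq_mul_sq hk hr heven c (half_pos hε)
  obtain ⟨C₂, hC₂, hdiv⟩ := exists_card_divisors_le (half_pos hε)
  refine ⟨2 * C₂ * c ^ (ε / 2) * C₁, fun b H hb hH hbH T hT ↦ ?_⟩
  have hcb0 : (k + r) * k * r * b ≠ 0 := mul_ne_zero (by positivity) hb
  have hcb : |(((k + r) * k * r * b : ℤ) : ℝ)| ≤ c * H := by
    rw [Int.cast_mul, abs_mul, abs_of_nonneg (by positivity)]
    push_cast [c]
    gcongr
  choose! u y hu hy using fun a ha ↦ exists_dvd_eq_mul_sq (hT a ha).2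
  have hfiber : ∀ u₀ ∈ Int.divisors ((k + r) * k * r * b),
      ((T.filter (u · = u₀)).card : ℝ) ≤ C₁ * H ^ (ε / 2) := fun u₀ hu₀ ↦ by
    have hu₀ := Int.dvd_of_mem_divisors hu₀
    refine hsq b u₀ H hb (ne_zero_of_dvd_ne_zero hcb0 hu₀) hH hbH ?_ _ fun a ha ↦ ?_
    · refine le_trans ?_ hcb
      exact_mod_cast Int.le_of_dvd (abs_pos.2 hcb0) ((abs_dvd_abs _ _).2 hu₀)
    · obtain ⟨haT, rfl⟩ := Finset.mem_filter.1 ha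
      exact ⟨(hT a haT).1, y a, hy a haT⟩
  have hC₁ : 0 ≤ C₁ * H ^ (ε / 2) :=
    (Nat.cast_nonneg _).trans (hfiber 1 (Int.mem_divisors.2 ⟨one_dvd _, hcb0⟩))
  calc (T.card : ℝ)
      ≤ (Int.divisors ((k + r) * k * r * b)).card * (C₁ * H ^ (ε / 2)) :=
        card_le_card_mul_of_card_fiber_le (fun a ha ↦ Int.mem_divisors.2 ⟨hu a ha, hcb0⟩) hfiber
    _ ≤ 2 * (C₂ * (c * H) ^ (ε / 2)) * (C₁ * H ^ (ε / 2)) := by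
        rw [card_int_divisors, Nat.cast_mul, Nat.cast_two]
        gcongr
        refine (hdiv _ (Int.natAbs_ne_zero.2 hcb0)).trans ?_
        rw [Nat.cast_natAbs, Int.cast_abs]
        gcongr
    _ = 2 * C₂ * c ^ (ε / 2) * C₁ * H ^ ε := by
        rw [Real.mul_rpow (by positivity) (by positivity), ← add_halves ε,
          Real.rpow_add (by positivity), add_halves]
        ring

/-! ### Counting pairs of coefficients -/

/-- The integers of absolute value at most `H`. -/
noncomputable def intBox (H : ℝ) : Finset ℤ := Finset.Icc (-⌊H⌋) ⌊H⌋

lemma mem_intBox {H : ℝ} {z : ℤ} : z ∈ intBox H ↔ |(z : ℝ)| ≤ H := by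
  rw [intBox, Finset.mem_Icc, ← abs_le, Int.le_floor, Int.cast_abs]

lemma card_intBox_le {H : ℝ} (hH : 1 ≤ H) : ((intBox H).card : ℝ) ≤ 3 * H := by
  have hfloor : 0 ≤ ⌊H⌋ := Int.floor_nonneg.2 (by linarith)
  have hcard : ((intBox H).card : ℤ) = 2 * ⌊H⌋ + 1 := by
    rw [intBox, Int.card_Icc, Int.toNat_of_nonneg (by lia)]
    ring
  have hcard' : ((intBox H).card : ℝ) = 2 * ⌊H⌋ + 1 := by exact_mod_cast hcard
  linarith [Int.floor_le H]

/-- The pairs of integers of absolute value at most `H` that satisfy the relation `P`. -/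
def pairsUpTo (H : ℝ) (P : ℤ → ℤ → Prop) : Set (ℤ × ℤ) :=
  {p | |(p.1 : ℝ)| ≤ H ∧ |(p.2 : ℝ)| ≤ H ∧ P p.1 p.2}

/-- The number of pairs of integers of absolute value at most `H` that satisfy `P` is `O(H ^ s)`,
uniformly for `1 ≤ H`. -/
def GrowsAtMost (P : ℤ → ℤ → Prop) (s : ℝ) : Prop :=
  ∃ C : ℝ, ∀ H : ℝ, 1 ≤ H → ((pairsUpTo H P).ncard : ℝ) ≤ C * H ^ s

section GrowsAtMost

variable {P Q : ℤ → ℤ → Prop} {s : ℝ}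

lemma finite_pairsUpTo (H : ℝ) (P : ℤ → ℤ → Prop) : (pairsUpTo H P).Finite :=
  (intBox H ×ˢ intBox H).finite_toSet.subset fun _ hp ↦
    Finset.mem_coe.2 (Finset.mem_product.2 ⟨mem_intBox.2 hp.1, mem_intBox.2 hp.2.1⟩)

lemma GrowsAtMost.mono (hQ : GrowsAtMost Q s) (h : ∀ a b, P a b → Q a b) : GrowsAtMost P s := by
  obtain ⟨C, hC⟩ := hQ
  refine ⟨C, fun H hH ↦ le_trans ?_ (hC H hH)⟩
  gcongr
  · exact finite_pairsUpTo H Q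
  · exact fun p hp ↦ ⟨hp.1, hp.2.1, h _ _ hp.2.2⟩

lemma GrowsAtMost.or (hP : GrowsAtMost P s) (hQ : GrowsAtMost Q s) :
    GrowsAtMost (fun a b ↦ P a b ∨ Q a b) s := by
  obtain ⟨C, hC⟩ := hP
  obtain ⟨D, hD⟩ := hQ
  refine ⟨C + D, fun H hH ↦ ?_⟩
  have hunion : pairsUpTo H (fun a b ↦ P a b ∨ Q a b) = pairsUpTo H P ∪ pairsUpTo H Q := by
    ext p
    simp only [pairsUpTo, Set.mem_ofPred_eq, Set.mem_union]
    tauto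
  calc ((pairsUpTo H fun a b ↦ P a b ∨ Q a b).ncard : ℝ)
      ≤ (pairsUpTo H P).ncard + (pairsUpTo H Q).ncard := by
        rw [hunion]
        exact_mod_cast Set.ncard_union_le _ _
    _ ≤ C * H ^ s + D * H ^ s := add_le_add (hC H hH) (hD H hH)
    _ = (C + D) * H ^ s := by ring

lemma GrowsAtMost.swap (hP : GrowsAtMost P s) : GrowsAtMost (fun a b ↦ P b a) s := by
  obtain ⟨C, hC⟩ := hP
  refine ⟨C, fun H hH ↦ le_of_eq_of_le ?_ (hC H hH)⟩
  rw [← Set.ncard_image_of_injective _ Prod.swap_injective, Set.image_swap_eq_preimage_swap]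
  congr 2
  ext p
  simp only [pairsUpTo, Set.mem_preimage, Set.mem_ofPred_eq, Prod.fst_swap, Prod.snd_swap]
  tauto

lemma card_le_card_mul_of_fst_fiber {α β : Type*} {S : Finset (α × β)} {t : Finset α} {M : ℝ}
    (hS : ∀ p ∈ S, p.1 ∈ t)
    (h : ∀ a ∈ t, ∀ T : Finset β, (∀ b ∈ T, (a, b) ∈ S) → (T.card : ℝ) ≤ M) :
    (S.card : ℝ) ≤ t.card * M := by
  classical
  refine card_le_card_mul_of_card_fiber_le hS fun a ha ↦ ?_
  rw [← Finset.card_image_of_injOn (f := Prod.snd) fun p hp q hq hpq ↦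
    Prod.ext ((Finset.mem_filter.1 hp).2.trans (Finset.mem_filter.1 hq).2.symm) hpq]
  refine h a ha _ (Finset.forall_mem_image.2 fun p hp ↦ ?_)
  obtain ⟨hpS, rfl⟩ := Finset.mem_filter.1 hp
  exact hpS

lemma ncard_pairsUpTo_le {H M : ℝ} (hH : 1 ≤ H) (hM : 0 ≤ M)
    (h : ∀ a : ℤ, a ≠ 0 → |(a : ℝ)| ≤ H → ∀ T : Finset ℤ,
      (∀ b ∈ T, |(b : ℝ)| ≤ H ∧ P a b) → (T.card : ℝ) ≤ M) :
    ((pairsUpTo H fun a b ↦ a = 0 ∨ P a b).ncard : ℝ) ≤ 3 * H * (1 + M) := by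
  classical
  set S := (finite_pairsUpTo H fun a b ↦ a = 0 ∨ P a b).toFinset
  have hS {p : ℤ × ℤ} : p ∈ S ↔ |(p.1 : ℝ)| ≤ H ∧ |(p.2 : ℝ)| ≤ H ∧ (p.1 = 0 ∨ P p.1 p.2) :=
    Set.Finite.mem_toFinset _
  have hzero : ((S.filter (·.1 = 0)).card : ℝ) ≤ ({0} : Finset ℤ).card * (intBox H).card := by
    refine card_le_card_mul_of_fst_fiber (by simp) fun a _ T hT ↦ ?_
    exact_mod_cast Finset.card_le_card fun b hb ↦
      mem_intBox.2 (hS.1 (Finset.mem_filter.1 (hT b hb)).1).2.1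
  have hne : ((S.filter (¬ ·.1 = 0)).card : ℝ) ≤ (intBox H).card * M := by
    refine card_le_card_mul_of_fst_fiber
      (fun p hp ↦ mem_intBox.2 (hS.1 (Finset.mem_filter.1 hp).1).1) fun a ha T hT ↦ ?_
    rcases eq_or_ne a 0 with rfl | ha0
    · have hempty : T = ∅ := Finset.eq_empty_of_forall_notMem fun b hb ↦
        (Finset.mem_filter.1 (hT b hb)).2 rfl
      simpa [hempty] using hM
    refine h a ha0 (mem_intBox.1 ha) T fun b hb ↦ ?_
    obtain ⟨-, hbH, hP⟩ := hS.1 (Finset.mem_filter.1 (hT b hb)).1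
    exact ⟨hbH, hP.resolve_left ha0⟩
  calc ((pairsUpTo H fun a b ↦ a = 0 ∨ P a b).ncard : ℝ)
      = (S.filter (·.1 = 0)).card + (S.filter (¬ ·.1 = 0)).card := by
        rw [Set.ncard_eq_toFinset_card _ (finite_pairsUpTo _ _)]
        exact_mod_cast (Finset.card_filter_add_card_filter_not _).symm
    _ ≤ (intBox H).card + (intBox H).card * M := add_le_add (by simpa using hzero) hne
    _ = (intBox H).card * (1 + M) := by ring
    _ ≤ 3 * H * (1 + M) := by
        gcongr
        exact card_intBox_le hH

lemma growsAtMost_eq_zero_or {ε : ℝ} (hε : 0 < ε)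
    (h : ∃ C : ℝ, ∀ (a : ℤ) (H : ℝ), a ≠ 0 → 1 ≤ H → |(a : ℝ)| ≤ H →
      ∀ T : Finset ℤ, (∀ b ∈ T, |(b : ℝ)| ≤ H ∧ P a b) → (T.card : ℝ) ≤ C * H ^ ε) :
    GrowsAtMost (fun a b ↦ a = 0 ∨ P a b) (1 + ε) := by
  obtain ⟨C, hC⟩ := h
  have hC0 : 0 ≤ C := by simpa using hC 1 1 one_ne_zero le_rfl (by simp) ∅
  refine ⟨3 * (1 + C), fun H hH ↦ ?_⟩
  calc ((pairsUpTo H fun a b ↦ a = 0 ∨ P a b).ncard : ℝ)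
      ≤ 3 * H * (1 + C * H ^ ε) :=
        ncard_pairsUpTo_le hH (by positivity) fun a ha haH T hT ↦ hC a H ha hH haH T hT
    _ ≤ 3 * H * (H ^ ε + C * H ^ ε) := by
        gcongr
        exact Real.one_le_rpow hH hε.le
    _ = 3 * (1 + C) * H ^ (1 + ε) := by
        rw [Real.rpow_one_add' (by linarith) (by linarith)]
        ring

end GrowsAtMost

lemma eq_zero_or_hasIntSubproduct_or_hasIntPairProducts_or_even_factorization {k r : ℕ} {a b : ℤ}
    (hk : Odd k) (hr : Odd r) (hkr : k.Coprime r)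
    (hG : ¬ Nonempty ((tri k r (a : ℚ) (b : ℚ)).Gal ≃* Equiv.Perm (Fin (k + r)))) :
    (b = 0 ∨ HasIntSubproduct k r a b) ∨ (a = 0 ∨ HasIntPairProducts k r a b) ∨
      (b = 0 ∨ ∀ p : ℕ, p.Prime → ¬ (p : ℤ) ∣ (k + r) * k * r * b →
        Even ((discFactor k r a b).natAbs.factorization p)) := by
  by_cases ha : a = 0
  · exact .inr (.inl (.inl ha))
  by_cases hb : b = 0
  · exact .inl (.inl hb)
  exact (hasIntSubproduct_or_hasIntPairProducts_or_even_factorization hk hr hkr ha hb hG).imp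
    .inr (.imp .inr .inr)

lemma growsAtMost_not_nonempty_gal_mulEquiv_perm {k r : ℕ} (hk : Odd k) (hr : Odd r)
    (hkr : k.Coprime r) {ε : ℝ} (hε : 0 < ε) :
    GrowsAtMost (fun a b ↦ ¬ Nonempty ((tri k r (a : ℚ) (b : ℚ)).Gal ≃*
      Equiv.Perm (Fin (k + r)))) (1 + ε) := by
  obtain ⟨C, hC⟩ := exists_card_le_of_hasIntSubproduct hr.pos hkr hε
  refine (GrowsAtMost.or ?_ (.or ?_ ?_)).mono fun a b ↦
    eq_zero_or_hasIntSubproduct_or_hasIntPairProducts_or_even_factorization hk hr hkr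
  · exact (growsAtMost_eq_zero_or hε ⟨C, fun b H hb _ hbH T hT ↦
      hC b H hb hbH T fun a ha ↦ (hT a ha).2⟩).swap
  · exact growsAtMost_eq_zero_or hε
      (exists_card_le_of_hasIntPairProducts hk.pos hr.pos (hk.add_odd hr) hkr hε)
  · exact (growsAtMost_eq_zero_or hε
      (exists_card_le_of_even_factorization hk.pos hr.pos (hk.add_odd hr) hε)).swap

end TrinomialGalois

open TrinomialGalois in
theorem count_trinomials_not_symmetric_general (n r : ℕ) (hrn : r < n) (hco : Nat.Coprime n r)
    (hne : Even n) (ε : ℝ) (hε : 0 < ε) :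
    ∃ C : ℝ, ∀ H : ℝ, 1 ≤ H →
      (Set.ncard {p : ℤ × ℤ |
          (|p.1| : ℝ) ≤ H ∧ (|p.2| : ℝ) ≤ H ∧
          ¬ Nonempty ((X ^ n + Polynomial.C ((p.1 : ℚ)) * X ^ (n - r) +
              Polynomial.C ((p.2 : ℚ)) : Polynomial ℚ).Gal ≃* Equiv.Perm (Fin n))} : ℝ)
        ≤ C * H ^ (1 + ε) := by
  obtain ⟨k, rfl⟩ := Nat.exists_eq_add_of_le' hrn.le
  have hkr : k.Coprime r := by simpa using hco
  have hrodd : Odd r := (hco.coprime_dvd_left hne.two_dvd).odd_of_left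
  have hkodd : Odd k := (Nat.even_add'.1 hne).2 hrodd
  rw [Nat.add_sub_cancel]
  exact growsAtMost_not_nonempty_gal_mulEquiv_perm hkodd hrodd hkr hε

/-- Let `n` and `r` be coprime with `n > r`, `n ≥ 10` and `n` even. Then there are at most
`O_{n,ε}(H^(1+1/n+ε))` pairs `(a_r, a_n)` of integers of absolute value at most `H` such that
the splitting field of the trinomial `X^n + a_r X^(n-r) + a_n` over `ℚ` has Galois group not
isomorphic to `Sₙ`. -/
theorem count_trinomials_not_symmetric (n r : ℕ) (hr : 0 < r) (hrn : r < n)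
    (hco : Nat.Coprime n r) (hn : 10 ≤ n) (hne : Even n) (ε : ℝ) (hε : 0 < ε) :
    ∃ C : ℝ, ∀ H : ℝ, 1 ≤ H →
      (Set.ncard {p : ℤ × ℤ |
          (|p.1| : ℝ) ≤ H ∧ (|p.2| : ℝ) ≤ H ∧
          ¬ Nonempty ((X ^ n + Polynomial.C ((p.1 : ℚ)) * X ^ (n - r) +
              Polynomial.C ((p.2 : ℚ)) : Polynomial ℚ).Gal ≃* Equiv.Perm (Fin n))} : ℝ)
        ≤ C * H ^ (1 + 1 / (n : ℝ) + ε) := by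
  simpa only [add_assoc] using
    count_trinomials_not_symmetric_general n r hrn hco hne (1 / n + ε) (by positivity)
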